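/- Let q be a power of 2 and let n be an odd prime. Let L(x) = a_1 x^q + a_2 x^{q^2} + ... + a_{n−1} x^{q^{n−1}} + x^{q^n} ∈ F_q[x] be a monic q-linearized polynomial of q-degree n, and suppose a_1 + a_2 + ... + a_{n−1} + 1 ≠ 0. Then the Galois group of L(x) + t·x over the rational function field F_q(t) is isomorphic to GL(n, q), unless L(x) = x^{q^n}, in which case it is isomorphic to ΓL(1, q^n). -/

import Mathlib

/-- The natural action of the relative automorphism group `Gal(E/F_q)` on the
unit group `Eˣ`, used to form the semidirect product `ΓL(1, qⁿ) = Eˣ ⋊ Gal(E/F_q)`. -/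
def galOnUnits (Fq E : Type*) [Field Fq] [Field E] [Algebra Fq E] :
    (E ≃ₐ[Fq] E) →* MulAut Eˣ where
  toFun σ := Units.mapEquiv σ.toRingEquiv.toMulEquiv
  map_one' := by ext u; rfl
  map_mul' σ τ := by ext u; rfl


namespace GalLin
open Module

section A1
set_option linter.unusedSectionVars false
set_option linter.unusedVariables false
variable {F X : Type*} [Field F] [AddCommGroup X] [Module F X]

/-- `B` is a Jordan-type subspace: its pointwise stabilizer in `H` is transitive off `B`. -/
def IsJ (H : Subgroup (X ≃ₗ[F] X)) (B : Submodule F X) : Prop :=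
  ∀ x y, x ∉ B → y ∉ B → ∃ h ∈ H, (∀ b ∈ B, h b = b) ∧ h x = y

lemma exists_between_finrank [FiniteDimensional F X] (A C : Submodule F X) (hAC : A ≤ C) (j : ℕ)
    (h1 : finrank F A ≤ j) (h2 : j ≤ finrank F C) :
    ∃ U, A ≤ U ∧ U ≤ C ∧ finrank F U = j := by
  induction j with
  | zero => exact ⟨A, le_rfl, hAC, by omega⟩
  | succ j ih =>
    by_cases h : finrank F A = j + 1
    · exact ⟨A, le_rfl, hAC, h⟩
    obtain ⟨U, hAU, hUC, hU⟩ := ih (by omega) (by omega)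
    have hne : U ≠ C := fun h => by subst h; omega
    obtain ⟨v, hvC, hvU⟩ := SetLike.exists_of_lt (lt_of_le_of_ne hUC hne)
    refine ⟨U ⊔ F ∙ v, hAU.trans le_sup_left, sup_le hUC (by simpa using hvC), ?_⟩
    rw [Submodule.finrank_sup_span_singleton hvU, hU]

lemma exists_not_mem_two (B C : Submodule F X) (hB : B ≠ ⊤) (hC : C ≠ ⊤) :
    ∃ z, z ∉ B ∧ z ∉ C := by
  obtain ⟨b, hb⟩ : ∃ b, b ∉ B := by
    by_contra! h; exact hB (eq_top_iff.2 fun x _ => h x)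
  obtain ⟨c, hc⟩ : ∃ c, c ∉ C := by
    by_contra! h; exact hC (eq_top_iff.2 fun x _ => h x)
  by_cases h1 : b ∈ C
  · by_cases h2 : c ∈ B
    · refine ⟨b + c, fun h => hb ?_, fun h => hc ?_⟩
      · simpa using B.sub_mem h h2
      · simpa using C.sub_mem h h1
    · exact ⟨c, h2, hc⟩
  · exact ⟨b, hb, h1⟩

variable {H : Subgroup (X ≃ₗ[F] X)}

lemma IsJ.inf {B C : Submodule F X} (hB : IsJ H B) (hC : IsJ H C) : IsJ H (B ⊓ C) := by
  by_cases hBt : B = ⊤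
  · subst hBt; simpa using hC
  by_cases hCt : C = ⊤
  · subst hCt; simpa using hB
  obtain ⟨z, hz1, hz2⟩ := exists_not_mem_two B C hBt hCt
  have key : ∀ x, x ∉ B ⊓ C → ∃ h ∈ H, (∀ b ∈ B ⊓ C, h b = b) ∧ h x = z := by
    intro x hx
    by_cases hxB : x ∈ B
    · have hxC : x ∉ C := fun h => hx ⟨hxB, h⟩
      obtain ⟨h, hh, h1, h2⟩ := hC x z hxC hz2
      exact ⟨h, hh, fun b hb => h1 b hb.2, h2⟩
    · obtain ⟨h, hh, h1, h2⟩ := hB x z hxB hz1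
      exact ⟨h, hh, fun b hb => h1 b hb.1, h2⟩
  intro x y hx hy
  obtain ⟨h, hh, h1, h2⟩ := key x hx
  obtain ⟨g, hg, g1, g2⟩ := key y hy
  refine ⟨g⁻¹ * h, H.mul_mem (H.inv_mem hg) hh, fun b hb => ?_, ?_⟩
  · rw [LinearEquiv.mul_apply, h1 b hb]
    conv_lhs => rw [← g1 b hb]
    exact g.symm_apply_apply b
  · rw [LinearEquiv.mul_apply, h2, ← g2]
    exact g.symm_apply_apply y

lemma isJ_top : IsJ H (⊤ : Submodule F X) := fun x _ hx => (hx trivial).elim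

lemma IsJ.map {B : Submodule F X} (hB : IsJ H B) {g : X ≃ₗ[F] X} (hg : g ∈ H) :
    IsJ H (B.map (g : X →ₗ[F] X)) := by
  intro x y hx hy
  have hx' : g.symm x ∉ B := fun h => hx ⟨_, h, by simp⟩
  have hy' : g.symm y ∉ B := fun h => hy ⟨_, h, by simp⟩
  obtain ⟨h, hh, h1, h2⟩ := hB _ _ hx' hy'
  refine ⟨g * h * g⁻¹, H.mul_mem (H.mul_mem hg hh) (H.inv_mem hg), ?_, ?_⟩
  · rintro _ ⟨b, hb, rfl⟩
    have : (g⁻¹ : X ≃ₗ[F] X) (g b) = b := g.symm_apply_apply b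
    simp [LinearEquiv.mul_apply, this, h1 b hb]
  · change g (h (g.symm x)) = y
    rw [h2]; simp

lemma IsJ.finset_inf {ι : Type*} (s : Finset ι) (B : ι → Submodule F X)
    (h : ∀ i ∈ s, IsJ H (B i)) : IsJ H (s.inf B) := by
  classical
  induction s using Finset.induction_on with
  | empty => simpa using isJ_top
  | insert a s _ ih =>
    rw [Finset.inf_insert]
    exact (h a (by simp)).inf (ih fun i hi => h i (by simp [hi]))

variable [Finite X]

lemma isJ_sInf (S : Set (Submodule F X)) (h : ∀ B ∈ S, IsJ H B) : IsJ H (sInf S) := by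
  classical
  have hS : S.Finite := Set.toFinite S
  have : sInf S = hS.toFinset.inf id := by
    rw [Finset.inf_id_eq_sInf]; simp
  rw [this]
  exact IsJ.finset_inf _ _ (by simpa using h)

/-- closure -/
def clJ (H : Subgroup (X ≃ₗ[F] X)) (Y : Submodule F X) : Submodule F X :=
  sInf {B | IsJ H B ∧ Y ≤ B}

lemma clJ_isJ (Y : Submodule F X) : IsJ H (clJ H Y) := isJ_sInf _ fun _ h => h.1
lemma le_clJ (Y : Submodule F X) : Y ≤ clJ H Y := le_sInf fun _ h => h.2
lemma clJ_le {Y B : Submodule F X} (h1 : IsJ H B) (h : Y ≤ B) : clJ H Y ≤ B := sInf_le ⟨h1, h⟩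

lemma map_inv_map (g : X ≃ₗ[F] X) (B : Submodule F X) :
    (B.map (g : X →ₗ[F] X)).map ((g⁻¹ : X ≃ₗ[F] X) : X →ₗ[F] X) = B := by
  rw [← Submodule.map_comp]
  have : ((g⁻¹ : X ≃ₗ[F] X) : X →ₗ[F] X) ∘ₗ (g : X →ₗ[F] X) = LinearMap.id := by
    ext x; exact g.symm_apply_apply x
  rw [this, Submodule.map_id]

lemma clJ_map_le (Y : Submodule F X) {g : X ≃ₗ[F] X} (hg : g ∈ H) :
    clJ H (Y.map (g : X →ₗ[F] X)) ≤ (clJ H Y).map (g : X →ₗ[F] X) :=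
  clJ_le ((clJ_isJ Y).map hg) (Submodule.map_mono (le_clJ Y))

lemma clJ_map (Y : Submodule F X) {g : X ≃ₗ[F] X} (hg : g ∈ H) :
    clJ H (Y.map (g : X →ₗ[F] X)) = (clJ H Y).map (g : X →ₗ[F] X) := by
  apply le_antisymm (clJ_map_le Y hg)
  have h := clJ_map_le (Y.map (g : X →ₗ[F] X)) (H.inv_mem hg)
  rw [map_inv_map] at h
  have h2 := Submodule.map_mono (f := (g : X →ₗ[F] X)) h
  have h3 := map_inv_map g⁻¹ (clJ H (Y.map (g : X →ₗ[F] X)))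
  rw [inv_inv] at h3
  rwa [h3] at h2

lemma finrank_sup_singleton' [FiniteDimensional F X] {U : Submodule F X} {v : X} (hv : v ∉ U) :
    finrank F ↥(U ⊔ F ∙ v) = finrank F U + 1 := Submodule.finrank_sup_span_singleton hv

/-- transitivity on subspaces of dimension d -/
lemma trans_subspaces [FiniteDimensional F X] (d : ℕ)
    (hJ : ∀ B : Submodule F X, finrank F B < d → IsJ H B) :
    ∀ Y Y' : Submodule F X, finrank F Y = d → finrank F Y' = d →
      ∃ h ∈ H, Y.map (h : X →ₗ[F] X) = Y' := by
  induction d with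
  | zero =>
    intro Y Y' h h'
    rw [Submodule.finrank_eq_zero] at h h'
    subst h h'
    exact ⟨1, H.one_mem, by simp⟩
  | succ d ih =>
    intro Y Y' h h'
    have key : ∀ Y : Submodule F X, finrank F Y = d + 1 → ∃ (U : Submodule F X) (v : X),
        v ∉ U ∧ finrank F U = d ∧ Y = U ⊔ F ∙ v := by
      intro Y hY
      obtain ⟨U, -, hU, hUd⟩ := exists_between_finrank ⊥ Y bot_le d (by simp) (by omega)
      have : U ≠ Y := fun h => by subst h; omega
      obtain ⟨v, hvY, hvU⟩ := SetLike.exists_of_lt (lt_of_le_of_ne hU this)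
      refine ⟨U, v, hvU, hUd, ?_⟩
      symm
      apply Submodule.eq_of_le_of_finrank_eq
      · exact sup_le hU (by simpa using hvY)
      · rw [finrank_sup_singleton' hvU, hUd, hY]
    obtain ⟨U, v, hv, hU, rfl⟩ := key Y h
    obtain ⟨U', v', hv', hU', rfl⟩ := key Y' h'
    obtain ⟨h, hh, hUU⟩ := ih (fun B hB => hJ B (by omega)) U U' hU hU'
    have hhv : h v ∉ U' := by
      rw [← hUU]; rintro ⟨u, hu, huv⟩
      exact hv (by rwa [← h.injective huv])
    obtain ⟨g, hg, g1, g2⟩ := hJ U' (by omega) _ _ hhv hv'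
    refine ⟨g * h, H.mul_mem hg hh, ?_⟩
    have e : ((g * h : X ≃ₗ[F] X) : X →ₗ[F] X) = (g : X →ₗ[F] X) ∘ₗ (h : X →ₗ[F] X) := rfl
    rw [e, Submodule.map_comp, Submodule.map_sup, Submodule.map_sup, hUU]
    congr 1
    · ext x; constructor
      · rintro ⟨u, hu, rfl⟩; simpa [g1 u hu] using hu
      · intro hx; exact ⟨x, hx, by simpa using g1 x hx⟩
    · rw [Submodule.map_span, Submodule.map_span]; simp [g2]

end A1
end GalLin


namespace GalLin
open Module

section A3
set_option linter.unusedSectionVars false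
set_option linter.unusedVariables false
variable {F X : Type*} [Field F] [AddCommGroup X] [Module F X]

lemma exists_between_avoid [FiniteDimensional F X] (A C : Submodule F X) (hAC : A ≤ C) (j : ℕ)
    (v : X) (hv : v ∉ A) (h1 : finrank F A ≤ j) (h2 : j + 1 ≤ finrank F C) :
    ∃ U, A ≤ U ∧ U ≤ C ∧ v ∉ U ∧ finrank F U = j := by
  obtain ⟨f, hfv, hfA⟩ := Submodule.exists_le_ker_of_notMem hv
  have hk : finrank F X ≤ finrank F (LinearMap.ker f) + 1 := by
    have := LinearMap.finrank_range_add_finrank_ker f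
    have h3 : finrank F (LinearMap.range f) ≤ 1 := by
      simpa using Submodule.finrank_le (LinearMap.range f)
    omega
  have h4 := Submodule.finrank_sup_add_finrank_inf_eq C (LinearMap.ker f)
  have h5 := Submodule.finrank_le (C ⊔ LinearMap.ker f)
  obtain ⟨U, hAU, hU, hd⟩ := exists_between_finrank A (C ⊓ LinearMap.ker f)
    (le_inf hAC hfA) j h1 (by omega)
  exact ⟨U, hAU, hU.trans inf_le_left, fun h => hfv (by simpa using (hU h).2), hd⟩

lemma subgroup_units_eq {k : Type*} [Field k] (S T : Subgroup kˣ) [Finite S] [Finite T]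
    (h : Nat.card S = Nat.card T) : S = T := by
  have key : ∀ (N : ℕ) (S : Subgroup kˣ) [Finite S], Nat.card S = N → N ≠ 0 →
      S = rootsOfUnity N k := by
    intro N S _ hS hN
    have : NeZero N := ⟨hN⟩
    have hle : S ≤ rootsOfUnity N k := by
      intro x hx
      rw [mem_rootsOfUnity, ← hS]
      have := pow_card_eq_one' (x := (⟨x, hx⟩ : S))
      exact congrArg Subtype.val this
    apply Subgroup.eq_of_le_of_card_ge hle
    rw [hS]
    exact card_rootsOfUnity k N
  have hN : Nat.card S ≠ 0 := Nat.card_pos.ne'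
  rw [key _ S rfl hN, key _ T h.symm hN]

lemma card_submodule_eq [Finite F] [FiniteDimensional F X] (A : Submodule F X) :
    Nat.card A = Nat.card F ^ finrank F A := Module.natCard_eq_pow_finrank

variable {H : Subgroup (X ≃ₗ[F] X)}

theorem A3_step [Finite F] [Finite X] (B0 : Submodule F X) (hB0 : B0 ≠ ⊤)
    {I' : Type*} [Group I'] (ι : I' →* (X ≃ₗ[F] X)) (hι : ∀ g, ι g ∈ H)
    {k : Type*} [Field k] (θ : I' →* kˣ)
    (X1 : ∀ g, ∀ b ∈ B0, ι g b = b) (X4 : ∀ g, θ g = 1 → ∀ f, ι g f - f ∈ B0)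
    (free : ∀ g f, f ∉ B0 → ι g f - f ∈ B0 → θ g = 1)
    (tr : ∀ f f', f ∉ B0 → f' ∉ B0 → ∃ g, ι g f = f')
    (j : ℕ) (hj1 : 1 ≤ j) (hj2 : j + 2 ≤ finrank F B0)
    (hJ : ∀ B : Submodule F X, finrank F B ≤ j → IsJ H B) :
    ∀ Y : Submodule F X, finrank F Y = j + 1 → IsJ H Y := by
  have : FiniteDimensional F X := Module.Finite.of_finite
  have hB0J : IsJ H B0 := fun x y hx hy => by
    obtain ⟨g, hg⟩ := tr x y hx hy
    exact ⟨ι g, hι g, X1 g, hg⟩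
  by_contra! hcon
  obtain ⟨Y0, hY0, hY0J⟩ := hcon
  have htr := trans_subspaces (H := H) (j + 1) (fun B hB => hJ B (by omega))
  have hno : ∀ Y : Submodule F X, finrank F Y = j + 1 → ¬ IsJ H Y := by
    intro Y hY hYJ
    obtain ⟨h, hh, e⟩ := htr Y Y0 hY hY0
    exact hY0J (e ▸ hYJ.map hh)
  set b := finrank F (clJ H Y0) with hbdef
  have hb : ∀ Y : Submodule F X, finrank F Y = j + 1 → finrank F (clJ H Y) = b := by
    intro Y hY
    obtain ⟨h, hh, e⟩ := htr Y Y0 hY hY0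
    rw [hbdef, ← e, clJ_map Y hh]
    exact (LinearEquiv.finrank_map_eq h _).symm
  have hcl : ∀ Y Y' : Submodule F X, finrank F Y = j + 1 → finrank F Y' = j + 1 →
      Y' ≤ clJ H Y → clJ H Y' = clJ H Y := by
    intro Y Y' hY hY' hle
    exact Submodule.eq_of_le_of_finrank_eq (clJ_le (clJ_isJ Y) hle) (by rw [hb _ hY, hb _ hY'])
  have hbj : j + 2 ≤ b := by
    have : Y0 < clJ H Y0 := by
      refine lt_of_le_of_ne (le_clJ Y0) fun h => hY0J ?_
      rw [h]; exact clJ_isJ Y0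
    have := Submodule.finrank_lt_finrank_of_lt this
    omega
  obtain ⟨φ, hφ⟩ : ∃ φ, φ ∉ B0 := by
    by_contra! h; exact hB0 (eq_top_iff.2 fun x _ => h x)
  set B2 : Submodule F X → Submodule F X := fun U => clJ H (U ⊔ F ∙ φ) with hB2
  have hYU : ∀ U : Submodule F X, U ≤ B0 → finrank F U = j → ∀ y, y ∉ B0 →
      finrank F ↥(U ⊔ F ∙ y) = j + 1 := by
    intro U hU hUj y hy
    rw [Submodule.finrank_sup_span_singleton (fun h => hy (hU h)), hUj]
  have hφB2 : ∀ U, φ ∈ B2 U := fun U =>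
    le_clJ _ (Submodule.mem_sup_right (Submodule.mem_span_singleton_self φ))
  have hUB2 : ∀ U, U ≤ B2 U := fun U => le_sup_left.trans (le_clJ _)
  have hinf : ∀ U : Submodule F X, U ≤ B0 → finrank F U = j → B2 U ⊓ B0 = U := by
    intro U hU hUj
    by_contra hne
    have hlt : U < B2 U ⊓ B0 := lt_of_le_of_ne (le_inf (hUB2 U) hU) (Ne.symm hne)
    have h1 := Submodule.finrank_lt_finrank_of_lt hlt
    obtain ⟨Y', -, hY', hd⟩ := exists_between_finrank ⊥ (B2 U ⊓ B0) bot_le (j + 1) (by simp)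
      (by omega)
    have h2 := hcl _ Y' (hYU U hU hUj φ hφ) hd (hY'.trans inf_le_left)
    have h3 : clJ H Y' ≤ B0 := clJ_le hB0J (hY'.trans inf_le_right)
    rw [h2] at h3
    exact hφ (h3 (hφB2 U))
  have hgB2 : ∀ U : Submodule F X, U ≤ B0 → finrank F U = j → ∀ g y, y ∈ B2 U → y ∉ B0 →
      ι g y ∈ B2 U → ∀ x ∈ B2 U, ι g x ∈ B2 U := by
    intro U hU hUj g y hy hyB hgy x hx
    have hgyB : ι g y ∉ B0 := by
      intro h
      have := (ι g).injective (X1 g _ h)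
      exact hyB (this ▸ h)
    have e1 : clJ H (U ⊔ F ∙ y) = B2 U := hcl _ _ (hYU U hU hUj φ hφ) (hYU U hU hUj y hyB)
      (sup_le (hUB2 U) (by simpa using hy))
    have e2 : clJ H (U ⊔ F ∙ (ι g y)) = B2 U :=
      hcl _ _ (hYU U hU hUj φ hφ) (hYU U hU hUj _ hgyB)
      (sup_le (hUB2 U) (by simpa using hgy))
    have e3 : (U ⊔ F ∙ y).map (ι g : X →ₗ[F] X) = U ⊔ F ∙ (ι g y) := by
      rw [Submodule.map_sup, Submodule.map_span]
      congr 1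
      · ext x; constructor
        · rintro ⟨u, hu, rfl⟩
          have := X1 g u (hU hu)
          simpa [this] using hu
        · intro hx; exact ⟨x, hx, by simpa using X1 g x (hU hx)⟩
      · simp
    have e4 := clJ_map (H := H) (U ⊔ F ∙ y) (hι g)
    rw [e3, e2, e1] at e4
    rw [e4]
    exact ⟨x, hx, rfl⟩
  set σ : Submodule F X → Submodule F X := fun U => B2 U ⊔ B0 with hσ
  have hσfin : ∀ U : Submodule F X, U ≤ B0 → finrank F U = j →
      finrank F (σ U) + j = b + finrank F B0 := by
    intro U hU hUj
    have := Submodule.finrank_sup_add_finrank_inf_eq (B2 U) B0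
    rw [hinf U hU hUj, hUj, hb _ (hYU U hU hUj φ hφ)] at this
    exact this
  have hφg : ∀ g, ι g φ ∉ B0 := by
    intro g h
    have := (ι g).injective (X1 g _ h)
    exact hφ (this ▸ h)
  have hS1 : ∀ U : Submodule F X, U ≤ B0 → finrank F U = j → ∀ g, ι g φ ∈ σ U →
      ∀ x ∈ σ U, ι g x ∈ σ U := by
    intro U hU hUj g hg x hx
    obtain ⟨b2, hb2, b0, hb0, e⟩ := Submodule.mem_sup.1 hg
    have hb2B : b2 ∉ B0 := fun h => hφg g (e ▸ B0.add_mem h hb0)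
    obtain ⟨p, hp⟩ := tr _ _ (hφg g) hb2B
    have hθp : θ p = 1 := free p _ (hφg g) (by
      rw [hp, ← e]; simpa using hb0)
    have h1 := hgB2 U hU hUj (p * g) φ (hφB2 U) hφ (by
      rw [map_mul, LinearEquiv.mul_apply, hp]; exact hb2)
    have h2 : ι (p * g) x ∈ σ U := by
      obtain ⟨y, hy, c, hc, rfl⟩ := Submodule.mem_sup.1 hx
      rw [map_add, X1 _ c hc]
      exact Submodule.add_mem_sup (h1 y hy) hc
    have h3 := X4 p hθp (ι g x)
    rw [map_mul, LinearEquiv.mul_apply] at h2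
    have := (σ U).sub_mem h2 (Submodule.mem_sup_right h3)
    simpa using this
  have hinv : ∀ (g : I') (x : X), ι g⁻¹ (ι g x) = x := by
    intro g x
    rw [← LinearEquiv.mul_apply, ← map_mul]; simp
  have hinv' : ∀ (g : I') (x : X), ι g (ι g⁻¹ x) = x := by
    intro g x
    rw [← LinearEquiv.mul_apply, ← map_mul]; simp
  -- the θ-image
  have hcoset : ∀ g g' f, θ g = θ g' → ι g f - ι g' f ∈ B0 := by
    intro g g' f h
    have := X4 (g * g'⁻¹) (by rw [map_mul, map_inv, h]; simp) (ι g' f)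
    rwa [map_mul, LinearEquiv.mul_apply, hinv] at this
  have hcoset' : ∀ g g', ι g φ - ι g' φ ∈ B0 → θ g = θ g' := by
    intro g g' h
    have h1 := free (g * g'⁻¹) (ι g' φ) (hφg g')
      (by rwa [map_mul, LinearEquiv.mul_apply, hinv])
    rw [map_mul, map_inv, mul_inv_eq_one] at h1
    exact h1
  have hT : ∀ U : Submodule F X, U ≤ B0 → finrank F U = j →
      ∃ T : Subgroup kˣ, Finite T ∧ (∀ g, θ g ∈ T ↔ ι g φ ∈ σ U) ∧ (∀ t ∈ T, ∃ g, θ g = t) ∧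
        Nat.card T * Nat.card B0 = Nat.card (σ U) - Nat.card B0 := by
    intro U hU hUj
    let S : Subgroup I' :=
      { carrier := {g | ι g φ ∈ σ U}
        one_mem' := by simpa using Submodule.mem_sup_left (hφB2 U)
        mul_mem' := by
          intro g h hg hh
          simp only [Set.mem_ofPred_eq, map_mul, LinearEquiv.mul_apply] at *
          exact hS1 U hU hUj g hg _ hh
        inv_mem' := by
          intro g hg
          have hm : (σ U).map (ι g : X →ₗ[F] X) = σ U := by
            apply Submodule.eq_of_le_of_finrank_eq
            · rintro _ ⟨x, hx, rfl⟩; exact hS1 U hU hUj g hg x hx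
            · exact LinearEquiv.finrank_map_eq (ι g) _
          have : φ ∈ (σ U).map (ι g : X →ₗ[F] X) := by
            rw [hm]; exact Submodule.mem_sup_left (hφB2 U)
          obtain ⟨x, hx, e⟩ := this
          have e' : ι g x = φ := e
          change ι g⁻¹ φ ∈ σ U
          rw [← e', hinv]; exact hx }
    have hmem : ∀ g, θ g ∈ S.map θ ↔ ι g φ ∈ σ U := by
      intro g
      constructor
      · rintro ⟨g', hg', e⟩
        have h1 := hcoset g g' φ e.symm
        have h2 : ι g' φ ∈ σ U := hg'
        have := (σ U).add_mem (Submodule.mem_sup_right h1) h2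
        simpa using this
      · intro h; exact ⟨g, h, rfl⟩
    have hsur : ∀ t ∈ S.map θ, ∃ g, θ g = t := by
      rintro _ ⟨g, _, rfl⟩; exact ⟨g, rfl⟩
    choose! γ hγ using hsur
    have hbij : Function.Bijective (fun p : S.map θ × B0 =>
        (⟨ι (γ p.1) φ + p.2, by
          have h1 : ι (γ p.1) φ ∈ σ U := (hmem _).1 (by rw [hγ _ p.1.2]; exact p.1.2)
          refine ⟨(σ U).add_mem h1 (Submodule.mem_sup_right p.2.2), fun h => hφg (γ p.1) ?_⟩
          simpa using B0.sub_mem h p.2.2⟩ : ((σ U : Set X) \ (B0 : Set X) : Set X))) := by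
      constructor
      · rintro ⟨⟨t, ht⟩, ⟨c, hc⟩⟩ ⟨⟨t', ht'⟩, ⟨c', hc'⟩⟩ h
        have h : ι (γ t) φ + c = ι (γ t') φ + c' := congrArg Subtype.val h
        have h1 : ι (γ t) φ - ι (γ t') φ ∈ B0 := by
          have : ι (γ t) φ - ι (γ t') φ = c' - c := by
            rw [sub_eq_sub_iff_add_eq_add, h, add_comm]
          rw [this]; exact B0.sub_mem hc' hc
        have h2 := hcoset' _ _ h1
        rw [hγ t ht, hγ t' ht'] at h2
        subst h2
        simpa using h
      · rintro ⟨x, hx, hxB⟩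
        obtain ⟨g, hg⟩ := tr φ x hφ hxB
        have ht : θ g ∈ S.map θ := (hmem g).2 (by rw [hg]; exact hx)
        refine ⟨(⟨θ g, ht⟩, ⟨x - ι (γ (θ g)) φ, ?_⟩), ?_⟩
        · rw [← hg]; exact hcoset _ _ _ (hγ _ ht).symm
        · simp
    have hfinT : Finite (S.map θ) := by
      have := Finite.of_injective _ hbij.1
      exact Finite.of_surjective (Prod.fst : S.map θ × B0 → S.map θ) Prod.fst_surjective
    refine ⟨S.map θ, hfinT, hmem, ?_, ?_⟩
    · rintro _ ⟨g, _, rfl⟩; exact ⟨g, rfl⟩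
    · have h1 := Nat.card_congr (Equiv.ofBijective _ hbij)
      rw [Nat.card_prod, Nat.card_coe_set_eq, Set.ncard_sdiff] at h1
      · exact h1
      · exact (le_sup_right : B0 ≤ B2 U ⊔ B0)
  have hσeq : ∀ U U' : Submodule F X, U ≤ B0 → finrank F U = j → U' ≤ B0 → finrank F U' = j →
      σ U ≤ σ U' := by
    intro U U' hU hUj hU' hUj' x hx
    obtain ⟨T, hTf, hT1, hT2, hTc⟩ := hT U hU hUj
    obtain ⟨T', hTf', hT1', hT2', hTc'⟩ := hT U' hU' hUj'
    have hc : Nat.card (σ U) = Nat.card (σ U') := by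
      rw [card_submodule_eq, card_submodule_eq]
      have := hσfin U hU hUj
      have := hσfin U' hU' hUj'
      congr 1; omega
    rw [hc, ← hTc'] at hTc
    have hTT : T = T' := subgroup_units_eq _ _ (Nat.eq_of_mul_eq_mul_right Nat.card_pos hTc)
    subst hTT
    by_cases hxB : x ∈ B0
    · exact Submodule.mem_sup_right hxB
    obtain ⟨g, rfl⟩ := tr φ x hφ hxB
    exact (hT1' g).1 ((hT1 g).2 hx)
  -- final contradiction
  obtain ⟨u, huB, hu0⟩ : ∃ u ∈ B0, u ≠ 0 := by
    by_contra! h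
    have : B0 = ⊥ := by rw [eq_bot_iff]; intro x hx; simpa using h x hx
    rw [this] at hj2; simp at hj2
  obtain ⟨π, hπ⟩ := tr φ (φ + u) hφ (fun h => hφ (by simpa using B0.sub_mem h huB))
  have hθπ : θ π = 1 := free π φ hφ (by rw [hπ]; simpa using huB)
  obtain ⟨U0, -, hU0, hU0u, hU0j⟩ := exists_between_avoid ⊥ B0 bot_le j u (by simpa using hu0)
    (by simp) (by omega)
  have h1 : ∀ x ∈ σ U0, ι π x - x ∈ F ∙ u := by
    intro x hx
    by_contra hv
    obtain ⟨U, huU, hU, hvU, hUj⟩ := exists_between_avoid (F ∙ u) B0 (by simpa using huB) j _ hv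
      (by rw [finrank_span_singleton hu0]; exact hj1) (by omega)
    have huU' : u ∈ U := by simpa using huU
    obtain ⟨y, hy, c, hc, rfl⟩ := Submodule.mem_sup.1 (hσeq U0 U hU0 hU0j hU hUj hx)
    have h2 := hgB2 U hU hUj π φ (hφB2 U) hφ (by
      rw [hπ]; exact (B2 U).add_mem (hφB2 U) (hUB2 U huU')) y hy
    apply hvU
    rw [map_add, X1 π c hc, add_sub_add_right_eq_sub, ← hinf U hU hUj]
    exact ⟨(B2 U).sub_mem h2 hy, X4 π hθπ y⟩
  obtain ⟨z, hzσ, hzB, hzπ⟩ : ∃ z ∈ σ U0, z ∉ B0 ∧ ι π z = z := by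
    have hd : finrank F ↥(B0 ⊔ F ∙ φ) < finrank F (σ U0) := by
      rw [Submodule.finrank_sup_span_singleton hφ]
      have := hσfin U0 hU0 hU0j
      omega
    obtain ⟨y, hyσ, hy⟩ : ∃ y ∈ σ U0, y ∉ B0 ⊔ F ∙ φ := by
      by_contra! h
      have := Submodule.finrank_mono (s := σ U0) (t := B0 ⊔ F ∙ φ) h
      omega
    obtain ⟨c, hc⟩ := Submodule.mem_span_singleton.1 (h1 y hyσ)
    refine ⟨y - c • φ, (σ U0).sub_mem hyσ ((σ U0).smul_mem c (Submodule.mem_sup_left (hφB2 U0))),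
      fun h => hy ?_, ?_⟩
    · have := Submodule.add_mem_sup h (Submodule.smul_mem (F ∙ φ) c
        (Submodule.mem_span_singleton_self φ))
      simpa using this
    · have hy' : ι π y = y + c • u := by rw [hc]; abel
      rw [map_sub, map_smul, hπ, hy', smul_add]; abel
  obtain ⟨y, hy, c, hc, rfl⟩ := Submodule.mem_sup.1 hzσ
  have hyB : y ∉ B0 := fun h => hzB (B0.add_mem h hc)
  have hyπ : ι π y = y := by
    rw [map_add, X1 π c hc] at hzπ
    simpa using hzπ
  have h2 := hgB2 U0 hU0 hU0j π y hy hyB (by rwa [hyπ]) φ (hφB2 U0)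
  apply hU0u
  rw [← hinf U0 hU0 hU0j]
  refine ⟨?_, huB⟩
  have := (B2 U0).sub_mem h2 (hφB2 U0)
  rw [hπ] at this
  simpa using this

theorem A3_main [Finite F] [Finite X] (B0 : Submodule F X) (hB0 : B0 ≠ ⊤)
    {I' : Type*} [Group I'] (ι : I' →* (X ≃ₗ[F] X)) (hι : ∀ g, ι g ∈ H)
    {k : Type*} [Field k] (θ : I' →* kˣ)
    (X1 : ∀ g, ∀ b ∈ B0, ι g b = b) (X4 : ∀ g, θ g = 1 → ∀ f, ι g f - f ∈ B0)
    (free : ∀ g f, f ∉ B0 → ι g f - f ∈ B0 → θ g = 1)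
    (tr : ∀ f f', f ∉ B0 → f' ∉ B0 → ∃ g, ι g f = f')
    (h0 : IsJ H (⊥ : Submodule F X)) (h1 : ∀ f : X, f ≠ 0 → IsJ H (F ∙ f)) :
    ∀ Y Y' : Submodule F X, finrank F Y = finrank F B0 → finrank F Y' = finrank F B0 →
      ∃ h ∈ H, Y.map (h : X →ₗ[F] X) = Y' := by
  have : FiniteDimensional F X := Module.Finite.of_finite
  apply trans_subspaces
  have hall : ∀ j, j + 1 ≤ finrank F B0 → ∀ B : Submodule F X, finrank F B ≤ j → IsJ H B := by
    intro j
    induction j with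
    | zero =>
      intro _ B hB
      have : B = ⊥ := Submodule.finrank_eq_zero.1 (by omega)
      rw [this]; exact h0
    | succ j ih =>
      intro hj B hB
      by_cases hBj : finrank F B ≤ j
      · exact ih (by omega) B hBj
      have hBj' : finrank F B = j + 1 := by omega
      by_cases hj0 : j = 0
      · subst hj0
        obtain ⟨v, hv, -⟩ := finrank_eq_one_iff'.1 hBj'
        have : B = F ∙ (v : X) := by
          symm
          apply Submodule.eq_of_le_of_finrank_eq
          · simp
          · rw [finrank_span_singleton (by simpa using hv), hBj']
        rw [this]; exact h1 _ (by simpa using hv)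
      · exact A3_step B0 hB0 ι hι θ X1 X4 free tr j (by omega) (by omega) (ih (by omega)) B hBj'
  intro B hB
  exact hall (finrank F B) (by omega) B le_rfl

end A3
end GalLin


namespace GalLin
open Module

section A4
set_option linter.unusedSectionVars false
set_option linter.unusedVariables false
variable {F V : Type*} [Field F] [AddCommGroup V] [Module F V]

/-- `1 + o ∈ H`, `o` kills `K` and has image in `K` -/
def InO (H : Subgroup (V ≃ₗ[F] V)) (K : Submodule F V) (o : V →ₗ[F] V) : Prop :=
  (∃ h ∈ H, ∀ v, h v = v + o v) ∧ (∀ v ∈ K, o v = 0) ∧ ∀ v, o v ∈ K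

variable {H : Subgroup (V ≃ₗ[F] V)} {K : Submodule F V}

lemma InO.zero : InO H K 0 := ⟨⟨1, H.one_mem, by simp⟩, by simp, by simp⟩

lemma InO.neg {o : V →ₗ[F] V} (h : InO H K o) : InO H K (-o) := by
  obtain ⟨⟨g, hg, e⟩, h1, h2⟩ := h
  refine ⟨⟨g⁻¹, H.inv_mem hg, fun v => ?_⟩, fun v hv => by simp [h1 v hv], fun v => by simpa using h2 v⟩
  apply g.injective
  have : g ((g⁻¹ : V ≃ₗ[F] V) v) = v := g.apply_symm_apply v
  rw [this, e]
  simp [h1 _ (h2 v)]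

lemma InO.add {o o' : V →ₗ[F] V} (h : InO H K o) (h' : InO H K o') : InO H K (o + o') := by
  obtain ⟨⟨g, hg, e⟩, h1, h2⟩ := h
  obtain ⟨⟨g', hg', e'⟩, h1', h2'⟩ := h'
  refine ⟨⟨g * g', H.mul_mem hg hg', fun v => ?_⟩, fun v hv => by simp [h1 v hv, h1' v hv],
    fun v => by simpa using K.add_mem (h2 v) (h2' v)⟩
  rw [LinearEquiv.mul_apply, e', e]
  simp [h1 _ (h2' v)]
  abel

lemma InO.sub {o o' : V →ₗ[F] V} (h : InO H K o) (h' : InO H K o') : InO H K (o - o') := by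
  rw [sub_eq_add_neg]; exact h.add h'.neg

lemma InO.conj {o : V →ₗ[F] V} (h : InO H K o) {g : V ≃ₗ[F] V} (hg : g ∈ H) :
    InO H (K.map (g : V →ₗ[F] V)) ((g : V →ₗ[F] V) ∘ₗ o ∘ₗ (g.symm : V →ₗ[F] V)) := by
  obtain ⟨⟨t, ht, e⟩, h1, h2⟩ := h
  refine ⟨⟨g * t * g⁻¹, H.mul_mem (H.mul_mem hg ht) (H.inv_mem hg), fun v => ?_⟩, ?_, ?_⟩
  · change g (t (g.symm v)) = _
    rw [e]; simp
  · rintro _ ⟨v, hv, rfl⟩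
    simp [h1 v hv]
  · intro v
    exact ⟨_, h2 (g.symm v), rfl⟩

lemma comm_tv {K' D0 : Submodule F V} {o o' : V →ₗ[F] V} (ho : InO H K o) (ho' : InO H K' o')
    (x x' m m' : V) (hD : D0 ≤ K) (hD' : D0 ≤ K') (hm : m ∈ D0) (hm' : m' ∈ D0)
    (a b : Dual F V) (hK : ∀ v ∈ K, v - b v • x ∈ D0) (hK' : ∀ v ∈ K', v - a v • x' ∈ D0)
    (hox : o x' = m) (hox' : o' x = m') :
    ∃ h ∈ H, ∀ v, h v = v + a (o' v) • m - b (o v) • m' := by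
  obtain ⟨⟨h1, hh1, e1⟩, k1, i1⟩ := ho
  obtain ⟨⟨h2, hh2, e2⟩, k2, i2⟩ := ho'
  obtain ⟨⟨h3, hh3, e3⟩, -, -⟩ := InO.neg (H := H) (K := K) ⟨⟨h1, hh1, e1⟩, k1, i1⟩
  obtain ⟨⟨h4, hh4, e4⟩, -, -⟩ := InO.neg (H := H) (K := K') ⟨⟨h2, hh2, e2⟩, k2, i2⟩
  refine ⟨h1 * h2 * h3 * h4, H.mul_mem (H.mul_mem (H.mul_mem hh1 hh2) hh3) hh4, fun v => ?_⟩
  have c1 : o (o v) = 0 := k1 _ (i1 v)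
  have c2 : o' (o' v) = 0 := k2 _ (i2 v)
  have c3 : o (o' v) = a (o' v) • m := by
    have := k1 _ (hD (hK' _ (i2 v)))
    rw [map_sub, map_smul, hox, sub_eq_zero] at this
    exact this
  have c4 : o' (o v) = b (o v) • m' := by
    have := k2 _ (hD' (hK _ (i1 v)))
    rw [map_sub, map_smul, hox', sub_eq_zero] at this
    exact this
  have d1 : o m = 0 := k1 _ (hD hm)
  have d2 : o m' = 0 := k1 _ (hD hm')
  have d3 : o' m = 0 := k2 _ (hD' hm)
  have d4 : o' m' = 0 := k2 _ (hD' hm')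
  simp only [LinearEquiv.mul_apply, e1, e2, e3, e4, LinearMap.neg_apply, map_add, map_neg, map_smul,
    c1, c2, c3, c4, d1, d2, d3, d4, smul_zero, neg_zero, add_zero, zero_add]
  abel

lemma exists_functional (K : Submodule F V) {x : V} (hx : x ∉ K) :
    ∃ f : Dual F V, f x = 1 ∧ ∀ v ∈ K, f v = 0 := by
  obtain ⟨f, hfv, hfA⟩ := Submodule.exists_le_ker_of_notMem hx
  refine ⟨(f x)⁻¹ • f, by simp [hfv], fun v hv => ?_⟩
  have : f v = 0 := hfA hv
  simp [this]

theorem A4_main [Finite F] [Finite V] (hK0 : K ≠ ⊥) (hK1 : K ≠ ⊤)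
    (hodd : 2 * finrank F K ≠ finrank F V)
    (S1 : ∀ x ∉ K, ∀ w ∈ K, ∃ o, InO H K o ∧ o x = w)
    (S2 : ∀ f : Dual F V, (∃ v ∈ K, f v ≠ 0) → ∀ b : Dual F V, (∀ v ∈ K, b v = 0) →
      ∃ o, InO H K o ∧ ∀ v, f (o v) = b v)
    (tr : ∀ K' : Submodule F V, finrank F K' = finrank F K → ∃ h ∈ H, K.map (h : V →ₗ[F] V) = K') :
    ∃ (f : Dual F V) (m : V), f ≠ 0 ∧ m ≠ 0 ∧ f m = 0 ∧ ∃ h ∈ H, ∀ v, h v = v + f v • m := by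
  have : FiniteDimensional F V := Module.Finite.of_finite
  obtain ⟨x', hx'⟩ : ∃ x', x' ∉ K := by
    by_contra! h; exact hK1 (eq_top_iff.2 fun x _ => h x)
  obtain ⟨w, hwK, hw0⟩ := Submodule.exists_mem_ne_zero_of_ne_bot hK0
  have hpos : 0 < finrank F K := by
    rw [Nat.pos_iff_ne_zero]; intro h; exact hK0 (Submodule.finrank_eq_zero.1 h)
  have hlt : finrank F K < finrank F V := Submodule.finrank_lt hK1
  obtain ⟨a, hax', haK⟩ := exists_functional K hx'
  by_cases hk1 : finrank F K = 1
  · obtain ⟨o, ho, hox⟩ := S1 x' hx' w hwK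
    obtain ⟨f0, hf0, -⟩ := exists_functional (⊥ : Submodule F V) (x := w) (by simpa using hw0)
    have hKw : K = F ∙ w := by
      symm
      apply Submodule.eq_of_le_of_finrank_eq
      · simpa using hwK
      · rw [finrank_span_singleton hw0, hk1]
    obtain ⟨⟨h, hh, e⟩, k1, i1⟩ := ho
    refine ⟨f0 ∘ₗ o, w, fun h => ?_, hw0, by simp [k1 w hwK], h, hh, fun v => ?_⟩
    · have := LinearMap.congr_fun h x'
      simp [hox, hf0] at this
    · rw [e]
      have := i1 v
      rw [hKw, Submodule.mem_span_singleton] at this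
      obtain ⟨c, hc⟩ := this
      simp [← hc, hf0]
  by_cases hkn : finrank F K + 1 = finrank F V
  · obtain ⟨o, ho, hox⟩ := S1 x' hx' w hwK
    obtain ⟨⟨h, hh, e⟩, k1, i1⟩ := ho
    have htop : K ⊔ F ∙ x' = ⊤ := by
      apply Submodule.eq_top_of_finrank_eq
      rw [Submodule.finrank_sup_span_singleton hx', hkn]
    refine ⟨a, w, fun h => ?_, hw0, haK w hwK, h, hh, fun v => ?_⟩
    · simp [h] at hax'
    · rw [e]
      have hv : v ∈ K ⊔ F ∙ x' := by rw [htop]; trivial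
      obtain ⟨y, hy, z, hz, rfl⟩ := Submodule.mem_sup.1 hv
      obtain ⟨c, rfl⟩ := Submodule.mem_span_singleton.1 hz
      simp [k1 y hy, haK y hy, hox, hax']
  -- main case
  obtain ⟨D0, -, hD0K, hxD', hD0d⟩ := exists_between_avoid ⊥ K bot_le (finrank F K - 1) w
    (by simpa using hw0) (by simp) (by omega)
  set K' : Submodule F V := D0 ⊔ F ∙ x' with hK'
  have hK'd : finrank F K' = finrank F K := by
    rw [hK', Submodule.finrank_sup_span_singleton (fun h => hx' (hD0K h)), hD0d]; omega
  obtain ⟨g, hg, hgK⟩ := tr K' hK'd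
  have hgK' : ∀ v, v ∈ K' ↔ g.symm v ∈ K := by
    intro v; rw [← hgK]; constructor
    · rintro ⟨u, hu, rfl⟩; simpa using hu
    · intro h; exact ⟨_, h, by simp⟩
  have S1' : ∀ x ∉ K', ∀ w ∈ K', ∃ o, InO H K' o ∧ o x = w := by
    intro x hx w hw
    rw [hgK'] at hx hw
    obtain ⟨o, ho, e⟩ := S1 _ hx _ hw
    refine ⟨_, hgK ▸ ho.conj hg, ?_⟩
    simp [e]
  have S2' : ∀ f : Dual F V, (∃ v ∈ K', f v ≠ 0) → ∀ b : Dual F V, (∀ v ∈ K', b v = 0) →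
      ∃ o, InO H K' o ∧ ∀ v, f (o v) = b v := by
    rintro f ⟨v, hv, hfv⟩ b hb
    obtain ⟨o, ho, e⟩ := S2 (f ∘ₗ (g : V →ₗ[F] V)) ⟨g.symm v, (hgK' v).1 hv, by simpa using hfv⟩
      (b ∘ₗ (g : V →ₗ[F] V)) (fun u hu => hb _ ((hgK' _).2 (by simpa using hu)))
    refine ⟨_, hgK ▸ ho.conj hg, fun v => ?_⟩
    have := e (g.symm v)
    simpa using this
  have hwK' : w ∉ K' := by
    intro h
    obtain ⟨y, hy, z, hz, e⟩ := Submodule.mem_sup.1 h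
    obtain ⟨c, rfl⟩ := Submodule.mem_span_singleton.1 hz
    have h1 : a w = 0 := haK w hwK
    rw [← e, map_add, haK y (hD0K hy), map_smul, hax'] at h1
    have hc : c = 0 := by simpa using h1
    subst hc
    apply hxD'
    rw [← e]; simpa using hy
  obtain ⟨b, hbw, hbK'⟩ := exists_functional K' hwK'
  have hKD : K = D0 ⊔ F ∙ w := by
    symm
    apply Submodule.eq_of_le_of_finrank_eq
    · exact sup_le hD0K (by simpa using hwK)
    · rw [Submodule.finrank_sup_span_singleton hxD', hD0d]; omega
  have hD0K' : D0 ≤ K' := le_sup_left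
  have hKb : ∀ v ∈ K, v - b v • w ∈ D0 := by
    intro v hv
    rw [hKD] at hv
    obtain ⟨y, hy, z, hz, rfl⟩ := Submodule.mem_sup.1 hv
    obtain ⟨c, rfl⟩ := Submodule.mem_span_singleton.1 hz
    simpa [hbK' y (hD0K' hy), hbw] using hy
  have hKa : ∀ v ∈ K', v - a v • x' ∈ D0 := by
    intro v hv
    obtain ⟨y, hy, z, hz, rfl⟩ := Submodule.mem_sup.1 hv
    obtain ⟨c, rfl⟩ := Submodule.mem_span_singleton.1 hz
    simpa [haK y (hD0K hy), hax'] using hy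
  have hxKpp : x' ∈ K' := Submodule.mem_sup_right (Submodule.mem_span_singleton_self x')
  set M : Submodule F V := K ⊔ F ∙ x' with hM
  have hMd : finrank F M = finrank F K + 1 := by rw [hM, Submodule.finrank_sup_span_singleton hx']
  have hAd : finrank F M.dualAnnihilator + finrank F M = finrank F V := by
    have := Subspace.finrank_add_finrank_dualAnnihilator_eq M; omega
  have hKM : K ≤ M := le_sup_left
  have hx'M : x' ∈ M := Submodule.mem_sup_right (Submodule.mem_span_singleton_self x')
  have hK'M : K' ≤ M := sup_le (hD0K.trans hKM) (by simpa using hx'M)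
  have hMK' : ∀ f : Dual F V, (∀ v ∈ K', f v = 0) → f w = 0 → f ∈ M.dualAnnihilator := by
    intro f hf hfw
    rw [Submodule.mem_dualAnnihilator]
    intro v hv
    obtain ⟨y, hy, z, hz, rfl⟩ := Submodule.mem_sup.1 hv
    obtain ⟨c, rfl⟩ := Submodule.mem_span_singleton.1 hz
    rw [hKD] at hy
    obtain ⟨y', hy', z', hz', rfl⟩ := Submodule.mem_sup.1 hy
    obtain ⟨c', rfl⟩ := Submodule.mem_span_singleton.1 hz'
    simp [hf _ (hD0K' hy'), hfw, hf _ hxKpp]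
  have : Finite (Dual F V) := Module.finite_of_finite F
  have hcardD : Nat.card D0 = Nat.card F ^ (finrank F K - 1) := by
    rw [card_submodule_eq, hD0d]
  have hcardA : Nat.card M.dualAnnihilator = Nat.card F ^ (finrank F V - finrank F K - 1) := by
    rw [card_submodule_eq]; congr 1; omega
  have hF : 1 < Nat.card F := Finite.one_lt_card
  rcases lt_or_gt_of_ne hodd with hlt2 | hgt2
  · -- n - k > k
    have h1 : ∀ γ : M.dualAnnihilator, ∃ o, InO H K' o ∧ (∀ v, a (o v) = γ.1 v) := fun γ =>
      S2' a ⟨x', hxKpp, by simp [hax']⟩ γ.1 fun v hv =>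
        (Submodule.mem_dualAnnihilator _).1 γ.2 v (hK'M hv)
    choose oo ho1 ho2 using h1
    have hmem : ∀ γ, oo γ w ∈ D0 := by
      intro γ
      have h2 := hKa _ ((ho1 γ).2.2 w)
      rw [ho2 γ w, (Submodule.mem_dualAnnihilator _).1 γ.2 w (hKM hwK)] at h2
      simpa using h2
    have hninj : ¬ Function.Injective (fun γ => (⟨oo γ w, hmem γ⟩ : D0)) := by
      intro hi
      have h3 := Nat.card_le_card_of_injective _ hi
      rw [hcardA, hcardD, Nat.pow_le_pow_iff_right hF] at h3
      omega
    rw [Function.Injective] at hninj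
    push Not at hninj
    obtain ⟨γ1, γ2, he, hne⟩ := hninj
    have he' : oo γ1 w = oo γ2 w := congrArg Subtype.val he
    have ho' : InO H K' (oo γ1 - oo γ2) := (ho1 γ1).sub (ho1 γ2)
    obtain ⟨m, hm, hm0⟩ : ∃ m ∈ D0, m ≠ 0 := by
      apply Submodule.exists_mem_ne_zero_of_ne_bot
      intro h
      rw [h] at hD0d; simp at hD0d; omega
    obtain ⟨o, ho, hom⟩ := S1 x' hx' m (hD0K hm)
    obtain ⟨h, hh, e⟩ := comm_tv ho ho' w x' m 0 hD0K hD0K' hm D0.zero_mem a b hKb hKa hom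
      (by simp [he'])
    refine ⟨γ1.1 - γ2.1, m, fun h => hne ?_, hm0, ?_, h, hh, fun v => ?_⟩
    · exact Subtype.ext (sub_eq_zero.1 h)
    · rw [LinearMap.sub_apply, (Submodule.mem_dualAnnihilator _).1 γ1.2 _ (hKM (hD0K hm)),
        (Submodule.mem_dualAnnihilator _).1 γ2.2 _ (hKM (hD0K hm)), sub_zero]
    · rw [e]; simp [ho2]
  · have h1 : ∀ m : D0, ∃ o, InO H K' o ∧ o w = m.1 := fun m => S1' w hwK' m.1 (hD0K' m.2)
    choose oo ho1 ho2 using h1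
    have hmem : ∀ m, a ∘ₗ oo m ∈ M.dualAnnihilator := by
      intro m
      apply hMK'
      · intro v hv; simp [(ho1 m).2.1 v hv]
      · simp [ho2, haK _ (hD0K m.2)]
    have hninj : ¬ Function.Injective (fun m => (⟨a ∘ₗ oo m, hmem m⟩ : M.dualAnnihilator)) := by
      intro hi
      have h3 := Nat.card_le_card_of_injective _ hi
      rw [hcardA, hcardD, Nat.pow_le_pow_iff_right hF] at h3
      omega
    rw [Function.Injective] at hninj
    push Not at hninj
    obtain ⟨m1, m2, he, hne⟩ := hninj
    have he' : a ∘ₗ oo m1 = a ∘ₗ oo m2 := congrArg Subtype.val he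
    have ho' : InO H K' (oo m1 - oo m2) := (ho1 m1).sub (ho1 m2)
    obtain ⟨γ, hγ, hγ0⟩ : ∃ γ ∈ M.dualAnnihilator, γ ≠ 0 := by
      apply Submodule.exists_mem_ne_zero_of_ne_bot
      intro h
      rw [h] at hAd; simp at hAd; omega
    rw [Submodule.mem_dualAnnihilator] at hγ
    obtain ⟨o, ho, hob⟩ := S2 b ⟨w, hwK, by simp [hbw]⟩ (-γ) fun v hv => by simp [hγ v (hKM hv)]
    have hm : o x' ∈ D0 := by
      have h2 := hKb _ (ho.2.2 x')
      rw [hob, LinearMap.neg_apply, hγ x' hx'M] at h2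
      simpa using h2
    have hm' : m1.1 - m2.1 ∈ D0 := D0.sub_mem m1.2 m2.2
    obtain ⟨h, hh, e⟩ := comm_tv ho ho' w x' (o x') (m1.1 - m2.1) hD0K hD0K' hm hm' a b hKb hKa rfl
      (by simp [ho2])
    refine ⟨γ, m1.1 - m2.1, hγ0, fun h => hne (Subtype.ext (sub_eq_zero.1 h)),
      hγ _ (hKM (hD0K hm')), h, hh, fun v => ?_⟩
    have h5 : a (oo m1 v) = a (oo m2 v) := LinearMap.congr_fun he' v
    rw [e, hob]
    simp [h5]

end A4
end GalLin


namespace GalLin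
open Module

section A5a
set_option linter.unusedSectionVars false
set_option linter.unusedVariables false
variable {F V : Type*} [Field F] [AddCommGroup V] [Module F V] [FiniteDimensional F V]

/-- all transvections generate SL -/
lemma all_transvections (H : Subgroup (V ≃ₗ[F] V))
    (hH : ∀ (f : Dual F V) (m : V), f m = 0 → ∃ h ∈ H, ∀ v, h v = v + f v • m)
    (hdet : ∀ c : F, c ≠ 0 → ∃ h ∈ H, LinearMap.det (h : V →ₗ[F] V) = c) : H = ⊤ := by
  have step1 : ∀ (U : Submodule F V) (x y : V), y ∉ U ⊔ F ∙ (y - x) →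
      ∃ h ∈ H, LinearMap.det (h : V →ₗ[F] V) = 1 ∧ (∀ u ∈ U, h u = u) ∧ h x = y := by
    intro U x y hxy
    obtain ⟨f, hf1, hf2⟩ := exists_functional _ hxy
    have hyx : f (y - x) = 0 :=
      hf2 _ (Submodule.mem_sup_right (Submodule.mem_span_singleton_self _))
    obtain ⟨h, hh, e⟩ := hH f (y - x) hyx
    refine ⟨h, hh, ?_, fun u hu => ?_, ?_⟩
    · have : (h : V →ₗ[F] V) = LinearMap.transvection f (y - x) := by
        ext v; simp [e, LinearMap.transvection.apply]
      rw [this, LinearMap.transvection.det, hyx, add_zero]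
    · rw [e, hf2 u (Submodule.mem_sup_left hu)]; simp
    · have hfx : f x = 1 := by rw [map_sub, hf1, sub_eq_zero] at hyx; exact hyx.symm
      rw [e, hfx]; simp
  have ind : ∀ (U V' : Submodule F V) (x y : V), x ∉ U → y ∉ U → y ∉ U ⊔ F ∙ x →
      y ∉ U ⊔ F ∙ (y - x) := by
    intro U V' x y hx hy hxy h
    obtain ⟨u, hu, z, hz, e⟩ := Submodule.mem_sup.1 h
    obtain ⟨c, rfl⟩ := Submodule.mem_span_singleton.1 hz
    by_cases hc : c = 1
    · subst hc
      apply hx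
      have : x = u := by
        have : u + (y - x) = y := by simpa using e
        rw [add_sub_left_comm, add_eq_left, sub_eq_zero] at this
        exact this.symm
      rwa [this]
    · apply hxy
      have h1 : (1 - c) • y = u - c • x := by
        rw [sub_smul, one_smul, sub_eq_iff_eq_add]
        nth_rewrite 1 [← e]
        rw [smul_sub]; abel
      have h2 : y = (1 - c)⁻¹ • (u - c • x) := by
        rw [← h1, inv_smul_smul₀ (sub_ne_zero.2 (Ne.symm hc))]
      rw [h2]
      refine Submodule.smul_mem _ _ (Submodule.sub_mem _ (Submodule.mem_sup_left hu)
        (Submodule.mem_sup_right (Submodule.smul_mem _ _ (Submodule.mem_span_singleton_self _))))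
  have step2 : ∀ (U : Submodule F V) (x y : V), finrank F U + 2 ≤ finrank F V → x ∉ U → y ∉ U →
      ∃ h ∈ H, LinearMap.det (h : V →ₗ[F] V) = 1 ∧ (∀ u ∈ U, h u = u) ∧ h x = y := by
    intro U x y hU hx hy
    have hne : ∀ x, x ∉ U → U ⊔ F ∙ x ≠ ⊤ := by
      intro x hx h
      have := Submodule.finrank_sup_span_singleton (K := F) hx
      rw [h, finrank_top] at this; omega
    obtain ⟨z, hz1, hz2⟩ := exists_not_mem_two _ _ (hne x hx) (hne y hy)
    have hzU : z ∉ U := fun h => hz1 (Submodule.mem_sup_left h)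
    obtain ⟨h, hh, d1, f1, e1⟩ := step1 U x z (ind U U x z hx hzU hz1)
    obtain ⟨g, hg, d2, f2, e2⟩ := step1 U y z (ind U U y z hy hzU hz2)
    refine ⟨g⁻¹ * h, H.mul_mem (H.inv_mem hg) hh, ?_, fun u hu => ?_, ?_⟩
    · have : ((g⁻¹ * h : V ≃ₗ[F] V) : V →ₗ[F] V) = (g.symm : V →ₗ[F] V) ∘ₗ (h : V →ₗ[F] V) := rfl
      rw [this, LinearMap.det_comp, d1, mul_one]
      have h2 := LinearEquiv.det_symm_mul_det g
      rwa [d2, mul_one] at h2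
    · change g.symm (h u) = u
      rw [f1 u hu]
      conv_lhs => rw [← f2 u hu]
      simp
    · change g.symm (h x) = y
      rw [e1, ← e2]; simp
  have step3 : ∀ (d : ℕ), d + 1 ≤ finrank F V → ∀ g : V ≃ₗ[F] V, ∃ h ∈ H,
      LinearMap.det (h : V →ₗ[F] V) = 1 ∧ ∃ U : Submodule F V, finrank F U = d ∧
        ∀ u ∈ U, h (g u) = u := by
    intro d
    induction d with
    | zero =>
      intro _ g
      refine ⟨1, H.one_mem, ?_, ⊥, by simp, by simp⟩
      change LinearMap.det (LinearMap.id) = 1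
      simp
    | succ d ih =>
      intro hd g
      obtain ⟨h, hh, dh, U, hU, hf⟩ := ih (by omega) g
      have hUt : U ≠ ⊤ := fun h => by rw [h, finrank_top] at hU; omega
      obtain ⟨v, hv⟩ : ∃ v, v ∉ U := by
        by_contra! h; exact hUt (eq_top_iff.2 fun x _ => h x)
      have hgv : h (g v) ∉ U := by
        intro hm
        have := hf _ hm
        have := g.injective (h.injective this)
        exact hv (this ▸ hm)
      obtain ⟨t, ht, dt, f1, e1⟩ := step2 U (h (g v)) v (by omega) hgv hv
      refine ⟨t * h, H.mul_mem ht hh, ?_, U ⊔ F ∙ v, ?_, ?_⟩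
      · have : ((t * h : V ≃ₗ[F] V) : V →ₗ[F] V) = (t : V →ₗ[F] V) ∘ₗ (h : V →ₗ[F] V) := rfl
        rw [this, LinearMap.det_comp, dh, dt, mul_one]
      · rw [Submodule.finrank_sup_span_singleton hv, hU]
      · intro u hu
        obtain ⟨y, hy, z, hz, rfl⟩ := Submodule.mem_sup.1 hu
        obtain ⟨c, rfl⟩ := Submodule.mem_span_singleton.1 hz
        rw [LinearEquiv.mul_apply]
        simp [hf y hy, f1 y hy, e1]
  rw [eq_top_iff]
  rintro g -
  by_cases hV : finrank F V = 0
  · have : g = 1 := by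
      have := Module.finrank_zero_iff.1 hV
      ext v; exact Subsingleton.elim _ _
    rw [this]; exact H.one_mem
  -- det one elements
  have main : ∀ g : V ≃ₗ[F] V, LinearMap.det (g : V →ₗ[F] V) = 1 → g ∈ H := by
    intro g dg
    obtain ⟨h, hh, dh, U, hU, hf⟩ := step3 (finrank F V - 1) (by omega) g
    suffices h * g ∈ H by
      have h3 := H.mul_mem (H.inv_mem hh) this
      simpa using h3
    have hUt : U ≠ ⊤ := fun h => by rw [h, finrank_top] at hU; omega
    obtain ⟨v, hv⟩ : ∃ v, v ∉ U := by
      by_contra! h; exact hUt (eq_top_iff.2 fun x _ => h x)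
    obtain ⟨f, hf1, hf2⟩ := exists_functional U hv
    have htop : U ⊔ F ∙ v = ⊤ := by
      apply Submodule.eq_top_of_finrank_eq
      rw [Submodule.finrank_sup_span_singleton hv, hU]; omega
    set m := h (g v) - v with hm
    have e : ((h * g : V ≃ₗ[F] V) : V →ₗ[F] V) = LinearMap.transvection f m := by
      ext u
      have hu : u ∈ U ⊔ F ∙ v := by rw [htop]; trivial
      obtain ⟨y, hy, z, hz, rfl⟩ := Submodule.mem_sup.1 hu
      obtain ⟨c, rfl⟩ := Submodule.mem_span_singleton.1 hz
      simp [LinearEquiv.mul_apply, LinearMap.transvection.apply, hf y hy, hf2 y hy, hf1, hm,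
        smul_sub]
    have hd : LinearMap.det ((h * g : V ≃ₗ[F] V) : V →ₗ[F] V) = 1 := by
      have : ((h * g : V ≃ₗ[F] V) : V →ₗ[F] V) = (h : V →ₗ[F] V) ∘ₗ (g : V →ₗ[F] V) := rfl
      rw [this, LinearMap.det_comp, dh, dg, mul_one]
    rw [e, LinearMap.transvection.det] at hd
    obtain ⟨t, ht, et⟩ := hH f m (by simpa using hd)
    have : h * g = t := by
      ext u
      have := LinearMap.congr_fun e u
      simp only [LinearEquiv.coe_coe, LinearMap.transvection.apply] at this
      rw [this, et]
    rw [this]; exact ht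
  obtain ⟨h, hh, dh⟩ := hdet _ (LinearEquiv.isUnit_det' g).ne_zero
  have h5 : h⁻¹ * g ∈ H := by
    apply main
    have : ((h⁻¹ * g : V ≃ₗ[F] V) : V →ₗ[F] V) = (h.symm : V →ₗ[F] V) ∘ₗ (g : V →ₗ[F] V) := rfl
    rw [this, LinearMap.det_comp, ← dh]
    exact LinearEquiv.det_symm_mul_det h
  have := H.mul_mem hh h5
  simpa using this
end A5a
end GalLin


namespace GalLin
open Module

section A6
set_option linter.unusedSectionVars false
set_option linter.unusedVariables false

lemma line_lemma {F E : Type*} [Field F] [Field E] [Algebra F E] [FiniteDimensional F E]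
    (hp : (finrank F E).Prime) (W : Submodule F E) (hW0 : W ≠ ⊥) (hW1 : W ≠ ⊤)
    (f f2 : Dual F E) (hf : f ≠ 0)
    (h : ∀ c : E, c ≠ 0 → (∀ w ∈ W, f (c * w) = 0) → ∀ w ∈ W, f2 (c * w) = 0) :
    ∃ r : F, f2 = r • f := by
  let Φ : E →ₗ[F] Dual F E :=
    { toFun := fun y => f ∘ₗ LinearMap.mulLeft F y
      map_add' := by intro x y; ext v; simp [add_mul]
      map_smul' := by intro r x; ext v; simp }
  have hΦ : ∀ y v, Φ y v = f (y * v) := fun y v => rfl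
  have hinj : Function.Injective Φ := by
    rw [injective_iff_map_eq_zero]
    intro y hy
    by_contra hy0
    apply hf
    ext v
    have := LinearMap.congr_fun hy (y⁻¹ * v)
    rw [hΦ, mul_inv_cancel_left₀ hy0] at this
    simpa using this
  have hsur : Function.Surjective Φ :=
    (LinearMap.injective_iff_surjective_of_finrank_eq_finrank
      (by rw [Subspace.dual_finrank_eq])).1 hinj
  obtain ⟨y, hy⟩ := hsur f2
  have hy' : ∀ v, f2 v = f (y * v) := fun v => by rw [← hy]; rfl
  let C : Submodule F E :=
    { carrier := {c | ∀ w ∈ W, f (c * w) = 0}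
      add_mem' := by
        intro a b ha hb w hw
        rw [add_mul, map_add, ha w hw, hb w hw, add_zero]
      zero_mem' := by intro w _; simp
      smul_mem' := by
        intro r a ha w hw
        rw [smul_mul_assoc, map_smul, ha w hw, smul_zero] }
  have hC : ∀ c, c ∈ C ↔ ∀ w ∈ W, f (c * w) = 0 := fun c => Iff.rfl
  let S : Subalgebra F E :=
    { carrier := {y | ∀ c ∈ C, y * c ∈ C}
      mul_mem' := by
        intro a b ha hb c hc
        rw [mul_assoc]; exact ha _ (hb _ hc)
      add_mem' := by
        intro a b ha hb c hc
        rw [add_mul]; exact C.add_mem (ha c hc) (hb c hc)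
      algebraMap_mem' := by
        intro r c hc
        rw [← Algebra.smul_def]; exact C.smul_mem r hc }
  have hyS : y ∈ S := by
    intro c hc w hw
    by_cases hc0 : c = 0
    · simp [hc0]
    rw [mul_assoc, ← hy']
    exact h c hc0 hc w hw
  have := Subalgebra.isSimpleOrder_of_finrank_prime F E hp
  rcases eq_bot_or_eq_top S with hS | hS
  · rw [hS, Algebra.mem_bot] at hyS
    obtain ⟨r, rfl⟩ := hyS
    refine ⟨r, ?_⟩
    ext v
    rw [hy', ← Algebra.smul_def, map_smul]; rfl
  · exfalso
    obtain ⟨x, hx⟩ : ∃ x, x ∉ W := by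
      by_contra! h; exact hW1 (eq_top_iff.2 fun x _ => h x)
    obtain ⟨g, hg1, hg2⟩ := exists_functional W hx
    obtain ⟨c, hc⟩ := hsur g
    have hcC : c ∈ C := fun w hw => by rw [← hΦ, hc]; exact hg2 w hw
    have hc0 : c ≠ 0 := by
      rintro rfl
      rw [map_zero] at hc
      rw [← hc] at hg1; simp at hg1
    obtain ⟨w, hw, hw0⟩ := Submodule.exists_mem_ne_zero_of_ne_bot hW0
    apply hf
    ext v
    have hz : (v * w⁻¹ * c⁻¹) ∈ S := by rw [hS]; trivial
    have := hz c hcC w hw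
    have e : v * w⁻¹ * c⁻¹ * c * w = v := by field_simp
    rw [e] at this
    simpa using this

/-- contragredient action -/
def dualHom (F V : Type*) [Field F] [AddCommGroup V] [Module F V] :
    (V ≃ₗ[F] V) →* (Dual F V ≃ₗ[F] Dual F V) where
  toFun h := h.symm.dualMap
  map_one' := by ext f v; rfl
  map_mul' g h := by ext f v; rfl

lemma dualHom_apply {F V : Type*} [Field F] [AddCommGroup V] [Module F V] (h : V ≃ₗ[F] V)
    (f : Dual F V) (v : V) : dualHom F V h f v = f (h.symm v) := rfl

lemma dualHom_map_ann {F V : Type*} [Field F] [AddCommGroup V] [Module F V] (h : V ≃ₗ[F] V)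
    (W : Submodule F V) :
    (W.dualAnnihilator).map (dualHom F V h : Dual F V →ₗ[F] Dual F V) =
      (W.map (h : V →ₗ[F] V)).dualAnnihilator := by
  ext f
  rw [Submodule.mem_dualAnnihilator]
  constructor
  · rintro ⟨b, hb, rfl⟩ _ ⟨w, hw, rfl⟩
    have := (Submodule.mem_dualAnnihilator _).1 hb w hw
    simpa [dualHom_apply] using this
  · intro hf
    refine ⟨dualHom F V h⁻¹ f, ?_, ?_⟩
    · rw [SetLike.mem_coe, Submodule.mem_dualAnnihilator]
      intro w hw
      exact hf _ ⟨w, hw, rfl⟩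
    · ext v
      change f (h (h.symm v)) = f v
      simp

end A6
end GalLin


namespace GalLin
open Module

section A7
set_option linter.unusedSectionVars false
set_option linter.unusedVariables false

/-- A0: transitivity on the dual side -/
lemma A0_main {F V : Type*} [Field F] [AddCommGroup V] [Module F V] [Finite F] [Finite V]
    (W : Submodule F V) (hW0 : W ≠ ⊥)
    {I' : Type*} [Group I'] (ι : I' →* (V ≃ₗ[F] V))
    {k : Type*} [Field k] (θ : I' →* kˣ) (lam : V → k) (lam0 : lam 0 = 0)
    (laminj : ∀ w ∈ W, ∀ w' ∈ W, lam w = lam w' → w = w')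
    (hlam : ∀ g, ∀ w ∈ W, lam (ι g w) = θ g * lam w)
    (h1 : ∀ g v, ι g v - v ∈ W)
    (h3 : ∀ w ∈ W, w ≠ 0 → ∀ w' ∈ W, w' ≠ 0 → ∃ g, ι g w = w')
    (h4 : ∀ x ∉ W, ∀ w ∈ W, ∃ g, θ g = 1 ∧ ι g x = x + w) :
    (∀ g, ∀ b ∈ W.dualAnnihilator, dualHom F V (ι g) b = b) ∧
    (∀ g, θ g = 1 → ∀ w ∈ W, ι g w = w) ∧
    (∀ g, θ g = 1 → ∀ f, dualHom F V (ι g) f - f ∈ W.dualAnnihilator) ∧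
    (∀ g f, f ∉ W.dualAnnihilator → dualHom F V (ι g) f - f ∈ W.dualAnnihilator → θ g = 1) ∧
    (∀ f f', f ∉ W.dualAnnihilator → f' ∉ W.dualAnnihilator → ∃ g, dualHom F V (ι g) f = f') ∧
    (∀ f b, f ∉ W.dualAnnihilator → b ∈ W.dualAnnihilator →
      ∃ g, θ g = 1 ∧ dualHom F V (ι g) f = f + b) := by
  have : FiniteDimensional F V := Module.Finite.of_finite
  have hsymm : ∀ g, (ι g).symm = ι g⁻¹ := fun g => by rw [map_inv]; rfl
  have hD : ∀ g f v, dualHom F V (ι g) f v = f (ι g⁻¹ v) := fun g f v => by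
    rw [dualHom_apply, hsymm]
  have hWg : ∀ g, ∀ w ∈ W, ι g w ∈ W := fun g w hw => by
    simpa using W.add_mem (h1 g w) hw
  have X1 : ∀ g, ∀ b ∈ W.dualAnnihilator, dualHom F V (ι g) b = b := by
    intro g b hb
    ext v
    rw [hD, ← sub_eq_zero, ← map_sub]
    exact (Submodule.mem_dualAnnihilator _).1 hb _ (h1 g⁻¹ v)
  have fixW : ∀ g, θ g = 1 → ∀ w ∈ W, ι g w = w := by
    intro g hg w hw
    apply laminj _ (hWg g w hw) _ hw
    rw [hlam g w hw, hg]; simp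
  have X4 : ∀ g, θ g = 1 → ∀ f, dualHom F V (ι g) f - f ∈ W.dualAnnihilator := by
    intro g hg f
    rw [Submodule.mem_dualAnnihilator]
    intro w hw
    rw [LinearMap.sub_apply, hD, fixW g⁻¹ (by simp [hg]) w hw, sub_self]
  have free : ∀ g f, f ∉ W.dualAnnihilator → dualHom F V (ι g) f - f ∈ W.dualAnnihilator →
      θ g = 1 := by
    intro g f hf hgf
    by_contra hθ
    have hinj : Function.Injective (fun w : W => (⟨ι g⁻¹ w - w, h1 _ _⟩ : W)) := by
      rintro ⟨w, hw⟩ ⟨w', hw'⟩ h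
      have h : ι g⁻¹ w - w = ι g⁻¹ w' - w' := congrArg Subtype.val h
      have h2 : ι g⁻¹ (w - w') = w - w' := by
        rw [sub_eq_sub_iff_add_eq_add] at h
        rw [map_sub, sub_eq_sub_iff_add_eq_add, h, add_comm]
      have h3 := hlam g⁻¹ _ (W.sub_mem hw hw')
      rw [h2] at h3
      have h4 : lam (w - w') = 0 := by
        by_contra h0
        have h5 := mul_right_cancel₀ h0 ((one_mul _).trans h3)
        apply hθ
        have h6 : (θ g⁻¹ : kˣ) = 1 := Units.ext h5.symm
        simpa using h6
      have h5 := laminj _ (W.sub_mem hw hw') 0 W.zero_mem (h4.trans lam0.symm)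
      exact Subtype.ext (sub_eq_zero.1 h5)
    have hsur := Finite.surjective_of_injective hinj
    apply hf
    rw [Submodule.mem_dualAnnihilator]
    intro w hw
    obtain ⟨⟨u, hu⟩, e⟩ := hsur ⟨w, hw⟩
    have e : ι g⁻¹ u - u = w := congrArg Subtype.val e
    rw [← e, map_sub, ← hD]
    exact (Submodule.mem_dualAnnihilator _).1 hgf u hu
  have hann : ∀ f : Dual F V, f ∉ W.dualAnnihilator → ∃ w ∈ W, f w ≠ 0 := by
    intro f hf
    rw [Submodule.mem_dualAnnihilator] at hf
    push Not at hf; exact hf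
  have hDn : ∀ g f, f ∉ W.dualAnnihilator → dualHom F V (ι g) f ∉ W.dualAnnihilator := by
    intro g f hf h
    obtain ⟨w, hw, hfw⟩ := hann f hf
    apply hfw
    have := (Submodule.mem_dualAnnihilator _).1 h (ι g w) (hWg g w hw)
    rw [dualHom_apply] at this
    simpa using this
  have X3 : ∀ f f', f ∉ W.dualAnnihilator → f' ∉ W.dualAnnihilator →
      ∃ g, dualHom F V (ι g) f - f' ∈ W.dualAnnihilator := by
    intro f f' hf hf'
    obtain ⟨w0, hw0, hw00⟩ := Submodule.exists_mem_ne_zero_of_ne_bot hW0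
    have hc : ∀ w : {w : W // w ≠ 0}, ∃ g, ι g w0 = w.1.1 := fun w =>
      h3 w0 hw0 hw00 _ w.1.2 (fun h => w.2 (Subtype.ext h))
    choose γ hγ using hc
    have hne : ∀ f : Dual F V, f ∉ W.dualAnnihilator → f.domRestrict W ≠ 0 := by
      intro f hf h
      obtain ⟨w, hw, hfw⟩ := hann f hf
      exact hfw (LinearMap.congr_fun h ⟨w, hw⟩)
    let Ψ : {w : W // w ≠ 0} → {φ : Dual F W // φ ≠ 0} := fun w =>
      ⟨(dualHom F V (ι (γ w)) f).domRestrict W, hne _ (hDn _ _ hf)⟩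
    have hΨ : Function.Injective Ψ := by
      intro w w' h
      have h : (dualHom F V (ι (γ w)) f).domRestrict W = (dualHom F V (ι (γ w')) f).domRestrict W :=
        congrArg Subtype.val h
      have h5 := free ((γ w')⁻¹ * γ w) f hf (by
        rw [Submodule.mem_dualAnnihilator]
        intro u hu
        have h6 := LinearMap.congr_fun h ⟨ι (γ w') u, hWg _ _ hu⟩
        simp only [LinearMap.domRestrict_apply, hD] at h6
        rw [LinearMap.sub_apply, hD, mul_inv_rev, inv_inv, map_mul, LinearEquiv.mul_apply, h6,
          ← LinearEquiv.mul_apply, ← map_mul]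
        simp)
      have h7 := fixW _ h5 w0 hw0
      have h8 : ι (γ w) w0 = ι (γ w') w0 := by
        conv_rhs => rw [← h7]
        rw [← LinearEquiv.mul_apply, ← map_mul]; simp
      rw [hγ, hγ] at h8
      exact Subtype.ext (Subtype.ext h8)
    have : Finite (Dual F W) := Module.finite_of_finite F
    have hcard : Nat.card {φ : Dual F W // φ ≠ 0} = Nat.card {w : W // w ≠ 0} := by
      have e : Nat.card (Dual F W) = Nat.card W := by
        rw [Module.natCard_eq_pow_finrank (K := F), Module.natCard_eq_pow_finrank (K := F) (V := W),
          Subspace.dual_finrank_eq]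
      have e2 : ∀ (M : Type _) [AddCommGroup M] [Finite M],
          Nat.card {x : M // x ≠ 0} = Nat.card M - 1 := by
        intro M _ _
        classical
        have := Fintype.ofFinite M
        rw [Nat.card_eq_fintype_card, Nat.card_eq_fintype_card, Fintype.card_subtype_compl]
        simp
      have e3 : ∀ (M : Type _) [AddCommGroup M] [Finite M],
          Nat.card {x : M // x ≠ 0} = Nat.card M - 1 := by
        intro M _ _
        classical
        have := Fintype.ofFinite M
        rw [Nat.card_eq_fintype_card, Nat.card_eq_fintype_card, Fintype.card_subtype_compl]
        simp
      rw [e2 (Dual F W), e3 W, e]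
    have hb := hΨ.bijective_of_nat_card_le hcard.le
    obtain ⟨w, hw⟩ := hb.2 ⟨f'.domRestrict W, hne _ hf'⟩
    have hw : (dualHom F V (ι (γ w)) f).domRestrict W = f'.domRestrict W := congrArg Subtype.val hw
    refine ⟨γ w, ?_⟩
    rw [Submodule.mem_dualAnnihilator]
    intro u hu
    have := LinearMap.congr_fun hw ⟨u, hu⟩
    simp only [LinearMap.domRestrict_apply] at this
    rw [LinearMap.sub_apply, this, sub_self]
  let P : Dual F V → Dual F V → Prop := fun f b => ∃ g, θ g = 1 ∧ dualHom F V (ι g) f = f + b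
  have hPB : ∀ f b, P f b → b ∈ W.dualAnnihilator := by
    rintro f b ⟨g, hg, e⟩
    have := X4 g hg f
    rw [e] at this
    simpa using this
  have hP1 : ∀ f f' b, P f b → f' - f ∈ W.dualAnnihilator → P f' b := by
    rintro f f' b ⟨g, hg, e⟩ h
    refine ⟨g, hg, ?_⟩
    have := X1 g _ h
    rw [map_sub, e, sub_eq_iff_eq_add] at this
    rw [this]; abel
  have hP2 : ∀ f b h, P f b → P (dualHom F V (ι h) f) b := by
    rintro f b h ⟨g, hg, e⟩
    refine ⟨h * g * h⁻¹, by simp [hg], ?_⟩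
    have hb := hPB f b ⟨g, hg, e⟩
    rw [← LinearEquiv.mul_apply, ← map_mul, ← map_mul]
    simp only [inv_mul_cancel_right]
    rw [map_mul, map_mul, LinearEquiv.mul_apply, e, map_add, X1 h b hb]
  have hP3 : ∀ f f' b, f ∉ W.dualAnnihilator → f' ∉ W.dualAnnihilator → P f b → P f' b := by
    intro f f' b hf hf' hP
    obtain ⟨h, hh⟩ := X3 f f' hf hf'
    refine hP1 _ _ b (hP2 f b h hP) ?_
    rw [← neg_sub]; exact Submodule.neg_mem _ hh
  have X2 : ∀ f b, f ∉ W.dualAnnihilator → b ∈ W.dualAnnihilator → P f b := by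
    intro f b hf hb
    let A : Submodule F (Dual F V) :=
      { carrier := {b | P f b}
        zero_mem' := ⟨1, by simp, by simp⟩
        add_mem' := by
          rintro b b' ⟨g, hg, e⟩ hb'
          obtain ⟨g', hg', e'⟩ := id hb'
          refine ⟨g * g', by simp [hg, hg'], ?_⟩
          rw [map_mul, map_mul, LinearEquiv.mul_apply, e', map_add, e, X1 g b' (hPB _ _ hb')]
          abel
        smul_mem' := by
          rintro c b ⟨g, hg, e⟩
          by_cases hc : c = 0
          · subst hc; exact ⟨1, by simp, by simp⟩
          refine hP3 (c • f) f _ ?_ hf ⟨g, hg, by rw [map_smul, e, smul_add]⟩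
          intro h
          apply hf
          have := Submodule.smul_mem _ c⁻¹ h
          rwa [inv_smul_smul₀ hc] at this }
    have hco : A.dualCoannihilator ≤ W := by
      intro v hv
      by_contra hvW
      obtain ⟨w, hw, hfw⟩ := hann f hf
      obtain ⟨g, hg, e⟩ := h4 v hvW w hw
      have hA : dualHom F V (ι g⁻¹) f - f ∈ A := ⟨g⁻¹, by simp [hg], by abel⟩
      have := (Submodule.mem_dualCoannihilator _).1 hv _ hA
      rw [LinearMap.sub_apply, hD, inv_inv, e, map_add] at this
      apply hfw; simpa using this
    have h5 := Submodule.dualAnnihilator_anti hco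
    rw [Subspace.dualCoannihilator_dualAnnihilator_eq] at h5
    exact h5 hb
  refine ⟨X1, fixW, X4, free, ?_, X2⟩
  intro f f' hf hf'
  obtain ⟨h, hh⟩ := X3 f f' hf hf'
  obtain ⟨g, -, e⟩ := X2 (dualHom F V (ι h) f) (f' - dualHom F V (ι h) f) (hDn h f hf) (by
    rw [← neg_sub]; exact Submodule.neg_mem _ hh)
  refine ⟨g * h, ?_⟩
  rw [map_mul, map_mul, LinearEquiv.mul_apply, e]; abel

/-- Theorem A. -/
theorem theoremA {F E : Type*} [Field F] [Field E] [Algebra F E] [Finite F] [Finite E]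
    (hp : (finrank F E).Prime) (hodd : Odd (finrank F E))
    (H : Subgroup (E ≃ₗ[F] E)) (hS : ∀ c : E, c ≠ 0 → ∃ h ∈ H, ∀ v, h v = c * v)
    (W : Submodule F E) (hW0 : W ≠ ⊥) (hW1 : W ≠ ⊤)
    {I' : Type*} [Group I'] (ι : I' →* (E ≃ₗ[F] E)) (hι : ∀ g, ι g ∈ H)
    {k : Type*} [Field k] (θ : I' →* kˣ) (lam : E → k) (lam0 : lam 0 = 0)
    (laminj : ∀ w ∈ W, ∀ w' ∈ W, lam w = lam w' → w = w')
    (hlam : ∀ g, ∀ w ∈ W, lam (ι g w) = θ g * lam w)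
    (h1 : ∀ g v, ι g v - v ∈ W)
    (h3 : ∀ w ∈ W, w ≠ 0 → ∀ w' ∈ W, w' ≠ 0 → ∃ g, ι g w = w')
    (h4 : ∀ x ∉ W, ∀ w ∈ W, ∃ g, θ g = 1 ∧ ι g x = x + w) : H = ⊤ := by
  have : FiniteDimensional F E := Module.Finite.of_finite
  have : Finite (Dual F E) := Module.finite_of_finite F
  obtain ⟨X1, fixW, X4, free, tr, X2⟩ := A0_main W hW0 ι θ lam lam0 laminj hlam h1 h3 h4
  set Hd := H.map (dualHom F E) with hHd
  have hB0 : W.dualAnnihilator ≠ ⊤ := by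
    intro h
    obtain ⟨w, hw, hw0⟩ := Submodule.exists_mem_ne_zero_of_ne_bot hW0
    obtain ⟨f, hf, -⟩ := exists_functional (⊥ : Submodule F E) (x := w) (by simpa using hw0)
    have h2 : f ∈ W.dualAnnihilator := by rw [h]; trivial
    have := (Submodule.mem_dualAnnihilator _).1 h2 w hw
    rw [hf] at this; simp at this
  have hιd : ∀ g, (dualHom F E).comp ι g ∈ Hd := fun g => ⟨_, hι g, rfl⟩
  have hB0J : IsJ Hd W.dualAnnihilator := fun x y hx hy => by
    obtain ⟨g, hg⟩ := tr x y hx hy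
    exact ⟨_, hιd g, X1 g, hg⟩
  have hline : ∀ f : Dual F E, f ≠ 0 → IsJ Hd (F ∙ f) := by
    intro f hf
    have : F ∙ f = clJ Hd (F ∙ f) := by
      apply le_antisymm (le_clJ _)
      intro f2 hf2
      obtain ⟨r, hr⟩ := line_lemma hp W hW0 hW1 f f2 hf (by
        intro c hc hcf
        obtain ⟨h, hh, e⟩ := hS c hc
        have hJ : IsJ Hd (W.map (h : E →ₗ[F] E)).dualAnnihilator := by
          rw [← dualHom_map_ann]
          exact hB0J.map ⟨h, hh, rfl⟩
        have hm : f2 ∈ (W.map (h : E →ₗ[F] E)).dualAnnihilator := by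
          refine clJ_le hJ ?_ hf2
          rw [Submodule.span_singleton_le_iff_mem, Submodule.mem_dualAnnihilator]
          rintro _ ⟨w, hw, rfl⟩
          simpa [e] using hcf w hw
        intro w hw
        rw [← e]
        exact (Submodule.mem_dualAnnihilator _).1 hm _ ⟨w, hw, rfl⟩)
      rw [hr]; exact Submodule.smul_mem _ _ (Submodule.mem_span_singleton_self f)
    rw [this]; exact clJ_isJ _
  have hdd : finrank F (Dual F E) = finrank F E := Subspace.dual_finrank_eq
  have hbot : IsJ Hd (⊥ : Submodule F (Dual F E)) := by
    obtain ⟨f, hf⟩ : ∃ f : Dual F E, f ≠ 0 := by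
      have : Nontrivial (Dual F E) := by
        apply Module.nontrivial_of_finrank_pos (R := F); rw [hdd]; exact hp.pos
      exact exists_ne 0
    obtain ⟨g, hg⟩ : ∃ g, g ∉ F ∙ f := by
      by_contra! h
      have h2 : F ∙ f = ⊤ := eq_top_iff.2 fun x _ => h x
      have := finrank_span_singleton (K := F) hf
      rw [h2, finrank_top, hdd] at this
      rw [this] at hp; exact Nat.not_prime_one hp
    have hg0 : g ≠ 0 := by rintro rfl; exact hg (Submodule.zero_mem _)
    have := (hline f hf).inf (hline g hg0)
    have e : (F ∙ f) ⊓ (F ∙ g) = ⊥ := by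
      rw [eq_bot_iff]
      rintro x ⟨hx1, hx2⟩
      obtain ⟨c, rfl⟩ := Submodule.mem_span_singleton.1 hx2
      by_cases hc : c = 0
      · simp [hc]
      · exfalso; apply hg
        have := Submodule.smul_mem _ c⁻¹ hx1
        rwa [inv_smul_smul₀ hc] at this
    rwa [e] at this
  have htrd := A3_main (H := Hd) W.dualAnnihilator hB0 ((dualHom F E).comp ι) hιd θ X1 X4 free tr
    hbot hline
  have htr : ∀ K' : Submodule F E, finrank F K' = finrank F W →
      ∃ h ∈ H, W.map (h : E →ₗ[F] E) = K' := by
    intro K' hK'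
    obtain ⟨_, ⟨h, hh, rfl⟩, e⟩ := htrd W.dualAnnihilator K'.dualAnnihilator rfl (by
      have a1 := Subspace.finrank_add_finrank_dualAnnihilator_eq W
      have a2 := Subspace.finrank_add_finrank_dualAnnihilator_eq K'
      omega)
    rw [dualHom_map_ann] at e
    exact ⟨h, hh, Subspace.dualAnnihilator_inj.1 e⟩
  have mkO : ∀ g, θ g = 1 → InO H W ((ι g : E →ₗ[F] E) - LinearMap.id) := by
    intro g hg
    refine ⟨⟨ι g, hι g, fun v => by simp⟩, fun v hv => by simp [fixW g hg v hv], fun v => ?_⟩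
    simpa using h1 g v
  have hann : ∀ f : Dual F E, (∃ v ∈ W, f v ≠ 0) → f ∉ W.dualAnnihilator := by
    rintro f ⟨v, hv, hfv⟩ h
    exact hfv ((Submodule.mem_dualAnnihilator _).1 h v hv)
  obtain ⟨f0, m0, hf0, hm0, hfm0, h0, hh0, e0⟩ := A4_main (H := H) (K := W) hW0 hW1
    (by intro h; rw [← h] at hodd; exact (Nat.not_odd_iff_even.2 (even_two_mul _)) hodd)
    (by
      intro x hx w hw
      obtain ⟨g, hg, e⟩ := h4 x hx w hw
      exact ⟨_, mkO g hg, by simp [e]⟩)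
    (by
      intro f hf b hb
      obtain ⟨g, hg, e⟩ := X2 f b (hann f hf) ((Submodule.mem_dualAnnihilator _).2 hb)
      refine ⟨_, mkO g⁻¹ (by simp [hg]), fun v => ?_⟩
      have := LinearMap.congr_fun e v
      have hs : (ι g).symm = ι g⁻¹ := by rw [map_inv]; rfl
      rw [dualHom_apply, hs] at this
      simp [this, -map_inv])
    htr
  -- T_f
  have conjI : ∀ c : E, c ≠ 0 → ∀ g, ∃ h ∈ H, ∀ v, h v = c * ι g (c⁻¹ * v) := by
    intro c hc g
    obtain ⟨h, hh, e⟩ := hS c hc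
    obtain ⟨h', hh', e'⟩ := hS c⁻¹ (inv_ne_zero hc)
    exact ⟨h * ι g * h', H.mul_mem (H.mul_mem hh (hι g)) hh', fun v => by
      simp [LinearEquiv.mul_apply, e, e']⟩
  let T : AddSubgroup E :=
    { carrier := {m | f0 m = 0 ∧ ∃ h ∈ H, ∀ v, h v = v + f0 v • m}
      zero_mem' := ⟨by simp, 1, H.one_mem, by simp⟩
      add_mem' := by
        rintro m m' ⟨hm, h, hh, e⟩ ⟨hm', h', hh', e'⟩
        refine ⟨by simp [hm, hm'], h * h', H.mul_mem hh hh', fun v => ?_⟩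
        rw [LinearEquiv.mul_apply, e', e]
        simp [hm']; abel
      neg_mem' := by
        rintro m ⟨hm, h, hh, e⟩
        refine ⟨by simp [hm], h⁻¹, H.inv_mem hh, fun v => ?_⟩
        apply h.injective
        have : h ((h⁻¹ : E ≃ₗ[F] E) v) = v := h.apply_symm_apply v
        rw [this, e]; simp [hm] }
  have hTconj : ∀ m ∈ T, ∀ g ∈ H, (∀ v, f0 (g v) = f0 v) → g m ∈ T := by
    rintro m ⟨hm, h, hh, e⟩ g hg hfg
    refine ⟨by rw [hfg, hm], g * h * g⁻¹, H.mul_mem (H.mul_mem hg hh) (H.inv_mem hg), fun v => ?_⟩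
    change g (h (g.symm v)) = _
    rw [e, map_add, map_smul]
    have := hfg (g.symm v)
    rw [← this]; simp
  have hm0T : m0 ∈ T := ⟨hfm0, h0, hh0, e0⟩
  have hcW : ∀ c : E, c ≠ 0 → (∀ w ∈ W, f0 (c * w) = 0) → ∀ w ∈ W, c * w ∈ T := by
    intro c hc hcf w hw
    have hfix : ∀ g, ∀ v, f0 (c * ι g (c⁻¹ * v)) = f0 v := by
      intro g v
      have h5 := hcf _ (h1 g (c⁻¹ * v))
      rw [mul_sub, mul_inv_cancel_left₀ hc, map_sub, sub_eq_zero] at h5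
      exact h5
    by_cases hmc : c⁻¹ * m0 ∈ W
    · by_cases hw0 : w = 0
      · subst hw0; simp
      obtain ⟨g, hg⟩ := h3 _ hmc (mul_ne_zero (inv_ne_zero hc) hm0) w hw hw0
      obtain ⟨h, hh, e⟩ := conjI c hc g
      have := hTconj m0 hm0T h hh (fun v => by rw [e]; exact hfix g v)
      rwa [e, hg] at this
    · obtain ⟨g, -, hg⟩ := h4 _ hmc w hw
      obtain ⟨h, hh, e⟩ := conjI c hc g
      have := hTconj m0 hm0T h hh (fun v => by rw [e]; exact hfix g v)
      rw [e, hg, mul_add, mul_inv_cancel_left₀ hc] at this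
      simpa using T.sub_mem this hm0T
  -- ker f0 ≤ T
  have hker : ∀ m, f0 m = 0 → m ∈ T := by
    let S : Submodule F E := Submodule.span F {x | ∃ c : E, c ≠ 0 ∧ (∀ w ∈ W, f0 (c * w) = 0) ∧
      ∃ w ∈ W, x = c * w}
    have hST : ∀ m ∈ S, m ∈ T := by
      intro m hm
      induction hm using Submodule.closure_induction with
      | zero => exact T.zero_mem
      | add x y _ _ hx hy => exact T.add_mem hx hy
      | smul_mem r x hx =>
        obtain ⟨c, hc, hcf, w, hw, rfl⟩ := hx
        rw [← mul_smul_comm]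
        exact hcW c hc hcf _ (W.smul_mem r hw)
    intro m hm
    apply hST
    by_contra hmS
    obtain ⟨f2, hf2, hf2S⟩ := exists_functional S hmS
    obtain ⟨r, hr⟩ := line_lemma hp W hW0 hW1 f0 f2 hf0 (fun c hc hcf w hw =>
      hf2S _ (Submodule.subset_span ⟨c, hc, hcf, w, hw, rfl⟩))
    rw [hr, LinearMap.smul_apply, hm] at hf2
    simp at hf2
  apply all_transvections
  · intro f m hfm
    by_cases hf : f = 0
    · subst hf; exact ⟨1, H.one_mem, by simp⟩
    -- f = f0 ∘ c
    obtain ⟨c, hc, hcf⟩ : ∃ c : E, c ≠ 0 ∧ ∀ v, f v = f0 (c * v) := by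
      let Φ : E →ₗ[F] Dual F E :=
        { toFun := fun y => f0 ∘ₗ LinearMap.mulLeft F y
          map_add' := by intro x y; ext v; simp [add_mul]
          map_smul' := by intro r x; ext v; simp }
      have hinj : Function.Injective Φ := by
        rw [injective_iff_map_eq_zero]
        intro y hy
        by_contra hy0
        apply hf0
        ext v
        have : f0 (y * (y⁻¹ * v)) = 0 := LinearMap.congr_fun hy (y⁻¹ * v)
        rw [mul_inv_cancel_left₀ hy0] at this
        simpa using this
      have hsur : Function.Surjective Φ :=
        (LinearMap.injective_iff_surjective_of_finrank_eq_finrank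
          (by rw [Subspace.dual_finrank_eq])).1 hinj
      obtain ⟨c, hc⟩ := hsur f
      refine ⟨c, ?_, fun v => by rw [← hc]; rfl⟩
      rintro rfl
      rw [map_zero] at hc; exact hf hc.symm
    obtain ⟨-, h, hh, e⟩ := hker (c * m) (by rw [← hcf, hfm])
    obtain ⟨s, hs, es⟩ := hS c hc
    refine ⟨s⁻¹ * h * s, H.mul_mem (H.mul_mem (H.inv_mem hs) hh) hs, fun v => ?_⟩
    apply s.injective
    change s (s.symm (h (s v))) = _
    rw [s.apply_symm_apply, e, es, es, hcf, mul_add, mul_smul_comm]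
  · intro c hc
    obtain ⟨x, hx⟩ := FiniteField.norm_surjective F E c
    have hx0 : x ≠ 0 := by rintro rfl; simp at hx; exact hc hx.symm
    obtain ⟨h, hh, e⟩ := hS x hx0
    refine ⟨h, hh, ?_⟩
    rw [← hx, Algebra.norm_apply]
    congr 1
    ext v; simp [e]

end A7
end GalLin


section
open Polynomial
namespace GalLin
/-- The linearized polynomial with coefficients `c`. -/
noncomputable def linP {A : Type*} [CommRing A] (q n : ℕ) (c : ℕ → A) : A[X] :=
  ∑ i ∈ Finset.range (n+1), C (c i) * X ^ (q^i)

section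
variable {A B : Type*} [CommRing A] [CommRing B] (q n : ℕ) (c : ℕ → A)

lemma linP_eval (x : A) : (linP q n c).eval x = ∑ i ∈ Finset.range (n+1), c i * x ^ (q^i) := by
  simp [linP, eval_finsetSum]

lemma linP_map (φ : A →+* B) : (linP q n c).map φ = linP q n (fun i => φ (c i)) := by
  simp [linP, Polynomial.map_sum]

lemma linP_eval₂ (φ : A →+* B) (x : B) :
    (linP q n c).eval₂ φ x = ∑ i ∈ Finset.range (n+1), φ (c i) * x ^ (q^i) := by
  rw [← eval_map, linP_map, linP_eval]

lemma linP_derivative (hq : (q : A) = 0) : derivative (linP q n c) = C (c 0) := by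
  rw [linP, Finset.sum_range_succ']
  simp only [derivative_add, derivative_sum, derivative_C_mul, derivative_X_pow]
  have : ∀ i, ((q^(i+1) : ℕ) : A) = 0 := by intro i; push_cast; rw [hq]; simp
  simp only [this]; simp

lemma linP_degree_lt (hq : 1 < q) (n : ℕ) :
    (∑ i ∈ Finset.range n, C (c i) * X ^ (q^i)).degree < ((q^n : ℕ) : WithBot ℕ) := by
  rw [← mem_degreeLT]
  refine Submodule.sum_mem _ fun i hi => ?_
  rw [mem_degreeLT]
  refine (degree_C_mul_X_pow_le _ _).trans_lt ?_
  exact_mod_cast Nat.pow_lt_pow_right hq (Finset.mem_range.1 hi)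

lemma linP_monic (hq : 1 < q) (hc : c n = 1) : (linP q n c).Monic := by
  rw [linP, Finset.sum_range_succ, hc, C_1, one_mul, add_comm]
  exact monic_X_pow_add (linP_degree_lt q c hq n)

lemma linP_natDegree [Nontrivial A] (hq : 1 < q) (hc : c n ≠ 0) : (linP q n c).natDegree = q^n := by
  rw [linP, Finset.sum_range_succ, add_comm]
  have h : (C (c n) * X ^ (q^n)).degree = ((q^n : ℕ) : WithBot ℕ) := degree_C_mul_X_pow _ hc
  have := linP_degree_lt q c hq n
  rw [← h] at this
  exact natDegree_eq_of_degree_eq_some ((degree_add_eq_left_of_degree_lt this).trans h)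
end

section PS
variable {k : Type*} [Field k]

lemma ps_unit (y : PowerSeries k) (h : PowerSeries.constantCoeff y ≠ 0) : IsUnit y :=
  PowerSeries.isUnit_iff_constantCoeff.2 (isUnit_iff_ne_zero.2 h)

lemma ps_hensel (g : (PowerSeries k)[X]) (hg : g.Monic) (c : k)
    (h0 : (g.map PowerSeries.constantCoeff).eval c = 0)
    (h1 : (derivative (g.map PowerSeries.constantCoeff)).eval c ≠ 0) :
    ∃ y : PowerSeries k, g.eval y = 0 ∧ PowerSeries.constantCoeff y = c := by
  have key : ∀ p : (PowerSeries k)[X], PowerSeries.constantCoeff (p.eval (PowerSeries.C c)) =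
      (p.map PowerSeries.constantCoeff).eval c := by
    intro p
    have := (Polynomial.eval₂_hom (p := p) PowerSeries.constantCoeff (PowerSeries.C c)).symm
    rw [this, eval_map]; simp
  have := HenselianRing.is_henselian (I := Ideal.span {(PowerSeries.X : PowerSeries k)}) g hg (PowerSeries.C c)
    (by rw [Ideal.mem_span_singleton, PowerSeries.X_dvd_iff, key, h0])
    (by apply IsUnit.map; apply ps_unit; rw [key, ← derivative_map]; exact h1)
  obtain ⟨a, ha, ha2⟩ := this
  refine ⟨a, ha, ?_⟩
  rw [Ideal.mem_span_singleton, PowerSeries.X_dvd_iff, map_sub] at ha2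
  simpa [sub_eq_zero] using ha2

lemma ps_eval_sub (g : (PowerSeries k)[X]) (y y' : PowerSeries k)
    (h : PowerSeries.constantCoeff y = PowerSeries.constantCoeff y')
    (h1 : (derivative (g.map PowerSeries.constantCoeff)).eval (PowerSeries.constantCoeff y) ≠ 0) :
    ∃ v : PowerSeries k, IsUnit v ∧ g.eval y' - g.eval y = (y' - y) * v := by
  obtain ⟨κ, hκ⟩ := g.binomExpansion y (y' - y)
  refine ⟨(derivative g).eval y + κ * (y' - y), ?_, ?_⟩
  · apply ps_unit
    have : PowerSeries.constantCoeff ((derivative g).eval y) = (derivative (g.map PowerSeries.constantCoeff)).eval (PowerSeries.constantCoeff y) := by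
      rw [derivative_map, eval_map, eval₂_hom]
    rw [map_add, this, map_mul, map_sub, h, sub_self, mul_zero, add_zero, ← h]
    exact h1
  · rw [add_sub_cancel] at hκ
    rw [hκ]; ring

lemma ps_unique (g : (PowerSeries k)[X]) (y y' : PowerSeries k)
    (h : PowerSeries.constantCoeff y = PowerSeries.constantCoeff y')
    (h1 : (derivative (g.map PowerSeries.constantCoeff)).eval (PowerSeries.constantCoeff y) ≠ 0)
    (hy : g.eval y = 0) (hy' : g.eval y' = 0) : y' = y := by
  obtain ⟨v, hv, h2⟩ := ps_eval_sub g y y' h h1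
  rw [hy, hy', sub_zero] at h2
  have := (mul_eq_zero.1 h2.symm).resolve_right hv.ne_zero
  exact sub_eq_zero.1 this

lemma ps_split [IsAlgClosed k] {Ω : Type*} [Field Ω] (φ : PowerSeries k →+* Ω) (hφ : Function.Injective φ)
    (g : (PowerSeries k)[X]) (hg : g.Monic) (hs : (g.map PowerSeries.constantCoeff).Separable)
    (x : Ω) (hx : g.eval₂ φ x = 0) : ∃ y, φ y = x ∧ g.eval y = 0 := by
  classical
  set gb := g.map PowerSeries.constantCoeff with hgb
  have hd : ∀ c : k, gb.eval c = 0 → (derivative gb).eval c ≠ 0 := by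
    intro c hc h
    exact hs.eval₂_derivative_ne_zero (RingHom.id k) (x := c) (by simpa using hc) (by simpa using h)
  have hgb0 : gb ≠ 0 := (hg.map _).ne_zero
  choose! r hr1 hr2 using fun c (hc : gb.eval c = 0) => ps_hensel g hg c hc (hd c hc)
  set S := gb.roots.toFinset.image (fun c => φ (r c)) with hS
  have hmem : ∀ c ∈ gb.roots.toFinset, gb.eval c = 0 := by
    intro c hc; simpa [hgb0] using hc
  have hcard : S.card = g.natDegree := by
    rw [hS, Finset.card_image_of_injOn, Multiset.toFinset_card_of_nodup (nodup_roots hs),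
      IsAlgClosed.card_roots_eq_natDegree, hgb, hg.natDegree_map]
    intro c hc c' hc' h
    have := congrArg PowerSeries.constantCoeff (hφ h)
    rwa [hr2 c (hmem c hc), hr2 c' (hmem c' hc')] at this
  have hgm : (g.map φ) ≠ 0 := (hg.map φ).ne_zero
  have hsub : S ⊆ (g.map φ).roots.toFinset := by
    intro y hy
    rw [hS, Finset.mem_image] at hy
    obtain ⟨c, hc, rfl⟩ := hy
    simp [hgm, eval_map, hr1 c (hmem c hc)]
  have heq : S = (g.map φ).roots.toFinset := by
    apply Finset.eq_of_subset_of_card_le hsub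
    rw [hcard]
    exact (Multiset.toFinset_card_le _).trans ((card_roots' _).trans (natDegree_map_le))
  have : x ∈ S := by rw [heq]; simp [hgm, eval_map, hx]
  rw [hS, Finset.mem_image] at this
  obtain ⟨c, hc, rfl⟩ := this
  exact ⟨_, rfl, hr1 c (hmem c hc)⟩
end PS
end GalLin

end

section
open Polynomial
namespace GalLin
section
variable {A : Type*} [CommRing A] [IsDomain A]

/-- The monic polynomial whose roots are the elements of `S`. -/
noncomputable def prodS (S : Finset A) : A[X] := ∏ w ∈ S, (X - C w)

lemma prodS_monic (S : Finset A) : (prodS S).Monic := monic_prod_of_monic _ _ fun _ _ => monic_X_sub_C _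

lemma prodS_natDegree (S : Finset A) : (prodS S).natDegree = S.card := by
  rw [prodS, natDegree_prod_of_monic _ _ fun _ _ => monic_X_sub_C _]; simp

lemma prodS_eval (S : Finset A) (x : A) : (prodS S).eval x = ∏ w ∈ S, (x - w) := by
  simp [prodS, eval_prod]

lemma prodS_eval₂ {B : Type*} [CommRing B] (φ : A →+* B) (S : Finset A) (x : B) :
    (prodS S).eval₂ φ x = ∏ w ∈ S, (x - φ w) := by
  rw [← eval_map]; simp [prodS, eval_prod, Polynomial.map_prod]

lemma prodS_eval_eq_zero (S : Finset A) (x : A) : (prodS S).eval x = 0 ↔ x ∈ S := by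
  rw [prodS_eval, Finset.prod_eq_zero_iff]
  constructor
  · rintro ⟨w, hw, h⟩; rwa [sub_eq_zero.1 h]
  · intro h; exact ⟨x, h, sub_self x⟩

lemma prodS_invariant (S : Finset A) (hadd : ∀ a ∈ S, ∀ b ∈ S, a + b ∈ S) (hneg : ∀ a ∈ S, -a ∈ S)
    (w : A) (hw : w ∈ S) : (prodS S).comp (X + C w) = prodS S := by
  unfold prodS
  rw [Polynomial.prod_comp]
  refine Finset.prod_equiv (Equiv.subRight w) ?_ ?_
  · intro i
    simp only [Equiv.subRight_apply]
    constructor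
    · intro hi; rw [sub_eq_add_neg]; exact hadd _ hi _ (hneg _ hw)
    · intro hi; simpa using hadd _ hi _ hw
  · intro i hi
    simp; ring

lemma eq_of_vanish (P : A[X]) (S : Finset A) (hd : P.degree < (S.card : ℕ)) (h : ∀ w ∈ S, P.eval w = 0) : P = 0 :=
  Polynomial.eq_zero_of_degree_lt_of_eval_finset_eq_zero S hd h

lemma prodS_comp_sub (S : Finset A) (hadd : ∀ a ∈ S, ∀ b ∈ S, a + b ∈ S) (hneg : ∀ a ∈ S, -a ∈ S)
    (h0 : 0 ∈ S) (a : A) : (prodS S).comp (X - C a) = prodS S - C ((prodS S).eval a) := by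
  classical
  have hS : 0 < S.card := Finset.card_pos.2 ⟨0, h0⟩
  have key : (prodS S).comp (X - C a) - (prodS S - C ((prodS S).eval a)) = 0 := by
    apply eq_of_vanish _ (S.image (a + ·))
    · rw [Finset.card_image_of_injective _ (add_right_injective a)]
      have hm1 : ((prodS S).comp (X - C a)).Monic := (prodS_monic S).comp_X_sub_C a
      have hd1 : ((prodS S).comp (X - C a)).degree = (S.card : WithBot ℕ) := by
        rw [degree_eq_natDegree hm1.ne_zero, natDegree_comp, natDegree_X_sub_C, mul_one, prodS_natDegree]
      have hlt : (C ((prodS S).eval a)).degree < (prodS S).degree := by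
        refine degree_C_le.trans_lt ?_
        rw [degree_eq_natDegree (prodS_monic S).ne_zero, prodS_natDegree]
        exact_mod_cast hS
      have hd2 : (prodS S - C ((prodS S).eval a)).degree = (S.card : WithBot ℕ) := by
        rw [degree_sub_eq_left_of_degree_lt hlt, degree_eq_natDegree (prodS_monic S).ne_zero, prodS_natDegree]
      have hm2 : (prodS S - C ((prodS S).eval a)).Monic := (prodS_monic S).sub_of_left hlt
      rw [← hd1]
      apply degree_sub_lt (hd1.trans hd2.symm) hm1.ne_zero
      rw [hm1.leadingCoeff, hm2.leadingCoeff]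
    · intro w hw
      obtain ⟨v, hv, rfl⟩ := Finset.mem_image.1 hw
      have h1 : (prodS S).eval (a + v) = (prodS S).eval a := by
        conv_rhs => rw [← prodS_invariant S hadd hneg v hv]
        simp
      have h2 := (prodS_eval_eq_zero S v).2 hv
      simp [h1, h2]
  exact sub_eq_zero.1 key

lemma prodS_comp (S : Finset A) (hadd : ∀ a ∈ S, ∀ b ∈ S, a + b ∈ S) (hneg : ∀ a ∈ S, -a ∈ S)
    (h0 : 0 ∈ S) (n : ℕ) : ∀ (P : A[X]) (_ : P.natDegree < n) (_ : ∀ w ∈ S, P.comp (X + C w) = P),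
      ∃ Q : A[X], P = Q.comp (prodS S) := by
  have hS : 0 < S.card := Finset.card_pos.2 ⟨0, h0⟩
  induction n with
  | zero => intro P hP; omega
  | succ n ih =>
    intro P hP hinv
    by_cases hz : P - C (P.eval 0) = 0
    · exact ⟨C (P.eval 0), by rw [C_comp]; exact sub_eq_zero.1 hz⟩
    have hdvd : prodS S ∣ P - C (P.eval 0) := by
      have := (Multiset.prod_X_sub_C_dvd_iff_le_roots hz S.val).2 (by
        rw [Multiset.le_iff_subset S.nodup]
        intro w hw
        rw [mem_roots hz, IsRoot.def]
        have : P.eval w = P.eval 0 := by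
          conv_rhs => rw [← hinv w hw]
          simp
        simp [this])
      exact this
    obtain ⟨Q, hQ⟩ := hdvd
    have hQ0 : Q ≠ 0 := by rintro rfl; rw [mul_zero] at hQ; exact hz hQ
    have hQinv : ∀ w ∈ S, Q.comp (X + C w) = Q := by
      intro w hw
      have := congrArg (fun p => p.comp (X + C w)) hQ
      simp only [sub_comp, C_comp, mul_comp, hinv w hw, prodS_invariant S hadd hneg w hw] at this
      rw [hQ] at this
      exact (mul_left_cancel₀ (prodS_monic S).ne_zero this).symm
    have hdeg : Q.natDegree < n := by
      have := congrArg natDegree hQ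
      rw [natDegree_sub_C, (prodS_monic S).natDegree_mul' hQ0, prodS_natDegree] at this
      omega
    obtain ⟨Q', hQ'⟩ := ih Q hdeg hQinv
    refine ⟨C (P.eval 0) + X * Q', ?_⟩
    rw [add_comp, C_comp, mul_comp, X_comp, ← hQ', ← hQ]; ring
end
end GalLin

end

section
open Polynomial
namespace GalLin
section rev
variable {A : Type*} [CommRing A]

/-- Reversed linearized polynomial. -/
noncomputable def revP (q n : ℕ) (c : ℕ → A) : A[X] :=
  X ^ (q^n - 1) + ∑ i ∈ Finset.range n, C (c (i+1)) * X ^ (q^n - q^(i+1))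

lemma revP_monic (q n : ℕ) (hq : 1 < q) (c : ℕ → A) : (revP q n c).Monic := by
  apply monic_X_pow_add
  rw [← mem_degreeLT]
  refine Submodule.sum_mem _ fun i hi => ?_
  rw [mem_degreeLT]
  refine (degree_C_mul_X_pow_le _ _).trans_lt ?_
  have h1 : q^(i+1) ≤ q^n := Nat.pow_le_pow_right (by omega) (Finset.mem_range.1 hi)
  have h2 : 1 < q^(i+1) := Nat.one_lt_pow (by omega) hq
  exact_mod_cast (by omega : q^n - q^(i+1) < q^n - 1)

lemma revP_map {B : Type*} [CommRing B] (φ : A →+* B) (q n : ℕ) (c : ℕ → A) :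
    (revP q n c).map φ = revP q n (fun i => φ (c i)) := by
  simp [revP, Polynomial.map_sum]

lemma revP_eval (q n : ℕ) (hq : 1 < q) (c : ℕ → A) (hc : c 0 = 1) (z u : A) (huz : u * z = 1) :
    (linP q n c).eval z = z^(q^n) * (revP q n c).eval u := by
  have key : ∀ j ≤ q^n, z^(q^n) * u^(q^n - j) = z^j := by
    intro j hj
    obtain ⟨l, hl⟩ := Nat.exists_eq_add_of_le hj
    rw [hl, Nat.add_sub_cancel_left, pow_add, mul_assoc, ← mul_pow, mul_comm z u, huz, one_pow, mul_one]
  rw [linP_eval, Finset.sum_range_succ', revP, eval_add, mul_add]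
  simp only [eval_pow, eval_X, eval_finsetSum, eval_mul, eval_C, hc, Finset.mul_sum]
  rw [key 1 (Nat.one_le_pow _ _ (by omega)), add_comm]
  simp only [pow_zero, pow_one, one_mul]
  congr 1
  refine Finset.sum_congr rfl fun i hi => ?_
  rw [mul_left_comm, key _ (Nat.pow_le_pow_right (by omega) (Finset.mem_range.1 hi))]

lemma revP_derivative (q n : ℕ) (hq : 1 < q) (hn : 0 < n) (hqA : (q : A) = 0) (c : ℕ → A) :
    derivative (revP q n c) = - X ^ (q^n - 2) := by
  have h0 : ∀ i, ((q^(i+1) : ℕ) : A) = 0 := by intro i; push_cast; rw [hqA]; simp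
  have hn' : ((q^n : ℕ) : A) = 0 := by
    obtain ⟨m, rfl⟩ := Nat.exists_eq_succ_of_ne_zero hn.ne'
    exact h0 m
  have h1 : ∀ i ∈ Finset.range n, ((q^n - q^(i+1) : ℕ) : A) = 0 := by
    intro i hi
    rw [Nat.cast_sub (Nat.pow_le_pow_right (by omega) (Finset.mem_range.1 hi)), hn', h0, sub_zero]
  have h2 : ((q^n - 1 : ℕ) : A) = -1 := by
    rw [Nat.cast_sub (Nat.one_le_pow _ _ (by omega)), hn']; simp
  rw [revP, derivative_add, derivative_sum, derivative_X_pow, h2, Finset.sum_eq_zero, Nat.sub_sub]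
  · simp
  · intro i hi
    rw [derivative_C_mul, derivative_X_pow, h1 i hi]; simp
end rev

lemma linP_eval_add {A : Type*} [CommRing A] [CharP A 2] (q e n : ℕ) (hq : q = 2^e) (c : ℕ → A) (x y : A) :
    (linP q n c).eval (x+y) = (linP q n c).eval x + (linP q n c).eval y := by
  have : Fact (Nat.Prime 2) := ⟨Nat.prime_two⟩
  simp only [linP_eval, ← Finset.sum_add_distrib, ← mul_add]
  refine Finset.sum_congr rfl fun i _ => ?_
  rw [hq, ← pow_mul, add_pow_char_pow]

lemma linP_eval_zero {A : Type*} [CommRing A] (q n : ℕ) (hq : 1 < q) (c : ℕ → A) :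
    (linP q n c).eval 0 = 0 := by
  rw [linP_eval]
  exact Finset.sum_eq_zero fun i _ => by rw [zero_pow (by positivity), mul_zero]

/-- Data for the local analysis at `t = 0`. -/
structure LocData (k : Type*) [Field k] where
  q : ℕ
  e : ℕ
  n : ℕ
  d : ℕ
  hqe : q = 2^e
  he : 0 < e
  hd : 0 < d
  hdn : d < n
  a : ℕ → k
  han : a n = 1
  had : a d ≠ 0
  hlow : ∀ i, 0 < i → i < d → a i = 0

namespace LocData
variable {k : Type*} [Field k] (D : LocData k)

lemma hq : 1 < D.q := by rw [D.hqe]; exact Nat.one_lt_two_pow D.he.ne'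

/-- coefficients of `L + s^(q^d-1) x` -/
noncomputable def c0 (i : ℕ) : PowerSeries k :=
  if i = 0 then PowerSeries.X ^ (D.q^D.d - 1) else PowerSeries.C (D.a i)
/-- coefficients of the rescaled polynomial -/
noncomputable def cW (i : ℕ) : PowerSeries k :=
  if i = 0 then 1 else PowerSeries.C (D.a i) * PowerSeries.X ^ (D.q^i - D.q^D.d)
/-- the polynomial -/
noncomputable def f0 : (PowerSeries k)[X] := linP D.q D.n D.c0
/-- the rescaled polynomial -/
noncomputable def fW : (PowerSeries k)[X] := linP D.q D.n D.cW

lemma q_zero (A : Type*) [CommRing A] [CharP A 2] : (D.q : A) = 0 := by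
  rw [D.hqe]; push_cast
  have : (2 : A) = 0 := by exact_mod_cast CharP.cast_eq_zero A 2
  rw [this, zero_pow D.he.ne']

lemma c0n : D.c0 D.n = 1 := by
  have := D.hdn; have := D.hd
  simp [c0, D.han]; omega

lemma f0_monic : D.f0.Monic := linP_monic _ _ _ D.hq D.c0n

lemma f0_mul (z : PowerSeries k) :
    D.f0.eval (PowerSeries.X * z) = PowerSeries.X ^ (D.q^D.d) * D.fW.eval z := by
  rw [f0, fW, linP_eval, linP_eval, Finset.mul_sum]
  refine Finset.sum_congr rfl fun i _ => ?_
  have hpos : 1 ≤ D.q^D.d := Nat.one_le_pow _ _ (by have := D.hq; omega)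
  rcases Nat.eq_zero_or_pos i with rfl | hi
  · simp only [c0, cW, if_true, pow_zero, pow_one]
    conv_rhs => rw [← Nat.sub_add_cancel hpos, pow_succ]
    ring
  · rw [c0, cW, if_neg hi.ne', if_neg hi.ne']
    rcases lt_or_ge i D.d with h | h
    · simp [D.hlow i hi h]
    · have : D.q^D.d ≤ D.q^i := Nat.pow_le_pow_right (by have := D.hq; omega) h
      conv_lhs => rw [mul_pow, ← Nat.sub_add_cancel this, pow_add, Nat.sub_add_cancel this]
      ring

/-- reduction of `cW` -/
noncomputable def cb (i : ℕ) : k := PowerSeries.constantCoeff (D.cW i)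

lemma cb_zero : D.cb 0 = 1 := by simp [cb, cW]
lemma cb_d : D.cb D.d = D.a D.d := by simp [cb, cW, D.hd.ne']
lemma cb_other (i : ℕ) (h0 : i ≠ 0) (h1 : i ≠ D.d) : D.cb i = 0 := by
  rw [cb, cW, if_neg h0]
  rcases lt_or_gt_of_ne h1 with h | h
  · simp [D.hlow i (by omega) h]
  · have : D.q^D.d < D.q^i := Nat.pow_lt_pow_right D.hq h
    simp; right; omega

/-- reduced polynomial -/
noncomputable def fb : k[X] := D.fW.map PowerSeries.constantCoeff
lemma fb_eq : D.fb = linP D.q D.n D.cb := by rw [fb, fW, linP_map]; rfl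
lemma fb_eq' : D.fb = linP D.q D.d D.cb := by
  rw [fb_eq, linP, linP]
  symm
  apply Finset.sum_subset
  · intro i; simp only [Finset.mem_range]; have := D.hdn; omega
  · intro i _ hi
    simp only [Finset.mem_range] at hi
    rw [D.cb_other i (by omega) (by omega)]; simp
lemma fb_eval (z : k) : D.fb.eval z = z + D.a D.d * z ^ (D.q ^ D.d) := by
  rw [fb_eq', linP_eval, Finset.sum_range_succ, D.cb_d]
  congr 1
  rw [Finset.sum_eq_single 0]
  · simp [D.cb_zero]
  · intro i hi h0; rw [D.cb_other i h0 (by have := Finset.mem_range.1 hi; omega), zero_mul]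
  · intro h; exact absurd (Finset.mem_range.2 D.hd) h
lemma fb_natDegree : D.fb.natDegree = D.q ^ D.d := by
  rw [fb_eq']; exact linP_natDegree _ _ _ D.hq (by rw [D.cb_d]; exact D.had)

variable [CharP k 2]
lemma fb_deriv : derivative D.fb = 1 := by
  rw [fb_eq', linP_derivative _ _ _ (D.q_zero k), D.cb_zero, C_1]
lemma fb_sep : D.fb.Separable := by
  rw [Polynomial.separable_def, fb_deriv]; exact isCoprime_one_right

instance instCharPS : CharP (PowerSeries k) 2 := charP_of_injective_ringHom (PowerSeries.C_injective (R := k)) 2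

lemma liftW (c : k) (hc : D.fb.eval c = 0) :
    ∃ z, D.fW.eval z = 0 ∧ PowerSeries.constantCoeff z = c := by
  by_cases h0 : c = 0
  · exact ⟨0, linP_eval_zero _ _ D.hq _, by simp [h0]⟩
  have hr := revP_eval D.q D.n D.hq D.cb D.cb_zero c c⁻¹ (inv_mul_cancel₀ h0)
  rw [← D.fb_eq, hc] at hr
  have hr' := (mul_eq_zero.1 hr.symm).resolve_left (pow_ne_zero _ h0)
  have hmap : (revP D.q D.n D.cW).map PowerSeries.constantCoeff = revP D.q D.n D.cb := revP_map _ _ _ _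
  obtain ⟨u, hu, hu0⟩ := ps_hensel (revP D.q D.n D.cW) (revP_monic _ _ D.hq _) c⁻¹ (by rw [hmap, hr'])
    (by rw [hmap, revP_derivative _ _ D.hq (by have := D.hdn; omega) (D.q_zero k)]; simp [h0])
  obtain ⟨u', rfl⟩ := ps_unit u (by rw [hu0]; exact inv_ne_zero h0)
  refine ⟨↑u'⁻¹, ?_, ?_⟩
  · rw [fW, revP_eval _ _ D.hq D.cW (by simp [cW]) _ (u' : PowerSeries k) (by simp), hu, mul_zero]
  · have : PowerSeries.constantCoeff ((u' : PowerSeries k) * (↑u'⁻¹ : PowerSeries k)) = 1 := by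
      rw [Units.mul_inv]; simp
    rw [map_mul, hu0] at this
    field_simp at this
    exact this

lemma fW_unique (z z' : PowerSeries k) (h : D.fW.eval z = 0) (h' : D.fW.eval z' = 0)
    (h0 : PowerSeries.constantCoeff z = PowerSeries.constantCoeff z') : z' = z :=
  ps_unique D.fW z z' h0 (by rw [← fb, fb_deriv]; simp) h h'

open Classical in
/-- The small roots. -/
noncomputable def SW : Finset (PowerSeries k) := D.f0.roots.toFinset.filter (PowerSeries.X ∣ ·)

lemma mem_SW (y : PowerSeries k) : y ∈ D.SW ↔ D.f0.eval y = 0 ∧ PowerSeries.X ∣ y := by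
  simp [SW, D.f0_monic.ne_zero]

lemma mem_SW' (y : PowerSeries k) : y ∈ D.SW ↔ ∃ z, y = PowerSeries.X * z ∧ D.fW.eval z = 0 := by
  rw [mem_SW]
  constructor
  · rintro ⟨h, z, rfl⟩
    refine ⟨z, rfl, ?_⟩
    rw [f0_mul] at h
    exact (mul_eq_zero.1 h).resolve_left (pow_ne_zero _ PowerSeries.X_ne_zero)
  · rintro ⟨z, rfl, h⟩
    exact ⟨by rw [f0_mul, h, mul_zero], dvd_mul_right _ _⟩

lemma zero_SW : 0 ∈ D.SW := (D.mem_SW _).2 ⟨linP_eval_zero _ _ D.hq _, dvd_zero _⟩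
lemma add_SW : ∀ a ∈ D.SW, ∀ b ∈ D.SW, a + b ∈ D.SW := by
  intro a ha b hb
  rw [mem_SW] at *
  refine ⟨?_, dvd_add ha.2 hb.2⟩
  have := linP_eval_add D.q D.e D.n D.hqe D.c0 a b
  rw [← f0, ha.1, hb.1, add_zero] at this
  exact this
lemma neg_SW : ∀ a ∈ D.SW, -a ∈ D.SW := by
  intro a ha; rwa [CharTwo.neg_eq]

lemma card_SW [IsAlgClosed k] : D.SW.card = D.q ^ D.d := by
  classical
  choose! r hr1 hr2 using D.liftW
  have hfb0 : D.fb ≠ 0 := D.fb_sep.ne_zero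
  have : D.SW = D.fb.roots.toFinset.image (fun c => PowerSeries.X * r c) := by
    ext y
    rw [mem_SW', Finset.mem_image]
    constructor
    · rintro ⟨z, rfl, hz⟩
      have hc : D.fb.eval (PowerSeries.constantCoeff z) = 0 := by
        rw [fb, eval_map, eval₂_hom, hz, map_zero]
      refine ⟨PowerSeries.constantCoeff z, by simp [hfb0, hc], ?_⟩
      rw [D.fW_unique z _ hz (hr1 _ hc) (hr2 _ hc).symm]
    · rintro ⟨c, hc, rfl⟩
      exact ⟨r c, rfl, hr1 c (by simpa [hfb0] using hc)⟩
  rw [this, Finset.card_image_of_injOn, Multiset.toFinset_card_of_nodup (nodup_roots D.fb_sep),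
    IsAlgClosed.card_roots_eq_natDegree, D.fb_natDegree]
  intro c hc c' hc' h
  have h3 := mul_left_cancel₀ PowerSeries.X_ne_zero h
  rw [← hr2 c (by simpa [hfb0] using hc), ← hr2 c' (by simpa [hfb0] using hc'), h3]
end LocData
end GalLin

end

section
open Polynomial
namespace GalLin
namespace LocData
variable {k : Type*} [Field k] (D : LocData k) [CharP k 2]

lemma linP_comp {A : Type*} [CommRing A] [CharP A 2] (q e n : ℕ) (hq : q = 2^e) (c : ℕ → A) (w : A) :
    (linP q n c).comp (X + C w) = linP q n c + C ((linP q n c).eval w) := by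
  have : Fact (Nat.Prime 2) := ⟨Nat.prime_two⟩
  have : CharP A[X] 2 := inferInstance
  rw [linP_eval, linP, Polynomial.sum_comp, map_sum, ← Finset.sum_add_distrib]
  refine Finset.sum_congr rfl fun i _ => ?_
  rw [mul_comp, C_comp, pow_comp, X_comp, hq, ← pow_mul, add_pow_char_pow, mul_add, C_mul, C_pow]

/-- The polynomial with roots the small roots. -/
noncomputable def h : (PowerSeries k)[X] := prodS D.SW

lemma cc_SW (w) (hw : w ∈ D.SW) : PowerSeries.constantCoeff w = 0 :=
  PowerSeries.X_dvd_iff.1 ((D.mem_SW w).1 hw).2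

lemma h_map [IsAlgClosed k] : D.h.map PowerSeries.constantCoeff = X ^ (D.q ^ D.d) := by
  rw [h, prodS, Polynomial.map_prod, ← D.card_SW, ← Finset.prod_const]
  refine Finset.prod_congr rfl fun w hw => ?_
  simp [D.cc_SW w hw]

/-- Coefficients of the reduction of `G`. -/
def cG (i : ℕ) : k := D.a (D.d + i)

lemma f0_map : D.f0.map PowerSeries.constantCoeff =
    expand k (D.q ^ D.d) (linP D.q (D.n - D.d) D.cG) := by
  have hdn := D.hdn
  rw [f0, linP_map, linP, linP, show D.n + 1 = D.d + (D.n - D.d + 1) by omega, Finset.sum_range_add,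
    Finset.sum_eq_zero, zero_add, map_sum]
  · refine Finset.sum_congr rfl fun i _ => ?_
    have := D.hd
    rw [c0, if_neg (by omega), map_mul, expand_C, map_pow, expand_X, ← pow_mul, pow_add]
    simp [cG]
  · intro i hi
    have hi := Finset.mem_range.1 hi
    rcases Nat.eq_zero_or_pos i with rfl | h0
    · have : 1 < D.q ^ D.d := Nat.one_lt_pow D.hd.ne' D.hq
      have : D.q^D.d - 1 ≠ 0 := by omega
      simp [c0, this]
    · simp [c0, h0.ne', D.hlow i h0 hi]

lemma exists_G [IsAlgClosed k] : ∃ G : (PowerSeries k)[X], D.f0 = G.comp D.h ∧ G.Monic ∧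
    G.map PowerSeries.constantCoeff = linP D.q (D.n - D.d) D.cG := by
  obtain ⟨G, hG⟩ := prodS_comp D.SW D.add_SW D.neg_SW D.zero_SW _ D.f0 (Nat.lt_succ_self _) (by
    intro w hw
    rw [f0, linP_comp _ _ _ D.hqe, ← f0, ((D.mem_SW w).1 hw).1]; simp)
  have hpos : 0 < D.q ^ D.d := pow_pos (by have := D.hq; omega) _
  refine ⟨G, hG, ?_, ?_⟩
  · have := congrArg leadingCoeff hG
    rw [leadingCoeff_comp (by rw [prodS_natDegree, D.card_SW]; exact hpos.ne'), D.f0_monic.leadingCoeff,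
      (prodS_monic _).leadingCoeff, one_pow, mul_one] at this
    exact this.symm
  · have := congrArg (Polynomial.map PowerSeries.constantCoeff) hG
    rw [f0_map, map_comp, ← h, h_map, ← expand_eq_comp_X_pow] at this
    exact (expand_injective hpos this).symm

/-- The quotient polynomial. -/
noncomputable def G [IsAlgClosed k] : (PowerSeries k)[X] := D.exists_G.choose
variable [IsAlgClosed k]
lemma f0_eq : D.f0 = D.G.comp D.h := D.exists_G.choose_spec.1
lemma G_monic : D.G.Monic := D.exists_G.choose_spec.2.1
lemma G_map : D.G.map PowerSeries.constantCoeff = linP D.q (D.n - D.d) D.cG := D.exists_G.choose_spec.2.2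
lemma G_deriv : derivative (D.G.map PowerSeries.constantCoeff) = C (D.a D.d) := by
  rw [G_map, linP_derivative _ _ _ (D.q_zero k)]; rfl
lemma G_sep : (D.G.map PowerSeries.constantCoeff).Separable := by
  rw [Polynomial.separable_def, G_deriv]
  exact (isCoprime_one_right).of_isCoprime_of_dvd_right ((isUnit_C.2 (isUnit_iff_ne_zero.2 D.had)).dvd)

lemma f0_eval (y : PowerSeries k) : D.f0.eval y = D.G.eval (D.h.eval y) := by
  rw [f0_eq, eval_comp]

lemma G_unique (y y' : PowerSeries k) (h : PowerSeries.constantCoeff y = PowerSeries.constantCoeff y')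
    (hy : D.G.eval y = 0) (hy' : D.G.eval y' = 0) : y' = y :=
  ps_unique D.G y y' h (by rw [G_deriv]; simpa using D.had) hy hy'

section Om
variable {Ω : Type*} [Field Ω] 

lemma h_in_R (φ : PowerSeries k →+* Ω) (hφ : Function.Injective φ) (x : Ω) (hx : D.f0.eval₂ φ x = 0) : ∃ ρ, φ ρ = D.h.eval₂ φ x ∧ D.G.eval ρ = 0 := by
  apply ps_split φ hφ D.G D.G_monic D.G_sep
  rw [f0_eq, eval₂_comp] at hx
  exact hx
end Om
end LocData
end GalLin

end

section
open Polynomial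
namespace GalLin

section eis
variable {k : Type*} [Field k]

/-- The Eisenstein polynomial attached to a set of series. -/
noncomputable def eisP (S : Finset (PowerSeries k)) (z : PowerSeries k → PowerSeries k)
    (u : PowerSeries k) : (PowerSeries k)[X] :=
  X ^ S.card - C (PowerSeries.X * u) * ∏ w ∈ S, (1 - C (z w) * X)

lemma eisP_monic (S : Finset (PowerSeries k)) (z : PowerSeries k → PowerSeries k)
    (u : PowerSeries k) (h0 : 0 ∈ S) (hz : z 0 = 0) :
    (C (PowerSeries.X * u) * ∏ w ∈ S, (1 - C (z w) * X)).degree < (S.card : WithBot ℕ) := by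
  classical
  have hS : 0 < S.card := Finset.card_pos.2 ⟨0, h0⟩
  rw [← Finset.mul_prod_erase S _ h0, hz, C_0, zero_mul, sub_zero, one_mul]
  have : (C (PowerSeries.X * u) * ∏ w ∈ S.erase 0, (1 - C (z w) * X)).natDegree ≤ S.card - 1 := by
    refine (natDegree_C_mul_le _ _).trans ?_
    refine (natDegree_prod_le _ _).trans ?_
    rw [← Finset.card_erase_of_mem h0, Finset.card_eq_sum_ones]
    refine Finset.sum_le_sum fun w _ => ?_
    refine (natDegree_sub_le _ _).trans ?_
    simp only [natDegree_one, Nat.zero_le, sup_of_le_right]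
    refine (natDegree_C_mul_le _ _).trans natDegree_X_le
  refine degree_le_natDegree.trans_lt ?_
  exact_mod_cast (by omega)

lemma eisP_irr (S : Finset (PowerSeries k)) (z : PowerSeries k → PowerSeries k)
    (u : PowerSeries k) (hu : IsUnit u) (h0 : 0 ∈ S) (hz : z 0 = 0) :
    (eisP S z u).Monic ∧ Irreducible (eisP S z u) := by
  have hS : 0 < S.card := Finset.card_pos.2 ⟨0, h0⟩
  have hlt := eisP_monic S z u h0 hz
  have hm : (eisP S z u).Monic := monic_X_pow_sub hlt
  have hdeg : (eisP S z u).degree = (S.card : WithBot ℕ) := by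
    rw [eisP, degree_sub_eq_left_of_degree_lt (by rwa [degree_X_pow]), degree_X_pow]
  refine ⟨hm, ?_⟩
  have hP : (Ideal.span {(PowerSeries.X : PowerSeries k)}).IsPrime := PowerSeries.span_X_isPrime
  refine irreducible_of_eisenstein_criterion hP ?_ ?_ ?_ ?_ hm.isPrimitive
  · rw [hm.leadingCoeff]; exact fun h => hP.ne_top ((Ideal.eq_top_iff_one _).2 h)
  · intro n hn
    rw [hdeg] at hn
    have hn : n < S.card := by exact_mod_cast hn
    rw [eisP, coeff_sub, coeff_X_pow, if_neg hn.ne, zero_sub, coeff_C_mul, mul_assoc, Ideal.mem_span_singleton]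
    exact (dvd_mul_right _ _).neg_right
  · rw [hdeg]; exact_mod_cast hS
  · rw [eisP, coeff_sub, coeff_X_pow, if_neg hS.ne, zero_sub, coeff_C_mul, coeff_zero_eq_eval_zero, eval_prod]
    simp only [eval_sub, eval_one, eval_mul, eval_C, eval_X, mul_zero, sub_zero, Finset.prod_const_one, mul_one]
    rw [Ideal.span_singleton_pow, Ideal.mem_span_singleton, dvd_neg, pow_two,
      mul_dvd_mul_iff_left PowerSeries.X_ne_zero]
    intro h
    exact PowerSeries.X_prime.not_isUnit (isUnit_of_dvd_unit h hu)

lemma eisP_root {Ω : Type*} [Field Ω] (φ : PowerSeries k →+* Ω) (hφ : Function.Injective φ)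
    (S : Finset (PowerSeries k)) (z : PowerSeries k → PowerSeries k)
    (hz : ∀ w ∈ S, w = PowerSeries.X * z w) (u v : PowerSeries k) (huv : u * v = 1) (h0 : 0 ∈ S)
    (m : ℕ) (hm : S.card = m + 1) (y : Ω)
    (hy : (prodS S).eval₂ φ y = φ (PowerSeries.X ^ m * v)) :
    y ≠ 0 ∧ (eisP S z u).eval₂ φ (φ PowerSeries.X / y) = 0 := by
  have hX : φ PowerSeries.X ≠ 0 := by
    rw [Ne, map_eq_zero_iff φ hφ]; exact PowerSeries.X_ne_zero
  have huv' : φ u * φ v = 1 := by rw [← map_mul, huv, map_one]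
  rw [prodS_eval₂] at hy
  have hy0 : y ≠ 0 := by
    rintro rfl
    rw [Finset.prod_eq_zero h0 (by simp), map_mul, map_pow] at hy
    have := (mul_eq_zero.1 hy.symm).resolve_left (pow_ne_zero _ hX)
    rw [this, mul_zero] at huv'
    exact zero_ne_one huv'
  refine ⟨hy0, ?_⟩
  rw [eisP]
  have hp : ∏ w ∈ S, (1 - φ (z w) * (φ PowerSeries.X / y)) = φ (PowerSeries.X ^ m * v) / y ^ S.card := by
    rw [← hy, ← Finset.prod_const, ← Finset.prod_div_distrib]
    refine Finset.prod_congr rfl fun w hw => ?_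
    conv_rhs => rw [hz w hw]
    rw [map_mul]; field_simp
  rw [eval₂_sub, eval₂_X_pow, eval₂_mul, eval₂_C, eval₂_finsetProd]
  simp only [eval₂_sub, eval₂_one, eval₂_mul, eval₂_C, eval₂_X]
  rw [hp, hm, map_mul, map_mul, map_pow, div_pow, sub_eq_zero]
  rw [mul_div_assoc', show φ PowerSeries.X * φ u * (φ PowerSeries.X ^ m * φ v) = φ PowerSeries.X ^ (m+1) * (φ u * φ v) by ring, huv', mul_one]
end eis

namespace LocData
variable {k : Type*} [Field k] (D : LocData k) [CharP k 2] [IsAlgClosed k]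

lemma h_sub_R {Ω : Type*} [CommRing Ω] (φ : PowerSeries k →+* Ω) (x : Ω) (a : PowerSeries k) :
    D.h.eval₂ φ (x - φ a) = D.h.eval₂ φ x - φ (D.h.eval a) := by
  have := congrArg (fun p => p.eval₂ φ x) (prodS_comp_sub D.SW D.add_SW D.neg_SW D.zero_SW a)
  simpa [eval₂_comp, h] using this

lemma f0_const (r : k) : ∃ β : k, D.f0.eval (PowerSeries.C r) =
    PowerSeries.X ^ (D.q^D.d - 1) * PowerSeries.C r + PowerSeries.C β := by
  refine ⟨∑ i ∈ Finset.range D.n, D.a (i+1) * r ^ (D.q^(i+1)), ?_⟩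
  rw [f0, linP_eval, Finset.sum_range_succ', add_comm]
  simp [c0]

theorem exists_trans {K1 Ω : Type*} [Field K1] [Algebra (PowerSeries k) K1] [IsFractionRing (PowerSeries k) K1]
    [Field Ω] [Algebra K1 Ω] [Normal K1 Ω] (x : Ω)
    (hx : D.f0.eval₂ ((algebraMap K1 Ω).comp (algebraMap (PowerSeries k) K1)) x = 0)
    (hxW : ∀ w ∈ D.SW, x ≠ ((algebraMap K1 Ω).comp (algebraMap (PowerSeries k) K1)) w)
    (w : PowerSeries k) (hw : w ∈ D.SW) :
    ∃ τ : Ω ≃ₐ[K1] Ω, τ x = x + ((algebraMap K1 Ω).comp (algebraMap (PowerSeries k) K1)) w := by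
  set φ := (algebraMap K1 Ω).comp (algebraMap (PowerSeries k) K1) with hφd
  have hφ : Function.Injective φ :=
    (algebraMap K1 Ω).injective.comp (IsFractionRing.injective (PowerSeries k) K1)
  obtain ⟨ρ, hρ, hGρ⟩ := D.h_in_R φ hφ x hx
  have hh0 : D.h.eval 0 = 0 := (prodS_eval_eq_zero D.SW 0).2 D.zero_SW
  have hG0 : D.G.eval 0 = 0 := by
    have h1 : D.G.eval (D.h.eval 0) = 0 := by
      rw [← f0_eval]; exact linP_eval_zero D.q D.n D.hq D.c0
    rwa [hh0] at h1
  have hρ0 : PowerSeries.constantCoeff ρ ≠ 0 := by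
    intro h
    have : ρ = 0 := D.G_unique 0 ρ (by simp [h]) hG0 hGρ
    rw [this, map_zero, LocData.h, prodS_eval₂] at hρ
    obtain ⟨w', hw', h'⟩ := Finset.prod_eq_zero_iff.1 hρ.symm
    exact hxW w' hw' (sub_eq_zero.1 h')
  have hN : 1 < D.q ^ D.d := Nat.one_lt_pow D.hd.ne' D.hq
  obtain ⟨r, hr⟩ := IsAlgClosed.exists_pow_nat_eq (PowerSeries.constantCoeff ρ) (by omega : 0 < D.q ^ D.d)
  have hr0 : r ≠ 0 := by rintro rfl; rw [zero_pow (by omega)] at hr; exact hρ0 hr.symm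
  set y := D.h.eval (PowerSeries.C r) with hy
  have hcy : PowerSeries.constantCoeff y = PowerSeries.constantCoeff ρ := by
    rw [hy, ← eval₂_hom, ← eval_map, D.h_map]; simp [hr]
  have hGy : D.G.eval y = PowerSeries.X ^ (D.q^D.d - 1) * PowerSeries.C r := by
    obtain ⟨β, hβ⟩ := D.f0_const r
    rw [f0_eval] at hβ
    have h1 : PowerSeries.constantCoeff (D.G.eval y) = PowerSeries.constantCoeff (D.G.eval ρ) := by
      have a1 := eval₂_hom (p := D.G) PowerSeries.constantCoeff y
      have a2 := eval₂_hom (p := D.G) PowerSeries.constantCoeff ρ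
      rw [← a1, ← a2, hcy]
    rw [hGρ, hβ] at h1
    have : D.q^D.d - 1 ≠ 0 := by omega
    simp [this] at h1
    rw [hβ, h1]; simp
  obtain ⟨v, hv, hv2⟩ := ps_eval_sub D.G y ρ hcy (by rw [G_deriv]; simpa using D.had)
  rw [hGρ, hGy, zero_sub] at hv2
  obtain ⟨v, rfl⟩ := hv
  obtain ⟨c, hc⟩ := ps_unit (PowerSeries.C r) (by simpa using hr0)
  set u : (PowerSeries k)ˣ := - (c * v⁻¹) with hu
  have hdiff : ρ - y = PowerSeries.X ^ (D.q^D.d - 1) * (u : PowerSeries k) := by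
    have : ρ - y = (ρ - y) * (v : PowerSeries k) * (↑v⁻¹ : PowerSeries k) := by
      rw [mul_assoc, Units.mul_inv, mul_one]
    rw [this, ← hv2, hu, ← hc]; push_cast; ring
  choose! z hz using fun w (hw : w ∈ D.SW) => ((D.mem_SW w).1 hw).2
  have hz0 : z 0 = 0 := by
    have := hz 0 D.zero_SW
    exact (mul_eq_zero.1 this.symm).resolve_left PowerSeries.X_ne_zero
  have hcard : D.SW.card = (D.q^D.d - 1) + 1 := by rw [card_SW]; omega
  obtain ⟨hEm, hEi⟩ := eisP_irr D.SW z (↑u⁻¹) (u⁻¹).isUnit D.zero_SW hz0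
  have hmin : ∀ y' : Ω, D.h.eval₂ φ y' = φ (ρ - y) → y' ≠ 0 ∧
      (eisP D.SW z (↑u⁻¹)).map (algebraMap (PowerSeries k) K1) = minpoly K1 (φ PowerSeries.X / y') := by
    intro y' hy'
    rw [hdiff] at hy'
    obtain ⟨h1, h2⟩ := eisP_root φ hφ D.SW z hz (↑u⁻¹) u (Units.inv_mul u) D.zero_SW _ hcard y' hy'
    refine ⟨h1, ?_⟩
    apply minpoly.eq_of_irreducible_of_monic
    · exact (Polynomial.Monic.irreducible_iff_irreducible_map_fraction_map hEm).1 hEi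
    · rw [aeval_def, eval₂_map]; exact h2
    · exact hEm.map _
  have hhw : D.h.eval (PowerSeries.C r - w) = y := by
    have := D.h_sub_R (RingHom.id _) (PowerSeries.C r) w
    rw [LocData.h] at this
    rw [(prodS_eval_eq_zero _ _).2 hw] at this
    rw [hy, LocData.h]
    simpa using this
  have e1 : D.h.eval₂ φ (x - φ (PowerSeries.C r)) = φ (ρ - y) := by
    rw [h_sub_R, map_sub, hρ]
  have e2 : D.h.eval₂ φ (x - φ (PowerSeries.C r - w)) = φ (ρ - y) := by
    rw [h_sub_R, map_sub, hρ, hhw]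
  obtain ⟨n1, m1⟩ := hmin _ e1
  obtain ⟨n2, m2⟩ := hmin _ e2
  obtain ⟨τ, hτ⟩ := isConjRoot_iff_exists_algEquiv.1 (show IsConjRoot K1 (φ PowerSeries.X / (x - φ (PowerSeries.C r - w))) (φ PowerSeries.X / (x - φ (PowerSeries.C r))) from m2.symm.trans m1)
  refine ⟨τ, ?_⟩
  have hτφ : ∀ a, τ (φ a) = φ a := fun a => τ.commutes _
  rw [map_div₀, hτφ, map_sub, hτφ] at hτ
  have hX : φ PowerSeries.X ≠ 0 := by
    rw [Ne, map_eq_zero_iff φ hφ]; exact PowerSeries.X_ne_zero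
  rw [div_eq_mul_inv, div_eq_mul_inv] at hτ
  have := inv_injective (mul_left_cancel₀ hX hτ)
  rw [map_sub] at this
  linear_combination this

theorem inertia_sub {Ω : Type*} [Field Ω] (φ : PowerSeries k →+* Ω) (hφ : Function.Injective φ)
    (x : Ω) (hx : D.f0.eval₂ φ x = 0) (σ : PowerSeries k →+* PowerSeries k)
    (hσ : Function.Injective σ)
    (hσ0 : ∀ y, PowerSeries.constantCoeff (σ y) = PowerSeries.constantCoeff y)
    (hσW : ∀ w ∈ D.SW, σ w ∈ D.SW) (τ : Ω →+* Ω) (hτ : ∀ y, τ (φ y) = φ (σ y))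
    (hτx : D.f0.eval₂ φ (τ x) = 0) : ∃ w ∈ D.SW, τ x - x = φ w := by
  classical
  obtain ⟨ρ, hρ, hGρ⟩ := D.h_in_R φ hφ x hx
  obtain ⟨ρ', hρ', hGρ'⟩ := D.h_in_R φ hφ _ hτx
  have him : D.SW.image σ = D.SW := by
    apply Finset.eq_of_subset_of_card_le
    · intro y hy; obtain ⟨w, hw, rfl⟩ := Finset.mem_image.1 hy; exact hσW w hw
    · rw [Finset.card_image_of_injective _ hσ]
  have h1 : D.h.eval₂ φ (τ x) = τ (D.h.eval₂ φ x) := by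
    rw [h, prodS_eval₂, prodS_eval₂, map_prod]
    conv_lhs => rw [← him, Finset.prod_image (fun a _ b _ h => hσ h)]
    refine Finset.prod_congr rfl fun w _ => ?_
    rw [map_sub, hτ]
  have h2 : ρ' = σ ρ := by
    apply hφ; rw [hρ', h1, ← hρ, hτ]
  have h3 : ρ' = ρ := D.G_unique ρ ρ' (by rw [h2, hσ0]) hGρ hGρ'
  have h4 : D.h.eval₂ φ (τ x) = D.h.eval₂ φ x := by rw [← hρ, ← hρ', h3]
  set S' := D.SW.image φ
  have hmap : D.h.map φ = prodS S' := by
    rw [h, prodS, prodS, Polynomial.map_prod, Finset.prod_image (fun a _ b _ h => hφ h)]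
    simp
  have h5 := congrArg (fun p => p.eval (τ x)) (prodS_comp_sub S' (by
    intro a ha b hb
    obtain ⟨a, ha', rfl⟩ := Finset.mem_image.1 ha
    obtain ⟨b, hb', rfl⟩ := Finset.mem_image.1 hb
    exact Finset.mem_image.2 ⟨a+b, D.add_SW _ ha' _ hb', map_add _ _ _⟩) (by
    intro a ha
    obtain ⟨a, ha', rfl⟩ := Finset.mem_image.1 ha
    exact Finset.mem_image.2 ⟨-a, D.neg_SW _ ha', map_neg _ _⟩) (Finset.mem_image.2 ⟨0, D.zero_SW, map_zero _⟩) x)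
  simp only [eval_comp, eval_sub, eval_X, eval_C] at h5
  rw [← hmap, eval_map, eval_map, eval_map, h4, sub_self, ← eval_map, hmap, prodS_eval_eq_zero] at h5
  obtain ⟨w, hw, h6⟩ := Finset.mem_image.1 h5
  exact ⟨w, hw, h6.symm⟩
end LocData
end GalLin

end

section
open Polynomial
namespace GalLin

/-- algebraic closure of the field of Laurent series -/
abbrev Om (k : Type*) [Field k] := AlgebraicClosure (FractionRing (PowerSeries k))

/-- the inclusion of power series -/
noncomputable def phi (k : Type*) [Field k] : PowerSeries k →+* Om k :=
  (algebraMap (FractionRing (PowerSeries k)) (Om k)).comp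
    (algebraMap (PowerSeries k) (FractionRing (PowerSeries k)))

section
variable {k : Type*} [Field k]

lemma phi_inj : Function.Injective (phi k) :=
  (algebraMap (FractionRing (PowerSeries k)) (Om k)).injective.comp
    (IsFractionRing.injective (PowerSeries k) (FractionRing (PowerSeries k)))

lemma phiX : phi k PowerSeries.X ≠ 0 := by
  rw [Ne, map_eq_zero_iff _ phi_inj]; exact PowerSeries.X_ne_zero

lemma rescale_C' (ζ c : k) : PowerSeries.rescale ζ (PowerSeries.C c) = PowerSeries.C c := by
  ext n
  rw [PowerSeries.coeff_rescale, PowerSeries.coeff_C]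
  split_ifs with h <;> simp [h]

lemma cc_rescale (ζ : k) (y : PowerSeries k) :
    PowerSeries.constantCoeff (PowerSeries.rescale ζ y) = PowerSeries.constantCoeff y := by
  rw [← PowerSeries.coeff_zero_eq_constantCoeff_apply, PowerSeries.coeff_rescale]; simp

/-- rescaling as an equivalence -/
noncomputable def rescaleEquiv (ζ : kˣ) : PowerSeries k ≃+* PowerSeries k :=
  RingEquiv.ofRingHom (PowerSeries.rescale (ζ : k)) (PowerSeries.rescale (↑ζ⁻¹ : k))
    (by rw [← PowerSeries.rescale_mul]; simp [PowerSeries.rescale_one])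
    (by rw [← PowerSeries.rescale_mul]; simp [PowerSeries.rescale_one])

lemma exists_sigma (ζ : kˣ) : ∃ τ : Om k ≃+* Om k, ∀ y, τ (phi k y) = phi k (PowerSeries.rescale (ζ : k) y) := by
  refine ⟨IsAlgClosure.equivOfEquiv (Om k) (Om k) (IsFractionRing.ringEquivOfRingEquiv
    (K := FractionRing (PowerSeries k)) (L := FractionRing (PowerSeries k)) (rescaleEquiv ζ)), fun y => ?_⟩
  rw [phi, RingHom.comp_apply, IsAlgClosure.equivOfEquiv_algebraMap, IsFractionRing.ringEquivOfRingEquiv_algebraMap]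
  rfl
end

lemma exists_ratfunc_hom {F Ω : Type*} [Field F] [Field Ω] (i : F →+* Ω) (T : Ω)
    (hT : ∀ p : F[X], p.eval₂ i T = 0 → p = 0) :
    ∃ j : RatFunc F →+* Ω, j RatFunc.X = T ∧ ∀ c, j (algebraMap F (RatFunc F) c) = i c := by
  have hinj : Function.Injective (eval₂RingHom i T) := by
    rw [injective_iff_map_eq_zero]; exact hT
  refine ⟨IsFractionRing.lift (A := F[X]) hinj, ?_, fun c => ?_⟩
  · rw [← RatFunc.algebraMap_X, IsFractionRing.lift_algebraMap]; simp
  · rw [IsScalarTower.algebraMap_apply F F[X] (RatFunc F), IsFractionRing.lift_algebraMap]; simp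

lemma trans_inv {F Ω : Type*} [Field F] [Field Ω] (i : F →+* Ω) (T : Ω) (hT0 : T ≠ 0)
    (hT : ∀ p : F[X], p.eval₂ i T = 0 → p = 0) (p : F[X]) (hp : p.eval₂ i T⁻¹ = 0) : p = 0 := by
  let _ : Invertible T⁻¹ := invertibleOfNonzero (inv_ne_zero hT0)
  have := (eval₂_reverse_eq_zero_iff i T⁻¹ p).2 hp
  rw [invOf_eq_inv, inv_inv] at this
  simpa using hT _ this

lemma trans_X {F k : Type*} [Field F] [Field k] (i : F →+* k) (m : ℕ) (hm : 0 < m) (p : F[X])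
    (hp : p.eval₂ ((phi k).comp (PowerSeries.C.comp i)) (phi k (PowerSeries.X ^ m)) = 0) : p = 0 := by
  rw [← hom_eval₂, map_eq_zero_iff _ phi_inj] at hp
  have h1 : p.eval₂ (PowerSeries.C.comp i) (PowerSeries.X ^ m) = ((expand k m (p.map i) : k[X]) : PowerSeries k) := by
    have : eval₂RingHom (PowerSeries.C.comp i) (PowerSeries.X ^ m) =
        (coeToPowerSeries.ringHom).comp ((expand k m).toRingHom.comp (mapRingHom i)) := by
      apply Polynomial.ringHom_ext
      · intro a; simp
      · simp
    exact RingHom.congr_fun this p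
  rw [h1, Polynomial.coe_eq_zero_iff, expand_eq_zero hm] at hp
  exact (Polynomial.map_eq_zero_iff i.injective).1 hp

lemma exists_gal {K L Ω : Type*} [Field K] [Field L] [Field Ω] [Algebra K L] [Normal K L]
    (ψ : L →+* Ω) (τ : Ω ≃+* Ω)
    (hτ : ∀ c : K, τ (ψ (algebraMap K L c)) = ψ (algebraMap K L c)) :
    ∃ g : L ≃ₐ[K] L, ∀ x, ψ (g x) = τ (ψ x) := by
  let _ : Algebra L Ω := ψ.toAlgebra
  let _ : Algebra K Ω := (ψ.comp (algebraMap K L)).toAlgebra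
  have : IsScalarTower K L Ω := IsScalarTower.of_algebraMap_eq' rfl
  let τ' : Ω ≃ₐ[K] Ω := AlgEquiv.ofRingEquiv (f := τ) hτ
  exact ⟨τ'.restrictNormal L, fun x => τ'.restrictNormal_commutes L x⟩

lemma exists_emb {K L Ω : Type*} [Field K] [Field L] [Field Ω] [IsAlgClosed Ω] [Algebra K L]
    [Algebra.IsAlgebraic K L] (j : K →+* Ω) :
    ∃ ψ : L →+* Ω, ∀ c, ψ (algebraMap K L c) = j c := by
  let _ : Algebra K Ω := j.toAlgebra
  let ψ : L →ₐ[K] Ω := IsAlgClosed.lift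
  exact ⟨ψ.toRingHom, fun c => ψ.commutes c⟩
end GalLin

end

section
open Polynomial
namespace GalLin

/-- The global data. -/
structure GData (Fq : Type*) [Field Fq] where
  q : ℕ
  e : ℕ
  n : ℕ
  hcard : Nat.card Fq = q
  hqe : q = 2^e
  he : 0 < e
  hn : 0 < n
  a : ℕ → Fq
  han : a n = 1

lemma ratfunc_hom_ext {F Ω : Type*} [Field F] [Field Ω] (j j' : RatFunc F →+* Ω)
    (hX : j RatFunc.X = j' RatFunc.X)
    (hC : ∀ c, j (algebraMap F (RatFunc F) c) = j' (algebraMap F (RatFunc F) c)) : j = j' := by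
  apply IsLocalization.ringHom_ext (nonZeroDivisors F[X])
  apply Polynomial.ringHom_ext
  · intro c
    have := hC c
    rw [IsScalarTower.algebraMap_apply F F[X] (RatFunc F)] at this
    simpa using this
  · simpa [RatFunc.algebraMap_X] using hX

namespace GData
variable {Fq : Type*} [Field Fq] (D : GData Fq)

lemma hq : 1 < D.q := by rw [D.hqe]; exact Nat.one_lt_two_pow D.he.ne'

lemma finite (D : GData Fq) : Finite Fq := Nat.finite_of_card_ne_zero (by rw [D.hcard]; have := D.hq; omega)

lemma charP (D : GData Fq) : CharP Fq 2 := by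
  have := D.finite
  let _ := Fintype.ofFinite Fq
  have h : (Fintype.card Fq : Fq) = 0 := Nat.cast_card_eq_zero Fq
  rw [← Nat.card_eq_fintype_card, D.hcard, D.hqe] at h
  push_cast at h
  exact CharTwo.of_one_ne_zero_of_two_eq_zero one_ne_zero (eq_zero_of_pow_eq_zero h)

lemma charP_alg (D : GData Fq) (A : Type*) [CommRing A] [Nontrivial A] (i : Fq →+* A) : CharP A 2 := by
  have := D.charP
  exact charP_of_injective_ringHom i.injective 2

lemma pow_q (c : Fq) (i : ℕ) : c ^ (D.q^i) = c := by
  have := D.finite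
  let _ := Fintype.ofFinite Fq
  rw [← D.hcard, Nat.card_eq_fintype_card]
  exact FiniteField.pow_card_pow i c

lemma q_zero (A : Type*) [CommRing A] [CharP A 2] : (D.q : A) = 0 := by
  rw [D.hqe]; push_cast
  have : (2 : A) = 0 := by exact_mod_cast CharP.cast_eq_zero A 2
  rw [this, zero_pow D.he.ne']

/-- coefficients with `T` in place of `t` -/
def cT {A : Type*} [CommRing A] (i : Fq →+* A) (T : A) (m : ℕ) : A := if m = 0 then T else i (D.a m)

lemma cT_n {A : Type*} [CommRing A] (i : Fq →+* A) (T : A) : D.cT i T D.n = 1 := by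
  rw [cT, if_neg D.hn.ne', D.han, map_one]

lemma cT_map {A B : Type*} [CommRing A] [CommRing B] (i : Fq →+* A) (T : A) (φ : A →+* B) (m : ℕ) :
    φ (D.cT i T m) = D.cT (φ.comp i) (φ T) m := by
  simp only [cT]; split_ifs <;> simp

/-- the polynomial with `T` in place of `t` -/
noncomputable def fT {A : Type*} [CommRing A] (i : Fq →+* A) (T : A) : A[X] := linP D.q D.n (D.cT i T)

lemma fT_map {A B : Type*} [CommRing A] [CommRing B] (i : Fq →+* A) (T : A) (φ : A →+* B) :
    (D.fT i T).map φ = D.fT (φ.comp i) (φ T) := by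
  rw [fT, linP_map, fT]; congr 1; funext m; exact D.cT_map i T φ m

lemma fT_monic {A : Type*} [CommRing A] (i : Fq →+* A) (T : A) : (D.fT i T).Monic :=
  linP_monic _ _ _ D.hq (D.cT_n i T)

lemma fT_natDegree {A : Type*} [CommRing A] [Nontrivial A] (i : Fq →+* A) (T : A) :
    (D.fT i T).natDegree = D.q ^ D.n :=
  linP_natDegree _ _ _ D.hq (by rw [cT_n]; exact one_ne_zero)

lemma fT_add {A : Type*} [CommRing A] [Nontrivial A] (i : Fq →+* A) (T x y : A) :
    (D.fT i T).eval (x + y) = (D.fT i T).eval x + (D.fT i T).eval y := by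
  have := D.charP_alg A i
  exact linP_eval_add D.q D.e D.n D.hqe _ x y

lemma fT_smul {A : Type*} [CommRing A] (i : Fq →+* A) (T : A) (c : Fq) (x : A) :
    (D.fT i T).eval (i c * x) = i c * (D.fT i T).eval x := by
  rw [fT, linP_eval, linP_eval, Finset.mul_sum]
  refine Finset.sum_congr rfl fun m _ => ?_
  rw [mul_pow, ← map_pow, D.pow_q]; ring

lemma fT_zero {A : Type*} [CommRing A] (i : Fq →+* A) (T : A) :
    (D.fT i T).eval 0 = 0 := linP_eval_zero _ _ D.hq _

lemma fT_sep {A : Type*} [Field A] (i : Fq →+* A) (T : A) (hT : T ≠ 0) : (D.fT i T).Separable := by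
  have := D.charP_alg A i
  have h : derivative (D.fT i T) = C T := by
    rw [fT, linP_derivative _ _ _ (D.q_zero A)]; simp [cT]
  rw [Polynomial.separable_def, h]
  exact ⟨0, C T⁻¹, by rw [← C_mul, inv_mul_cancel₀ hT]; simp⟩

/-- the polynomial over `F_q(t)` -/
noncomputable abbrev f : (RatFunc Fq)[X] := D.fT (algebraMap Fq (RatFunc Fq)) RatFunc.X

section
variable (L : Type*) [Field L] [Algebra (RatFunc Fq) L] [Algebra Fq L] [IsScalarTower Fq (RatFunc Fq) L]

/-- the image of `t` -/
noncomputable abbrev tL (Fq L : Type*) [Field Fq] [Field L] [Algebra (RatFunc Fq) L] : L := algebraMap (RatFunc Fq) L RatFunc.X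

/-- the polynomial over `L` -/
noncomputable abbrev fL : L[X] := D.fT (algebraMap Fq L) (tL Fq L)

lemma fL_eq : D.f.map (algebraMap (RatFunc Fq) L) = D.fL L := by
  rw [fT_map, ← IsScalarTower.algebraMap_eq]

/-- the root space -/
def V : Submodule Fq L where
  carrier := {x | (D.fL L).eval x = 0}
  zero_mem' := D.fT_zero _ _
  add_mem' {x y} hx hy := by
    simp only [Set.mem_ofPred_eq] at *
    rw [fT_add, hx, hy, add_zero]
  smul_mem' c x hx := by
    simp only [Set.mem_ofPred_eq] at *
    rw [Algebra.smul_def, fT_smul, hx, mul_zero]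

lemma mem_V (x : L) : x ∈ D.V L ↔ (D.fL L).eval x = 0 := Iff.rfl

lemma tL_ne (Fq L : Type*) [Field Fq] [Field L] [Algebra (RatFunc Fq) L] : (tL Fq L : L) ≠ 0 := by
  rw [Ne, map_eq_zero]; exact RatFunc.X_ne_zero

lemma V_eq : (D.V L : Set L) = D.f.rootSet L := by
  ext x
  rw [mem_rootSet, SetLike.mem_coe, mem_V, aeval_def, ← eval_map, fL_eq]
  simp [(D.fT_monic _ _).ne_zero]

variable [D.f.IsSplittingField (RatFunc Fq) L]

lemma card_V : Nat.card (D.V L) = D.q ^ D.n := by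
  have h1 := card_rootSet_eq_natDegree (K := L) (p := D.f) (D.fT_sep _ _ RatFunc.X_ne_zero)
    (IsSplittingField.splits L D.f)
  rw [fT_natDegree] at h1
  have : Nat.card (D.V L) = Nat.card (D.f.rootSet L) := by rw [← V_eq]; rfl
  rw [this, Nat.card_eq_fintype_card, h1]

lemma finite_V : Finite (D.V L) := Nat.finite_of_card_ne_zero (by
  rw [D.card_V]; have := D.hq; positivity)

lemma normal (D : GData Fq) (L : Type*) [Field L] [Algebra (RatFunc Fq) L]
    [D.f.IsSplittingField (RatFunc Fq) L] : Normal (RatFunc Fq) L := Normal.of_isSplittingField D.f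
end

section
variable {L : Type*} [Field L] [Algebra (RatFunc Fq) L] [Algebra Fq L] [IsScalarTower Fq (RatFunc Fq) L]

lemma act_mem (g : L ≃ₐ[RatFunc Fq] L) (v : L) (hv : v ∈ D.V L) : g v ∈ D.V L := by
  have h : v ∈ D.f.rootSet L := by rw [← V_eq]; exact hv
  have : g v ∈ (D.V L : Set L) := by
    rw [V_eq, mem_rootSet] at *
    exact ⟨h.1, by rw [aeval_algHom_apply g v D.f, h.2, map_zero]⟩
  exact this

/-- action of the Galois group -/
noncomputable def act : (L ≃ₐ[RatFunc Fq] L) →* (D.V L ≃ₗ[Fq] D.V L) where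
  toFun g := LinearEquiv.ofLinearMap
    ((g.restrictScalars Fq).toLinearMap.restrict (fun v hv => D.act_mem g v hv))
    ((g.symm.restrictScalars Fq).toLinearMap.restrict (fun v hv => D.act_mem g.symm v hv))
    (LinearMap.ext fun x => Subtype.ext (g.apply_symm_apply x.1))
    (LinearMap.ext fun x => Subtype.ext (g.symm_apply_apply x.1))
  map_one' := by ext x; rfl
  map_mul' g h := by ext x; rfl

@[simp] lemma act_coe (g : L ≃ₐ[RatFunc Fq] L) (v : D.V L) : (D.act g v : L) = g v := rfl

lemma act_inj [D.f.IsSplittingField (RatFunc Fq) L] : Function.Injective (D.act (L := L)) := by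
  intro g h hgh
  have h1 := IsSplittingField.adjoin_rootSet L D.f
  have h2 : (g : L →ₐ[RatFunc Fq] L) = h := by
    apply AlgHom.ext_of_adjoin_eq_top h1
    intro x hx
    rw [← V_eq] at hx
    have := LinearEquiv.congr_fun hgh ⟨x, hx⟩
    exact congrArg Subtype.val this
  ext x; exact AlgHom.congr_fun h2 x
end
end GData
end GalLin

end

section
open Polynomial
namespace GalLin

lemma mem_range_of_pow {E R : Type*} [Field E] [Finite E] [CommRing R] [IsDomain R] (ε : E →+* R) (y : R)
    (hy : y ^ (Nat.card E) = y) : ∃ x, ε x = y := by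
  classical
  let _ := Fintype.ofFinite E
  rw [Nat.card_eq_fintype_card] at hy
  have hne : (X ^ (Fintype.card E) - X : R[X]) ≠ 0 := by
    have h1 : (X ^ (Fintype.card E) - X : E[X]) ≠ 0 :=
      FiniteField.X_pow_card_sub_X_ne_zero E Fintype.one_lt_card
    have h2 := (Polynomial.map_ne_zero_iff (f := ε) ε.injective).2 h1
    simpa using h2
  by_contra! hcon
  have hsub : insert y (Finset.univ.image ε) ⊆ (X ^ (Fintype.card E) - X : R[X]).roots.toFinset := by
    intro z hz
    rw [Multiset.mem_toFinset, mem_roots hne, IsRoot.def, eval_sub, eval_pow, eval_X, sub_eq_zero]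
    rcases Finset.mem_insert.1 hz with rfl | hz
    · exact hy
    · obtain ⟨w, -, rfl⟩ := Finset.mem_image.1 hz
      rw [← map_pow, FiniteField.pow_card]
  have h1 := Finset.card_le_card hsub
  rw [Finset.card_insert_of_notMem, Finset.card_image_of_injective _ ε.injective, Finset.card_univ] at h1
  · have h2 := (Multiset.toFinset_card_le _).trans (card_roots' (X ^ (Fintype.card E) - X : R[X]))
    have h3 : (X ^ (Fintype.card E) - X : R[X]).natDegree ≤ Fintype.card E := by
      refine (natDegree_sub_le _ _).trans ?_
      rw [natDegree_X_pow, natDegree_X]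
      exact max_le le_rfl Fintype.card_pos
    omega
  · intro h
    obtain ⟨w, -, hw⟩ := Finset.mem_image.1 h
    exact hcon w hw

namespace GData
variable {Fq : Type*} [Field Fq] (D : GData Fq)
variable {L : Type*} [Field L] [Algebra (RatFunc Fq) L] [Algebra Fq L] [IsScalarTower Fq (RatFunc Fq) L]

lemma eval_emb {Ω : Type*} [Field Ω] (ψ : L →+* Ω) (i : Fq →+* Ω) (T : Ω) (hT : ψ (tL Fq L) = T)
    (hi : ∀ c, ψ (algebraMap Fq L c) = i c) (x : L) : (D.fT i T).eval (ψ x) = ψ ((D.fL L).eval x) := by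
  have h : i = ψ.comp (algebraMap Fq L) := by ext c; simp [hi]
  rw [h, ← hT, ← fT_map, eval_map, eval₂_hom]

lemma mem_V_emb {Ω : Type*} [Field Ω] (ψ : L →+* Ω) (i : Fq →+* Ω) (T : Ω) (hT : ψ (tL Fq L) = T)
    (hi : ∀ c, ψ (algebraMap Fq L c) = i c) (x : L) : x ∈ D.V L ↔ (D.fT i T).eval (ψ x) = 0 := by
  rw [D.eval_emb ψ i T hT hi, map_eq_zero, mem_V]

lemma exists_psi [Algebra.IsAlgebraic (RatFunc Fq) L] {Ω : Type*} [Field Ω] [IsAlgClosed Ω] (i : Fq →+* Ω) (T : Ω)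
    (hT : ∀ p : Fq[X], p.eval₂ i T = 0 → p = 0) :
    ∃ ψ : L →+* Ω, ψ (tL Fq L) = T ∧ ∀ c, ψ (algebraMap Fq L c) = i c := by
  obtain ⟨j, hj1, hj2⟩ := exists_ratfunc_hom i T hT
  obtain ⟨ψ, hψ⟩ := exists_emb (L := L) j
  exact ⟨ψ, by rw [hψ, hj1], fun c => by
    rw [IsScalarTower.algebraMap_apply Fq (RatFunc Fq) L, hψ, hj2]⟩

lemma exists_gal' [Normal (RatFunc Fq) L] {Ω : Type*} [Field Ω] (ψ : L →+* Ω) (τ : Ω ≃+* Ω)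
    (hT : τ (ψ (tL Fq L)) = ψ (tL Fq L))
    (hC : ∀ c : Fq, τ (ψ (algebraMap Fq L c)) = ψ (algebraMap Fq L c)) :
    ∃ g : L ≃ₐ[RatFunc Fq] L, ∀ x, ψ (g x) = τ (ψ x) := by
  apply exists_gal
  have := ratfunc_hom_ext ((τ : Ω →+* Ω).comp (ψ.comp (algebraMap (RatFunc Fq) L)))
    (ψ.comp (algebraMap (RatFunc Fq) L)) (by simpa using hT) (by
      intro c
      have := hC c
      rw [IsScalarTower.algebraMap_apply Fq (RatFunc Fq) L] at this
      simpa using this)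
  intro c
  exact RingHom.congr_fun this c

section inf
variable {k : Type*} [Field k]

/-- coefficients at infinity -/
noncomputable def cinf (i : Fq →+* k) (m : ℕ) : PowerSeries k :=
  if m = 0 then 1 else PowerSeries.C (i (D.a m)) * PowerSeries.X ^ (D.q^D.n - D.q^m)

/-- polynomial at infinity -/
noncomputable def ginf (i : Fq →+* k) : (PowerSeries k)[X] := linP D.q D.n (D.cinf i)

lemma ginf_monic (i : Fq →+* k) : (D.ginf i).Monic :=
  linP_monic _ _ _ D.hq (by simp [cinf, D.hn.ne', D.han])

lemma ginf_red (i : Fq →+* k) : (D.ginf i).map PowerSeries.constantCoeff = X ^ (D.q^D.n) + X := by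
  rw [ginf, linP_map, linP, Finset.sum_range_succ, Finset.sum_eq_single_of_mem 0]
  · simp [cinf, D.hn.ne', D.han, add_comm]
  · simpa using D.hn
  · intro m hm h0
    have h1 : D.q^m < D.q^D.n := Nat.pow_lt_pow_right D.hq (Finset.mem_range.1 hm)
    have h2 : D.q^D.n - D.q^m ≠ 0 := by omega
    simp [cinf, h0, h2]

lemma ginf_der (i : Fq →+* k) : derivative ((D.ginf i).map PowerSeries.constantCoeff) = 1 := by
  have := D.charP_alg k i
  rw [ginf_red, derivative_add, derivative_X_pow, derivative_X]
  have : ((D.q^D.n : ℕ) : k) = 0 := by push_cast; rw [D.q_zero, zero_pow D.hn.ne']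
  rw [this]; simp

lemma ginf_eval (i : Fq →+* k) (x : Om k) :
    (D.ginf i).eval₂ (phi k) (phi k PowerSeries.X * x) = (phi k PowerSeries.X) ^ (D.q^D.n) *
      (D.fT ((phi k).comp (PowerSeries.C.comp i)) (phi k (PowerSeries.X ^ (D.q^D.n - 1)))⁻¹).eval x := by
  rw [ginf, linP_eval₂, fT, linP_eval, Finset.mul_sum]
  refine Finset.sum_congr rfl fun m hm => ?_
  have hX := phiX (k := k)
  have hpos : 1 ≤ D.q^D.n := Nat.one_le_pow _ _ (by have := D.hq; omega)
  rw [cinf, cT]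
  split_ifs with h
  · subst h
    have h1 : (phi k PowerSeries.X) ^ (D.q^D.n) = (phi k PowerSeries.X) ^ (D.q^D.n - 1) * phi k PowerSeries.X := by
      rw [← pow_succ, Nat.sub_add_cancel hpos]
    rw [h1, map_pow]
    field_simp
    simp
  · have h1 : D.q^m ≤ D.q^D.n := Nat.pow_le_pow_right (by have := D.hq; omega) (by
      have := Finset.mem_range.1 hm; omega)
    have h2 : (phi k PowerSeries.X) ^ (D.q^D.n) = (phi k PowerSeries.X) ^ (D.q^D.n - D.q^m) * (phi k PowerSeries.X) ^ (D.q^m) := by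
      rw [← pow_add, Nat.sub_add_cancel h1]
    rw [h2, map_mul, map_pow, mul_pow]
    simp only [RingHom.comp_apply]
    ring

end inf

theorem Binf (L : Type*) [Field L] [Algebra (RatFunc Fq) L] [Algebra Fq L] [IsScalarTower Fq (RatFunc Fq) L]
    [D.f.IsSplittingField (RatFunc Fq) L]
    (E : Type*) [Field E] [Finite E] [Algebra Fq E] (hE : Nat.card E = D.q^D.n) :
    ∃ e : D.V L ≃ₗ[Fq] E, ∀ c : E, c ≠ 0 → ∃ g : L ≃ₐ[RatFunc Fq] L,
      (∀ v, e (D.act g v) = c * e v) ∧ ∀ y : L, y ^ (D.q^D.n) = y → g y = y := by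
  have := D.normal L
  have := D.finite
  have : Algebra.IsAlgebraic Fq E := Algebra.IsAlgebraic.of_finite Fq E
  have := D.finite_V L
  let k := AlgebraicClosure Fq
  let i : Fq →+* k := algebraMap Fq k
  let ε : E →ₐ[Fq] k := IsAlgClosed.lift
  have hεi : Function.Injective ε := ε.injective
  have := D.charP_alg k i
  set N := D.q^D.n with hN
  have hN1 : 1 < N := Nat.one_lt_pow D.hn.ne' D.hq
  set T : Om k := (phi k (PowerSeries.X ^ (N - 1)))⁻¹ with hTdef
  have hT : ∀ p : Fq[X], p.eval₂ ((phi k).comp (PowerSeries.C.comp i)) T = 0 → p = 0 := by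
    apply trans_inv
    · rw [map_pow]; exact pow_ne_zero _ phiX
    · exact trans_X i _ (by omega)
  obtain ⟨ψ, hψT, hψC⟩ := exists_psi (L := L) _ T hT
  have hz : ∀ v : D.V L, ∃ z : PowerSeries k, phi k z = phi k PowerSeries.X * ψ v ∧ (D.ginf i).eval z = 0 := by
    intro v
    apply ps_split (phi k) phi_inj _ (D.ginf_monic i)
    · rw [Polynomial.separable_def, D.ginf_der]; exact isCoprime_one_right
    · rw [ginf_eval, (D.mem_V_emb ψ _ T hψT hψC _).1 v.2, mul_zero]
  choose z hz1 hz2 using hz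
  have hzadd : ∀ v w, z (v + w) = z v + z w := by
    intro v w; apply phi_inj; rw [map_add, hz1, hz1, hz1, Submodule.coe_add, map_add, mul_add]
  have hzsmul : ∀ (c : Fq) v, z (c • v) = PowerSeries.C (i c) * z v := by
    intro c v; apply phi_inj
    rw [map_mul, hz1, hz1, Submodule.coe_smul, Algebra.smul_def, map_mul, hψC]
    simp only [RingHom.comp_apply]; ring
  have hinj : ∀ v w, PowerSeries.constantCoeff (z v) = PowerSeries.constantCoeff (z w) → v = w := by
    intro v w h
    have h1 := ps_unique (D.ginf i) (z v) (z w) h (by rw [ginf_der]; simp) (hz2 v) (hz2 w)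
    have h2 := hz1 v
    rw [← h1, hz1 w] at h2
    exact Subtype.ext (ψ.injective (mul_left_cancel₀ phiX h2)).symm
  have hpow : ∀ v, (PowerSeries.constantCoeff (z v)) ^ (Nat.card E) = PowerSeries.constantCoeff (z v) := by
    intro v
    have h1 : ((D.ginf i).map PowerSeries.constantCoeff).eval (PowerSeries.constantCoeff (z v)) = 0 := by
      rw [eval_map, eval₂_hom, hz2, map_zero]
    rw [ginf_red, eval_add, eval_pow, eval_X] at h1
    rw [hE]
    have h2 := eq_neg_of_add_eq_zero_left h1
    rw [h2]
    exact CharTwo.neg_eq _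
  choose e he using fun v => mem_range_of_pow (ε : E →+* k) _ (hpow v)
  have he' : ∀ v, ε (e v) = PowerSeries.constantCoeff (z v) := he
  let e1 : D.V L →ₗ[Fq] E :=
    { toFun := e
      map_add' := by intro v w; apply hεi; rw [map_add, he', he', he', hzadd, map_add]
      map_smul' := by
        intro c v; apply hεi
        rw [RingHom.id_apply, Algebra.smul_def, map_mul, ε.commutes, he', he', hzsmul, map_mul,
          PowerSeries.constantCoeff_C] }
  have hbij : Function.Bijective e1 := by
    apply Function.Injective.bijective_of_nat_card_le
    · intro v w h
      apply hinj; rw [← he', ← he']; exact congrArg ε h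
    · rw [hE, D.card_V]
  refine ⟨LinearEquiv.ofBijective e1 hbij, fun c hc => ?_⟩
  have hεc : ε c ≠ 0 := by rwa [Ne, map_eq_zero]
  let ζ : kˣ := (Units.mk0 (ε c) hεc)⁻¹
  have hζ : (ζ : k) ^ (N - 1) = 1 := by
    have : c ^ (N - 1) = 1 := by
      let _ := Fintype.ofFinite E
      rw [← hE, Nat.card_eq_fintype_card]; exact FiniteField.pow_card_sub_one_eq_one c hc
    simp only [ζ, Units.val_inv_eq_inv_val, Units.val_mk0, inv_pow, ← map_pow, this, map_one, inv_one]
  obtain ⟨τ, hτ⟩ := exists_sigma ζ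
  have hτX : τ (phi k PowerSeries.X) = phi k (PowerSeries.C (ζ : k)) * phi k PowerSeries.X := by
    rw [hτ, ← map_mul]; congr 1
    rw [PowerSeries.rescale_X]
  have hτC : ∀ c, τ (phi k (PowerSeries.C c)) = phi k (PowerSeries.C c) := by
    intro c; rw [hτ, rescale_C']
  obtain ⟨g, hg⟩ := exists_gal' ψ τ (by
      rw [hψT, hTdef, map_pow, map_inv₀, map_pow, hτX, mul_pow, ← map_pow, ← map_pow, hζ]; simp)
      (by intro c; rw [hψC]; exact hτC _)
  refine ⟨g, fun v => ?_, fun y hy => ?_⟩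
  · change e (D.act g v) = c * e v
    apply hεi
    rw [map_mul, he', he']
    have h1 : PowerSeries.C (ζ : k) * z (D.act g v) = PowerSeries.rescale (ζ : k) (z v) := by
      apply phi_inj
      rw [← hτ, hz1, map_mul, map_mul, hz1, hτX, act_coe, hg, mul_assoc]
    have h2 := congrArg PowerSeries.constantCoeff h1
    rw [cc_rescale, map_mul, PowerSeries.constantCoeff_C] at h2
    rw [← h2]
    simp only [ζ, Units.val_inv_eq_inv_val, Units.val_mk0]
    rw [mul_inv_cancel_left₀ hεc]
  · apply ψ.injective
    rw [hg]
    obtain ⟨x, hx⟩ := mem_range_of_pow ((phi k).comp (PowerSeries.C.comp (ε : E →+* k))) (ψ y) (by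
      rw [hE, ← map_pow, hy])
    rw [← hx]; exact hτC _
end GData
end GalLin

end

section
open Polynomial
namespace GalLin

/-- The inertia group. -/
def Inert (k : Type*) [Field k] (m : ℕ) : Subgroup ((Om k ≃+* Om k) × kˣ) where
  carrier := {p | (∀ y, p.1 (phi k y) = phi k (PowerSeries.rescale (p.2 : k) y)) ∧ p.2 ^ m = 1}
  one_mem' := ⟨fun y => by simp [PowerSeries.rescale_one], by simp⟩
  mul_mem' {p p'} h h' := ⟨fun y => by
    rw [Prod.fst_mul, RingAut.mul_apply, h'.1, h.1, PowerSeries.rescale_rescale, Prod.snd_mul, Units.val_mul,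
      mul_comm], by rw [Prod.snd_mul, mul_pow, h.2, h'.2, one_mul]⟩
  inv_mem' {p} h := ⟨fun y => by
    have h1 := h.1 (PowerSeries.rescale (↑p.2⁻¹ : k) y)
    rw [PowerSeries.rescale_rescale, Units.inv_mul, PowerSeries.rescale_one, RingHom.id_apply] at h1
    rw [Prod.fst_inv, Prod.snd_inv, ← h1]
    exact p.1.symm_apply_apply _, by rw [Prod.snd_inv, inv_pow, h.2, inv_one]⟩

namespace GData
variable {Fq : Type*} [Field Fq] (D : GData Fq)

/-- The local data attached to the global data. -/
noncomputable def toLoc {k : Type*} [Field k] (i : Fq →+* k) (d : ℕ) (hd : 0 < d) (hdn : d < D.n) (had : D.a d ≠ 0)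
    (hlow : ∀ m, 0 < m → m < d → D.a m = 0) : LocData k where
  q := D.q
  e := D.e
  n := D.n
  d := d
  hqe := D.hqe
  he := D.he
  hd := hd
  hdn := hdn
  a m := i (D.a m)
  han := by rw [D.han, map_one]
  had := by rwa [Ne, map_eq_zero]
  hlow m h h' := by rw [hlow m h h', map_zero]

theorem B0 (L : Type*) [Field L] [Algebra (RatFunc Fq) L] [Algebra Fq L] [IsScalarTower Fq (RatFunc Fq) L]
    [D.f.IsSplittingField (RatFunc Fq) L] (k : Type*) [Field k] [IsAlgClosed k] (i : Fq →+* k)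
    (d : ℕ) (hd : 0 < d) (hdn : d < D.n) (had : D.a d ≠ 0)
    (hlow : ∀ m, 0 < m → m < d → D.a m = 0) :
    ∃ (W : Submodule Fq (D.V L)) (γ : Inert k (D.q^d - 1) →* (L ≃ₐ[RatFunc Fq] L)) (lam : D.V L → k),
      W ≠ ⊥ ∧ W ≠ ⊤ ∧ lam 0 = 0 ∧ (∀ w ∈ W, ∀ w' ∈ W, lam w = lam w' → w = w') ∧
      (∀ g, ∀ w ∈ W, lam (D.act (γ g) w) = (g.1.2 : k) * lam w) ∧
      (∀ g v, D.act (γ g) v - v ∈ W) ∧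
      (∀ w ∈ W, w ≠ 0 → ∀ w' ∈ W, w' ≠ 0 → ∃ g, D.act (γ g) w = w') ∧
      (∀ x ∉ W, ∀ w ∈ W, ∃ g, g.1.2 = 1 ∧ D.act (γ g) x = x + w) := by
  have := D.normal L
  have := D.finite_V L
  have := D.charP_alg k i
  let M := D.toLoc i d hd hdn had hlow
  set m := D.q^d - 1 with hm
  have hqd : 1 < D.q^d := Nat.one_lt_pow hd.ne' D.hq
  have hf0 : M.f0 = D.fT (PowerSeries.C.comp i) (PowerSeries.X ^ m) := rfl
  set T : Om k := phi k (PowerSeries.X ^ m) with hTdef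
  have hT : ∀ p : Fq[X], p.eval₂ ((phi k).comp (PowerSeries.C.comp i)) T = 0 → p = 0 :=
    trans_X i _ (by omega)
  obtain ⟨ψ, hψT, hψC⟩ := exists_psi (L := L) _ T hT
  have hV : ∀ x : L, x ∈ D.V L ↔ M.f0.eval₂ (phi k) (ψ x) = 0 := by
    intro x
    rw [D.mem_V_emb ψ _ T hψT hψC, hf0, ← eval_map, fT_map]
  let W : Submodule Fq (D.V L) :=
    { carrier := {v | ∃ w ∈ M.SW, ψ v = phi k w}
      zero_mem' := ⟨0, M.zero_SW, by simp⟩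
      add_mem' := by
        rintro v v' ⟨w, hw, h⟩ ⟨w', hw', h'⟩
        exact ⟨w + w', M.add_SW _ hw _ hw', by rw [Submodule.coe_add, map_add, map_add, h, h']⟩
      smul_mem' := by
        rintro c v ⟨w, hw, h⟩
        refine ⟨PowerSeries.C (i c) * w, ?_, ?_⟩
        · rw [LocData.mem_SW] at *
          refine ⟨?_, hw.2.mul_left _⟩
          have := D.fT_smul (PowerSeries.C.comp i) (PowerSeries.X ^ m) c w
          rw [← hf0, hw.1, mul_zero] at this
          exact this
        · rw [Submodule.coe_smul, Algebra.smul_def, map_mul, hψC, h, map_mul]; rfl }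
  have hW : ∀ v : D.V L, v ∈ W ↔ ∃ w ∈ M.SW, ψ v = phi k w := fun v => Iff.rfl
  have hψinj : ∀ v v' : D.V L, ψ v = ψ v' → v = v' := fun v v' h => Subtype.ext (ψ.injective h)
  -- cardinality of W
  have hcardW : Nat.card W = D.q^d := by
    have h1 : ∀ w : M.SW, ∃ v : W, ψ v = phi k w := by
      rintro ⟨w, hw⟩
      have hs : (D.fL L).Splits := by rw [← fL_eq]; exact IsSplittingField.splits L D.f
      have hr : ((D.fL L).map ψ).IsRoot (phi k w) := by
        have h2 := ((M.mem_SW w).1 hw).1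
        have h3 : ψ.comp (algebraMap Fq L) = (phi k).comp (PowerSeries.C.comp i) := by
          ext c; exact hψC c
        rw [fT_map, hψT, h3, hTdef, ← fT_map, ← hf0, IsRoot.def, eval_map, eval₂_hom, h2, map_zero]
      obtain ⟨x, hx⟩ := hs.mem_range_of_isRoot (D.fT_monic _ _).ne_zero hr
      have hxV : x ∈ D.V L := by
        rw [hV, hx, eval₂_hom, ((M.mem_SW w).1 hw).1, map_zero]
      exact ⟨⟨⟨x, hxV⟩, w, hw, hx⟩, hx⟩
    choose r hr using h1
    have hb : Function.Bijective r := by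
      constructor
      · intro w w' h
        apply Subtype.ext; apply phi_inj; rw [← hr, ← hr, h]
      · rintro ⟨v, w, hw, h⟩
        refine ⟨⟨w, hw⟩, ?_⟩
        apply Subtype.ext; apply hψinj; rw [hr]; exact h.symm
    rw [← Nat.card_eq_of_bijective r hb, Nat.card_eq_fintype_card, Fintype.card_coe, M.card_SW]
    rfl
  -- rescaling and small roots
  have hresc : ∀ ζ : kˣ, ζ ^ m = 1 → ∀ w ∈ M.SW, PowerSeries.rescale (ζ : k) w ∈ M.SW := by
    intro ζ hζ w hw
    rw [LocData.mem_SW] at *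
    constructor
    · have h1 : M.f0.map (PowerSeries.rescale (ζ : k)) = M.f0 := by
        rw [hf0, fT_map]
        congr 1
        · ext c : 1; simp only [RingHom.comp_apply, rescale_C']
        · rw [map_pow, PowerSeries.rescale_X, mul_pow, ← map_pow, ← Units.val_pow_eq_pow_val, hζ]; simp
      rw [← h1, eval_map, eval₂_hom, hw.1, map_zero]
    · obtain ⟨z, rfl⟩ := hw.2
      rw [map_mul, PowerSeries.rescale_X, mul_assoc]
      exact (dvd_mul_right _ _).mul_left _
  -- the homomorphism
  have hγ : ∀ p : Inert k m, ∃ g : L ≃ₐ[RatFunc Fq] L, ∀ x, ψ (g x) = p.1.1 (ψ x) := by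
    rintro ⟨⟨τ, ζ⟩, h1, h2⟩
    simp only at h1 h2
    apply exists_gal'
    · rw [hψT, hTdef, h1, map_pow, PowerSeries.rescale_X, mul_pow, ← map_pow, ← Units.val_pow_eq_pow_val, h2]; simp
    · intro c; rw [hψC]
      exact (h1 _).trans (congrArg (phi k) (rescale_C' _ _))
  choose γ0 hγ0 using hγ
  let γ : Inert k m →* (L ≃ₐ[RatFunc Fq] L) := MonoidHom.mk' γ0 (by
    intro p p'
    ext x
    apply ψ.injective
    rw [hγ0, AlgEquiv.mul_apply, hγ0, hγ0]; rfl)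
  have hγ : ∀ p (v : D.V L), ψ (D.act (γ p) v : L) = p.1.1 (ψ v) := fun p v => hγ0 p v
  -- the coordinate
  have hz : ∀ v : D.V L, ∃ z : PowerSeries k, v ∈ W → ψ v = phi k (PowerSeries.X * z) ∧ M.fW.eval z = 0 := by
    intro v
    by_cases h : v ∈ W
    · obtain ⟨w, hw, h1⟩ := h
      obtain ⟨z, rfl, hz⟩ := (M.mem_SW' w).1 hw
      exact ⟨z, fun _ => ⟨h1, hz⟩⟩
    · exact ⟨0, fun h' => absurd h' h⟩
  choose z hz using hz
  have hz0 : z 0 = 0 := by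
    have := (hz 0 W.zero_mem).1
    rw [ZeroMemClass.coe_zero, map_zero, eq_comm, map_eq_zero_iff _ phi_inj] at this
    exact (mul_eq_zero.1 this).resolve_left PowerSeries.X_ne_zero
  have hinj : ∀ w ∈ W, ∀ w' ∈ W, PowerSeries.constantCoeff (z w) = PowerSeries.constantCoeff (z w') → w = w' := by
    intro w hw w' hw' h
    have h1 := M.fW_unique _ _ (hz w hw).2 (hz w' hw').2 h
    apply hψinj
    rw [(hz w hw).1, (hz w' hw').1, h1]
  have hact : ∀ p : Inert k m, ∀ w ∈ W, D.act (γ p) w ∈ W := by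
    rintro p v ⟨w, hw, h⟩
    exact ⟨_, hresc p.1.2 p.2.2 w hw, by rw [hγ, h, p.2.1]⟩
  have hlam : ∀ p : Inert k m, ∀ w ∈ W, PowerSeries.constantCoeff (z (D.act (γ p) w)) =
      (p.1.2 : k) * PowerSeries.constantCoeff (z w) := by
    intro p w hw
    have h1 := (hz _ (hact p w hw)).1
    rw [hγ, (hz w hw).1, p.2.1] at h1
    have h2 := phi_inj h1
    rw [map_mul, PowerSeries.rescale_X, mul_comm (PowerSeries.C _), mul_assoc] at h2
    have h3 := mul_left_cancel₀ PowerSeries.X_ne_zero h2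
    rw [← h3, map_mul, cc_rescale, PowerSeries.constantCoeff_C]
  have hne : ∀ w ∈ W, w ≠ 0 → PowerSeries.constantCoeff (z w) ≠ 0 := by
    intro w hw h0 h
    apply h0
    apply hinj w hw 0 W.zero_mem
    rw [h, hz0, map_zero]
  have hcc : ∀ w ∈ W, w ≠ 0 → M.a d * PowerSeries.constantCoeff (z w) ^ m = 1 := by
    intro w hw h0
    have h1 : M.fb.eval (PowerSeries.constantCoeff (z w)) = 0 := by
      rw [LocData.fb, eval_map, eval₂_hom, (hz w hw).2, map_zero]
    rw [LocData.fb_eval] at h1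
    change _ + M.a d * _ ^ (D.q^d) = 0 at h1
    rw [show D.q^d = m + 1 by omega, pow_succ] at h1
    have h2 : PowerSeries.constantCoeff (z w) * (1 + M.a d * PowerSeries.constantCoeff (z w) ^ m) = 0 := by
      rw [← h1]; ring
    have h3 := (mul_eq_zero.1 h2).resolve_left (hne w hw h0)
    have h4 := eq_neg_of_add_eq_zero_right h3
    rw [h4]; exact CharTwo.neg_eq _
  refine ⟨W, γ, fun v => PowerSeries.constantCoeff (z v), ?_, ?_, ?_, hinj, hlam, ?_, ?_, ?_⟩
  · rintro h
    rw [h] at hcardW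
    simp at hcardW
    omega
  · rintro h
    rw [h, Nat.card_congr (Submodule.topEquiv (R := Fq) (M := D.V L)).toEquiv, D.card_V] at hcardW
    exact hdn.ne' (Nat.pow_right_injective D.hq hcardW)
  · simp only [hz0, map_zero]
  · intro p v
    obtain ⟨w, hw, h⟩ := M.inertia_sub (phi k) phi_inj (ψ v) ((hV v).1 v.2) (PowerSeries.rescale (p.1.2 : k))
      (rescaleEquiv p.1.2).injective (cc_rescale _) (hresc p.1.2 p.2.2) (p.1.1 : Om k →+* Om k) p.2.1
      (by have := (hV _).1 (D.act (γ p) v).2; rw [hγ] at this; exact this)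
    refine ⟨w, hw, ?_⟩
    rw [← h, Submodule.coe_sub, map_sub, hγ]; rfl
  · intro w hw hw0 w' hw' hw0'
    have h1 := hne w hw hw0
    have h2 := hne w' hw' hw0'
    let ζ : kˣ := Units.mk0 _ h2 / Units.mk0 _ h1
    have hζ : ζ ^ m = 1 := by
      have hA : M.a d ≠ 0 := fun h => by
        have := hcc w hw hw0
        rw [h, zero_mul] at this; exact zero_ne_one this
      have := mul_left_cancel₀ hA ((hcc w hw hw0).trans (hcc w' hw' hw0').symm)
      ext
      simp only [ζ, Units.val_pow_eq_pow_val, Units.val_div_eq_div_val, Units.val_mk0, div_pow, ← this, Units.val_one]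
      exact div_self (pow_ne_zero _ h1)
    obtain ⟨τ, hτ⟩ := exists_sigma ζ
    let p : Inert k m := ⟨(τ, ζ), hτ, hζ⟩
    refine ⟨p, ?_⟩
    apply hinj _ (hact p w hw) _ hw'
    rw [hlam p w hw]
    simp only [p, ζ, Units.val_div_eq_div_val, Units.val_mk0]
    exact div_mul_cancel₀ _ h1
  · intro x hx w hw
    obtain ⟨w0, hw0, h⟩ := hw
    obtain ⟨τ, hτ⟩ := M.exists_trans (K1 := FractionRing (PowerSeries k)) (Ω := Om k) (ψ x) ((hV x).1 x.2)
      (fun w hw h => hx ⟨w, hw, h⟩) w0 hw0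
    let p : Inert k m := ⟨((τ : Om k ≃+* Om k), 1), fun y => by
      simp only [Units.val_one, PowerSeries.rescale_one, RingHom.id_apply]
      exact τ.commutes _, one_pow _⟩
    refine ⟨p, rfl, ?_⟩
    apply hψinj
    rw [hγ, Submodule.coe_add, map_add, h]
    exact hτ
end GData
end GalLin

end

section
open Polynomial
namespace GalLin
namespace GData
variable {Fq : Type*} [Field Fq] (D : GData Fq)

lemma finrank_E (E : Type*) [Field E] [Finite E] [Algebra Fq E] (hE : Nat.card E = D.q^D.n) :
    Module.finrank Fq E = D.n := by
  have := D.finite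
  have h := Module.natCard_eq_pow_finrank (K := Fq) (V := E)
  rw [hE, D.hcard] at h
  exact (Nat.pow_right_injective D.hq h).symm

theorem gl_case (L : Type*) [Field L] [Algebra (RatFunc Fq) L] [Algebra Fq L] [IsScalarTower Fq (RatFunc Fq) L]
    [D.f.IsSplittingField (RatFunc Fq) L]
    (E : Type*) [Field E] [Finite E] [Algebra Fq E] (hE : Nat.card E = D.q^D.n)
    (hn : D.n.Prime) (hodd : Odd D.n) (ha : ∃ m, 0 < m ∧ m < D.n ∧ D.a m ≠ 0) :
    Nonempty ((L ≃ₐ[RatFunc Fq] L) ≃* Matrix.GeneralLinearGroup (Fin D.n) Fq) := by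
  classical
  have := D.finite
  have hfr := D.finrank_E E hE
  obtain ⟨e, he⟩ := D.Binf L E hE
  have hex : ∃ m, 0 < m ∧ D.a m ≠ 0 := by obtain ⟨m, h1, -, h2⟩ := ha; exact ⟨m, h1, h2⟩
  obtain ⟨hd, had⟩ := Nat.find_spec hex
  have hmin : ∀ m, 0 < m → m < Nat.find hex → D.a m = 0 := by
    intro m h1 h2
    have := Nat.find_min hex h2
    by_contra h3; exact this ⟨h1, h3⟩
  have hdn : Nat.find hex < D.n := by
    obtain ⟨m, h1, h2, h3⟩ := ha
    exact (Nat.find_min' hex ⟨h1, h3⟩).trans_lt h2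
  generalize Nat.find hex = d at hd had hmin hdn
  obtain ⟨W, γ, lam, hW0, hW1, lam0, laminj, hlam, h1, h3, h4⟩ :=
    D.B0 L (AlgebraicClosure Fq) (algebraMap _ _) d hd hdn had hmin
  let con : (D.V L ≃ₗ[Fq] D.V L) →* (E ≃ₗ[Fq] E) :=
    { toFun := fun g => e.symm.trans (g.trans e)
      map_one' := by ext x; simp
      map_mul' := by intro g h; ext x; simp }
  have hcon : ∀ g x, con g x = e (g (e.symm x)) := fun g x => rfl
  have hconinj : Function.Injective con := by
    intro g h hgh
    ext1 v
    have := LinearEquiv.congr_fun hgh (e v)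
    rw [hcon, hcon, e.symm_apply_apply] at this
    exact e.injective this
  let ρ : (L ≃ₐ[RatFunc Fq] L) →* (E ≃ₗ[Fq] E) := con.comp D.act
  have hρ : ∀ g x, ρ g x = e (D.act g (e.symm x)) := fun g x => rfl
  have hρinj : Function.Injective ρ := hconinj.comp D.act_inj
  have hmem : ∀ x, x ∈ W.map e.toLinearMap ↔ e.symm x ∈ W := by
    intro x
    rw [Submodule.mem_map_equiv]
  have key : ρ.range = ⊤ := by
    refine theoremA (by rwa [hfr]) (by rwa [hfr]) ρ.range ?_ (W.map e.toLinearMap) ?_ ?_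
      (ρ.comp γ) (fun g => ⟨γ g, rfl⟩) ((MonoidHom.snd _ _).comp (Inert (AlgebraicClosure Fq) _).subtype)
      (fun x => lam (e.symm x)) ?_ ?_ ?_ ?_ ?_ ?_
    · intro c hc
      obtain ⟨g, hg, -⟩ := he c hc
      refine ⟨ρ g, ⟨g, rfl⟩, fun v => ?_⟩
      rw [hρ, hg, e.apply_symm_apply]
    · intro h
      apply hW0
      rw [eq_bot_iff]
      intro w hw
      have : e w ∈ W.map e.toLinearMap := Submodule.mem_map_of_mem hw
      rw [h, Submodule.mem_bot] at this
      simpa using this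
    · intro h
      apply hW1
      rw [eq_top_iff]
      intro w _
      have : e w ∈ W.map e.toLinearMap := by rw [h]; trivial
      rw [hmem, e.symm_apply_apply] at this
      exact this
    · simpa using lam0
    · intro w hw w' hw' h
      exact e.symm.injective (laminj _ ((hmem _).1 hw) _ ((hmem _).1 hw') h)
    · intro g w hw
      have := hlam g _ ((hmem _).1 hw)
      rw [MonoidHom.comp_apply, hρ, e.symm_apply_apply, this]; rfl
    · intro g v
      have := h1 g (e.symm v)
      rw [hmem, MonoidHom.comp_apply, hρ, map_sub, e.symm_apply_apply]; exact this
    · intro w hw hw0 w' hw' hw0'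
      obtain ⟨g, hg⟩ := h3 _ ((hmem _).1 hw) (by simpa using hw0) _ ((hmem _).1 hw') (by simpa using hw0')
      exact ⟨g, by rw [MonoidHom.comp_apply, hρ, hg, e.apply_symm_apply]⟩
    · intro x hx w hw
      obtain ⟨g, hg1, hg⟩ := h4 _ (fun h => hx ((hmem _).2 h)) _ ((hmem _).1 hw)
      exact ⟨g, hg1, by rw [MonoidHom.comp_apply, hρ, hg, map_add, e.apply_symm_apply, e.apply_symm_apply]⟩
  let b : Module.Basis (Fin D.n) Fq E := Module.finBasisOfFinrankEq Fq E hfr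
  have hb : Function.Bijective ρ := ⟨hρinj, MonoidHom.range_eq_top.1 key⟩
  exact ⟨(MulEquiv.ofBijective ρ hb).trans
    ((LinearMap.GeneralLinearGroup.generalLinearEquiv Fq E).symm.trans
      (Matrix.GeneralLinearGroup.toLin' b).symm)⟩
end GData
end GalLin

end

section
open Polynomial
namespace GalLin

lemma ratfunc_const {F : Type*} [Field F] (N : ℕ) (hN : 1 < N) (z : RatFunc F) (hz : z ^ N = z) :
    ∃ c, algebraMap F (RatFunc F) c = z := by
  have hi : IsIntegral F[X] z := by
    refine ⟨X ^ N - X, ?_, ?_⟩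
    · apply monic_X_pow_sub
      rw [degree_X]; exact_mod_cast hN
    · simp [hz]
  obtain ⟨p, hp⟩ := IsIntegrallyClosed.algebraMap_eq_of_integral hi
  have hp2 : p ^ N = p := by
    apply IsFractionRing.injective F[X] (RatFunc F)
    rw [map_pow, hp, hz]
  have hdeg := congrArg natDegree hp2
  rw [natDegree_pow] at hdeg
  have h0 : p.natDegree = 0 := by
    by_contra h
    have : 1 * p.natDegree < N * p.natDegree := Nat.mul_lt_mul_of_pos_right hN (by omega)
    omega
  obtain ⟨c, hc⟩ := natDegree_eq_zero.1 h0
  refine ⟨c, ?_⟩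
  rw [IsScalarTower.algebraMap_apply F F[X] (RatFunc F), ← hp, ← hc]; rfl

namespace GData
variable {Fq : Type*} [Field Fq] (D : GData Fq)

theorem gamma_case (L : Type*) [Field L] [Algebra (RatFunc Fq) L] [Algebra Fq L] [IsScalarTower Fq (RatFunc Fq) L]
    [D.f.IsSplittingField (RatFunc Fq) L]
    (E : Type*) [Field E] [Finite E] [Algebra Fq E] (hE : Nat.card E = D.q^D.n)
    (ha : ∀ m, 0 < m → m < D.n → D.a m = 0) :
    Nonempty ((L ≃ₐ[RatFunc Fq] L) ≃* (Eˣ ⋊[galOnUnits Fq E] (E ≃ₐ[Fq] E))) := by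
  have := D.finite
  have := D.finite_V L
  have hfr := D.finrank_E E hE
  have hch := D.charP_alg L (algebraMap Fq L)
  have hp2 : Fact (Nat.Prime 2) := ⟨Nat.prime_two⟩
  obtain ⟨e, he⟩ := D.Binf L E hE
  set N := D.q^D.n with hN
  have hN1 : 1 < N := Nat.one_lt_pow D.hn.ne' D.hq
  have hN2 : N = 2 ^ (D.e * D.n) := by rw [hN, D.hqe, pow_mul]
  have ht := tL_ne Fq L
  -- roots
  have hV : ∀ x : L, x ∈ D.V L ↔ x ^ N = tL Fq L * x := by
    intro x
    rw [mem_V, fL, fT, linP_eval, Finset.sum_range_succ, Finset.sum_eq_single_of_mem 0 (by simpa using D.hn), D.cT_n]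
    · simp only [cT, if_true, pow_zero, pow_one, one_mul]
      rw [CharTwo.add_eq_zero, eq_comm]
    · intro m hm h0
      rw [cT, if_neg h0, ha m (by omega) (Finset.mem_range.1 hm), map_zero, zero_mul]
  obtain ⟨y, hyV, hy0⟩ : ∃ y ∈ D.V L, y ≠ 0 := by
    obtain ⟨v, hv⟩ := e.surjective 1
    refine ⟨v, v.2, fun h => ?_⟩
    rw [show v = 0 from Subtype.ext h, map_zero] at hv
    exact zero_ne_one hv
  have hyN := (hV y).1 hyV
  have hmulV : ∀ r : L, r ^ N = r ↔ r * y ∈ D.V L := by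
    intro r
    rw [hV, mul_pow, hyN, mul_left_comm, mul_right_inj' ht]
    constructor
    · intro h; rw [h]
    · intro h; exact mul_right_cancel₀ hy0 h
  -- the constant field
  let S : IntermediateField Fq L :=
    { carrier := {r | r ^ N = r}
      mul_mem' := by intro a b h h'; simp only [Set.mem_ofPred_eq] at *; rw [mul_pow, h, h']
      add_mem' := by
        intro a b h h'; simp only [Set.mem_ofPred_eq] at *
        rw [hN2, add_pow_char_pow, ← hN2, h, h']
      algebraMap_mem' := by intro c; simp only [Set.mem_ofPred_eq]; rw [← map_pow, D.pow_q]
      inv_mem' := by intro a h; simp only [Set.mem_ofPred_eq] at *; rw [inv_pow, h] }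
  have hS : ∀ r, r ∈ S ↔ r ^ N = r := fun r => Iff.rfl
  have hScard : Nat.card S = N := by
    rw [hN, ← D.card_V L]
    refine Nat.card_eq_of_bijective (fun r : S => (⟨r.1 * y, (hmulV _).1 r.2⟩ : D.V L)) ⟨?_, ?_⟩
    · intro r r' h
      exact Subtype.ext (mul_right_cancel₀ hy0 (congrArg Subtype.val h))
    · rintro ⟨v, hv⟩
      have h1 : v / y * y = v := div_mul_cancel₀ _ hy0
      exact ⟨⟨v / y, (hmulV _).2 (by rwa [h1])⟩, Subtype.ext h1⟩
  have : Finite S := Nat.finite_of_card_ne_zero (by rw [hScard]; omega)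
  obtain ⟨ι0⟩ : Nonempty (E →ₐ[Fq] S) := FiniteField.nonempty_algHom_of_finrank_dvd (by
    rw [hfr, D.finrank_E S hScard])
  let ι : E →ₐ[Fq] L := S.val.comp ι0
  have hιinj : Function.Injective ι := ι.toRingHom.injective
  have hιN : ∀ x, (ι x) ^ N = ι x := fun x => (ι0 x).2
  have hιr : ∀ r : L, r ^ N = r → ∃ x, ι x = r := by
    intro r hr
    exact mem_range_of_pow (ι : E →+* L) r (by rw [hE, hr])
  -- action on E
  have hσ : ∀ (g : L ≃ₐ[RatFunc Fq] L) (x : E), ∃ x', ι x' = g (ι x) := by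
    intro g x; apply hιr; rw [← map_pow, hιN]
  choose s hs using hσ
  have hsmul : ∀ g h x, s (g * h) x = s g (s h x) := by
    intro g h x; apply hιinj; rw [hs, hs, hs]; rfl
  have hsone : ∀ x, s 1 x = x := by
    intro x; apply hιinj; rw [hs]; rfl
  let σ : (L ≃ₐ[RatFunc Fq] L) →* (E ≃ₐ[Fq] E) :=
    { toFun := fun g => AlgEquiv.ofAlgHom
        { toFun := s g
          map_one' := by apply hιinj; rw [hs, map_one, map_one]
          map_mul' := by intro a b; apply hιinj; simp only [hs, map_mul]
          map_zero' := by apply hιinj; rw [hs, map_zero, map_zero]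
          map_add' := by intro a b; apply hιinj; simp only [hs, map_add]
          commutes' := by
            intro c; apply hιinj
            rw [hs, ι.commutes, IsScalarTower.algebraMap_apply Fq (RatFunc Fq) L, g.commutes] }
        { toFun := s g⁻¹
          map_one' := by apply hιinj; rw [hs, map_one, map_one]
          map_mul' := by intro a b; apply hιinj; simp only [hs, map_mul]
          map_zero' := by apply hιinj; rw [hs, map_zero, map_zero]
          map_add' := by intro a b; apply hιinj; simp only [hs, map_add]
          commutes' := by
            intro c; apply hιinj
            rw [hs, ι.commutes, IsScalarTower.algebraMap_apply Fq (RatFunc Fq) L, AlgEquiv.commutes] }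
        (by ext x; change s g (s g⁻¹ x) = x; rw [← hsmul, mul_inv_cancel, hsone])
        (by ext x; change s g⁻¹ (s g x) = x; rw [← hsmul, inv_mul_cancel, hsone])
      map_one' := by ext x; exact hsone x
      map_mul' := by intro g h; ext x; exact hsmul g h x }
  have hσ : ∀ g x, ι (σ g x) = g (ι x) := hs
  -- the multiplier
  have hu : ∀ g : L ≃ₐ[RatFunc Fq] L, ∃ u : Eˣ, ι u * y = g y := by
    intro g
    have hgy0 : g y ≠ 0 := by rwa [Ne, map_eq_zero]
    have h1 : g y / y * y = g y := div_mul_cancel₀ _ hy0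
    obtain ⟨x, hx⟩ := hιr (g y / y) ((hmulV _).2 (by rw [h1]; exact D.act_mem g y hyV))
    have hx0 : x ≠ 0 := by
      rintro rfl
      rw [map_zero, eq_comm, div_eq_zero_iff] at hx
      exact hx.elim hgy0 hy0
    exact ⟨Units.mk0 x hx0, by rw [Units.val_mk0, hx, h1]⟩
  choose u hu using hu
  have huniq : ∀ a b : Eˣ, ι a * y = ι b * y → a = b := fun a b h =>
    Units.ext (hιinj (mul_right_cancel₀ hy0 h))
  have humul : ∀ g h, u (g * h) = u g * galOnUnits Fq E (σ g) (u h) := by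
    intro g h
    apply huniq
    rw [hu, AlgEquiv.mul_apply, ← hu h, map_mul, ← hu g, Units.val_mul, map_mul, ← hσ]
    change ι (σ g (u h)) * (ι (u g) * y) = ι (u g) * ι (σ g (u h)) * y
    ring
  have huone : u 1 = 1 := by
    apply huniq; rw [hu]; simp
  let Φ : (L ≃ₐ[RatFunc Fq] L) →* (Eˣ ⋊[galOnUnits Fq E] (E ≃ₐ[Fq] E)) :=
    MonoidHom.mk' (fun g => ⟨u g, σ g⟩) (by
      intro g h
      ext1
      · rw [SemidirectProduct.mul_left]; exact humul g h
      · rw [SemidirectProduct.mul_right]; exact map_mul σ g h)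
  have hΦ : ∀ g, Φ g = ⟨u g, σ g⟩ := fun g => rfl
  have hfix : ∀ g h : L ≃ₐ[RatFunc Fq] L, u g = u h → σ g = σ h → g = h := by
    intro g h h1 h2
    apply D.act_inj
    ext1 v
    apply Subtype.ext
    rw [act_coe, act_coe]
    have h3 : (v : L) / y * y = v := div_mul_cancel₀ _ hy0
    obtain ⟨x, hx⟩ := hιr (v / y) ((hmulV _).2 (by rw [h3]; exact v.2))
    rw [← h3, ← hx, map_mul, map_mul, ← hσ, ← hσ, ← hu, ← hu, h1, h2]
  -- surjectivity of σ
  have hσsurj : Function.Surjective σ := by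
    have hgal : IsGalois (RatFunc Fq) L :=
      IsGalois.of_separable_splitting_field (D.fT_sep _ _ RatFunc.X_ne_zero : D.f.Separable)
    have hfd : FiniteDimensional (RatFunc Fq) L := IsSplittingField.finiteDimensional L D.f
    rw [← MonoidHom.range_eq_top]
    rw [← IntermediateField.fixingSubgroup_fixedField σ.range]
    have hbot : IntermediateField.fixedField σ.range = ⊥ := by
      rw [eq_bot_iff]
      intro x hx
      rw [IntermediateField.mem_fixedField_iff] at hx
      have h1 : ∀ g : L ≃ₐ[RatFunc Fq] L, g (ι x) = ι x := by
        intro g; rw [← hσ, hx (σ g) ⟨g, rfl⟩]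
      obtain ⟨z, hz⟩ := (IsGalois.mem_range_algebraMap_iff_fixed (ι x)).2 h1
      obtain ⟨c, hc⟩ := ratfunc_const N hN1 z (by
        apply (algebraMap (RatFunc Fq) L).injective
        rw [map_pow, hz, hιN])
      rw [IntermediateField.mem_bot]
      refine ⟨c, hιinj ?_⟩
      rw [ι.commutes, ← hz, ← hc, IsScalarTower.algebraMap_apply Fq (RatFunc Fq) L]
    rw [hbot, IntermediateField.fixingSubgroup_bot]
  -- the Singer elements
  have hsinger : ∀ w : Eˣ, ∃ g, u g = w ∧ σ g = 1 := by
    choose gc hgc1 hgc2 using fun c : Eˣ => he c c.ne_zero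
    have hinj : Function.Injective (fun c => u (gc c)) := by
      intro c c' h
      simp only at h
      have h1 : D.act (gc c) ⟨y, hyV⟩ = D.act (gc c') ⟨y, hyV⟩ := by
        apply Subtype.ext
        rw [act_coe, act_coe]
        change gc c y = gc c' y
        rw [← hu, ← hu, h]
      have h2 := congrArg e h1
      rw [hgc1, hgc1] at h2
      have h3 : e ⟨y, hyV⟩ ≠ 0 := by
        rw [Ne, map_eq_zero_iff _ e.injective]
        intro h; exact hy0 (congrArg Subtype.val h)
      exact Units.ext (mul_right_cancel₀ h3 h2)
    have hsurj := Finite.surjective_of_injective hinj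
    intro w
    obtain ⟨c, hc⟩ := hsurj w
    refine ⟨gc c, hc, ?_⟩
    ext x
    apply hιinj
    rw [hσ, hgc2 c _ (hιN x)]; rfl
  refine ⟨MulEquiv.ofBijective Φ ⟨?_, ?_⟩⟩
  · intro g h hgh
    rw [hΦ, hΦ] at hgh
    exact hfix g h (congrArg SemidirectProduct.left hgh) (congrArg SemidirectProduct.right hgh)
  · rintro ⟨w, τ⟩
    obtain ⟨g, hg⟩ := hσsurj τ
    obtain ⟨h, hh1, hh2⟩ := hsinger (w * (u g)⁻¹)
    refine ⟨h * g, ?_⟩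
    rw [hΦ, map_mul, hh2, one_mul, hg, humul, hh1, hh2, map_one]
    simp
end GData
end GalLin

end

namespace GalLin
lemma poly_eq {Fq : Type*} [Field Fq] (D : GData Fq) (L : Polynomial Fq)
    (hL : L = ∑ i ∈ Finset.Icc 1 D.n, Polynomial.C (D.a i) * Polynomial.X ^ D.q ^ i) :
    L.map (algebraMap Fq (RatFunc Fq)) + Polynomial.C (RatFunc.X : RatFunc Fq) * Polynomial.X = D.f := by
  rw [hL, GData.f, GData.fT, linP, Finset.sum_range_succ', Polynomial.map_sum]
  congr 1
  · rw [Finset.sum_bij' (fun i _ => i - 1) (fun i _ => i + 1)]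
    · intro i hi; simp only [Finset.mem_Icc, Finset.mem_range] at *; omega
    · intro i hi; simp only [Finset.mem_Icc, Finset.mem_range] at *; omega
    · intro i hi; simp only [Finset.mem_Icc] at *; omega
    · intro i hi; simp
    · intro i hi
      simp only [Finset.mem_Icc] at hi
      rw [Nat.sub_add_cancel hi.1, GData.cT, if_neg (by omega)]
      simp
  · simp [GData.cT]

lemma poly_coeff {Fq : Type*} [Field Fq] (D : GData Fq) (L : Polynomial Fq)
    (hL : L = ∑ i ∈ Finset.Icc 1 D.n, Polynomial.C (D.a i) * Polynomial.X ^ D.q ^ i)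
    (m : ℕ) (h0 : 0 < m) (hm : m ≤ D.n) : L.coeff (D.q ^ m) = D.a m := by
  rw [hL, Polynomial.finsetSum_coeff, Finset.sum_eq_single_of_mem m (by simp; omega)]
  · simp
  · intro j _ hj
    rw [Polynomial.coeff_C_mul, Polynomial.coeff_X_pow, if_neg, mul_zero]
    intro h; exact hj (Nat.pow_right_injective D.hq h).symm
end GalLin

/-- Let `q` be a power of `2` and `n` an odd prime. Let
`L(x) = a₁x^q + a₂x^(q²) + ⋯ + a_{n−1}x^(q^{n−1}) + x^(qⁿ) ∈ F_q[x]` be a monic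
`q`-linearized polynomial of `q`-degree `n`, and suppose `a₁ + ⋯ + a_{n−1} + 1 ≠ 0`.
Then the Galois group of `L(x) + t·x` over `F_q(t)` is isomorphic to `GL(n, q)`, unless
`L(x) = x^(qⁿ)`, in which case it is isomorphic to `ΓL(1, qⁿ)`. -/
theorem galoisGroup_linearized_add_tX_char_two
    (q n : ℕ) (Fq : Type) [Field Fq] [Fintype Fq] (hq : Fintype.card Fq = q)
    (h2 : ∃ e : ℕ, 0 < e ∧ q = 2 ^ e)
    (hn : n.Prime) (hnodd : Odd n)
    (a : ℕ → Fq) (L : Polynomial Fq)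
    (hL : L = ∑ i ∈ Finset.Icc 1 n, Polynomial.C (a i) * Polynomial.X ^ q ^ i)
    (hmonic : a n = 1)
    (hsum : (∑ i ∈ Finset.Icc 1 (n - 1), a i) + 1 ≠ 0)
    (E : Type) [Field E] [Fintype E] [Algebra Fq E] (hE : Fintype.card E = q ^ n) :
    (L ≠ Polynomial.X ^ q ^ n →
      Nonempty
        ((L.map (algebraMap Fq (RatFunc Fq)) +
            Polynomial.C (RatFunc.X : RatFunc Fq) * Polynomial.X).Gal ≃*
          Matrix.GeneralLinearGroup (Fin n) Fq)) ∧
    (L = Polynomial.X ^ q ^ n →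
      Nonempty
        ((L.map (algebraMap Fq (RatFunc Fq)) +
            Polynomial.C (RatFunc.X : RatFunc Fq) * Polynomial.X).Gal ≃*
          (Eˣ ⋊[galOnUnits Fq E] (E ≃ₐ[Fq] E)))) := by
  obtain ⟨e, he, hqe⟩ := h2
  let D : GalLin.GData Fq :=
    { q := q, e := e, n := n, hcard := by rw [Nat.card_eq_fintype_card, hq], hqe := hqe, he := he,
      hn := hn.pos, a := a, han := hmonic }
  have hE' : Nat.card E = D.q ^ D.n := by rw [Nat.card_eq_fintype_card, hE]
  rw [GalLin.poly_eq D L hL]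
  constructor
  · intro hne
    refine D.gl_case D.f.SplittingField E hE' hn hnodd ?_
    by_contra! hcon
    apply hne
    rw [hL, Finset.sum_eq_single_of_mem n (Finset.mem_Icc.2 ⟨hn.pos, le_rfl⟩), hmonic]
    · simp
    · intro m hm hmn
      rw [Finset.mem_Icc] at hm
      have : a m = 0 := hcon m hm.1 (lt_of_le_of_ne hm.2 hmn)
      rw [this]; simp
  · intro heq
    refine D.gamma_case D.f.SplittingField E hE' ?_
    intro m h0 hm
    have h1 := GalLin.poly_coeff D L hL m h0 hm.le
    rw [← h1, heq, Polynomial.coeff_X_pow, if_neg]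
    intro h; exact hm.ne (Nat.pow_right_injective D.hq h)
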